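/- arXiv:1901.09349 — 4 statements merged into one kernel-verified Lean document; each statement's English description precedes it below -/
import Mathlib

section
/- There is a universal constant c* > 0 such that the following holds. For every real 0 < α < 1, every integer d ≥ 1, and every n-vertex α-expander G (with n ≥ 2) whose maximum vertex degree is at most d, every graph H whose size is at most (n / (c* · log₂ n)) · (α/d)^{c*} is a minor of G. -/
/-- Number of ordered pairs `(a,b)` with `a ∈ A`, `b ∈ B`, `a` adjacent to `b` in `G`.
For a partition `(A, Aᶜ)` this is exactly the number of edges crossing the cut. -/
noncomputable def cutCard {V : Type*} (G : SimpleGraph V) (A B : Set V) : ℕ :=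
  Nat.card {p : V × V // p.1 ∈ A ∧ p.2 ∈ B ∧ G.Adj p.1 p.2}

/-- `G` is an `α`-expander: every cut `(A, Aᶜ)` into two non-empty parts has at least
`α · min(|A|,|Aᶜ|)` crossing edges. -/
def IsExpander {V : Type*} (G : SimpleGraph V) (α : ℝ) : Prop :=
  ∀ A : Set V, A.Nonempty → Aᶜ.Nonempty →
    α * (min (Nat.card ↥A) (Nat.card ↥(Aᶜ)) : ℝ) ≤ (cutCard G A Aᶜ : ℝ)

/-- Maximum vertex degree of `G` is at most `d`. -/
def DegLE {V : Type*} (G : SimpleGraph V) (d : ℕ) : Prop :=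
  ∀ v : V, Nat.card ↥{w : V | G.Adj v w} ≤ d

/-- `H` is a minor of `G`: there are pairwise-disjoint branch sets, each inducing a
connected subgraph of `G`, with an edge of `G` between the branch sets of every
pair of adjacent vertices of `H`. -/
def IsMinor {W V : Type*} (H : SimpleGraph W) (G : SimpleGraph V) : Prop :=
  ∃ φ : W → Set V,
    (∀ u, (G.induce (φ u)).Connected) ∧
    (∀ u v, u ≠ v → Disjoint (φ u) (φ v)) ∧
    (∀ u v, H.Adj u v → ∃ a ∈ φ u, ∃ b ∈ φ v, G.Adj a b)

/-- The size of a graph: number of vertices plus number of edges. -/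
noncomputable def gsize {V : Type*} (G : SimpleGraph V) : ℕ := Nat.card V + Nat.card G.edgeSet

section Helpers

open Classical in
/-- number of adjacent pairs between two finsets -/
noncomputable def ecount {V : Type*} (G : SimpleGraph V) (s t : Finset V) : ℕ :=
  ((s ×ˢ t).filter fun p => G.Adj p.1 p.2).card

open Classical in
theorem ecount_mono {V : Type*} (G : SimpleGraph V) {s s' t t' : Finset V}
    (hs : s ⊆ s') (ht : t ⊆ t') : ecount G s t ≤ ecount G s' t' :=
  Finset.card_le_card (Finset.filter_subset_filter _ (Finset.product_subset_product hs ht))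

open Classical in
theorem ecount_union_left {V : Type*} (G : SimpleGraph V) (s s' t : Finset V) :
    ecount G (s ∪ s') t ≤ ecount G s t + ecount G s' t := by
  unfold ecount
  rw [Finset.union_product, Finset.filter_union]
  exact Finset.card_union_le _ _

open Classical in
theorem ecount_union_right {V : Type*} (G : SimpleGraph V) (s t t' : Finset V) :
    ecount G s (t ∪ t') ≤ ecount G s t + ecount G s t' := by
  unfold ecount
  rw [Finset.product_union, Finset.filter_union]
  exact Finset.card_union_le _ _

open Classical in
theorem ecount_le {V : Type*} [Fintype V] (G : SimpleGraph V) (d : ℕ)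
    (hdeg : ∀ v, (Finset.univ.filter (G.Adj v)).card ≤ d) (s t : Finset V) :
    ecount G s t ≤ d * t.card := by
  unfold ecount
  refine Finset.card_le_mul_card_image_of_maps_to (f := Prod.snd) ?_ d ?_
  · intro p hp
    simp only [Finset.mem_filter, Finset.mem_product] at hp
    exact hp.1.2
  · intro b _
    refine le_trans ?_ (hdeg b)
    refine Finset.card_le_card_of_injOn Prod.fst ?_ ?_
    · intro p hp
      simp only [Finset.coe_filter, Finset.mem_filter, Finset.mem_product, Set.mem_ofPred_eq] at hp
      simp only [Finset.coe_filter, Finset.mem_univ, true_and, Set.mem_ofPred_eq]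
      rw [← hp.2]; exact hp.1.2.symm
    · intro p hp q hq h
      simp only [Finset.coe_filter, Set.mem_ofPred_eq] at hp hq
      exact Prod.ext h (hp.2.trans hq.2.symm)

theorem conn_single {V : Type*} (G : SimpleGraph V) (v : V) :
    (G.induce ({v} : Set V)).Connected := by
  haveI : Nonempty (({v} : Set V) : Type _) := ⟨⟨v, rfl⟩⟩
  refine ⟨?_⟩
  rintro ⟨a, ha⟩ ⟨b, hb⟩
  have : a = b := (Set.mem_singleton_iff.1 ha).trans (Set.mem_singleton_iff.1 hb).symm
  subst this
  exact SimpleGraph.Reachable.refl _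

theorem conn_union {V : Type*} (G : SimpleGraph V) {s t : Set V}
    (hs : (G.induce s).Connected) (ht : (G.induce t).Connected) (hst : (s ∩ t).Nonempty) :
    (G.induce (s ∪ t)).Connected :=
  SimpleGraph.induce_union_connected hs.preconnected ht.preconnected hst

open Classical in
/-- balls inside `C` -/
noncomputable def gball {V : Type*} (G : SimpleGraph V) (C : Finset V) (x : V) : ℕ → Finset V
  | 0 => {x}
  | k + 1 => gball G C x k ∪ C.filter (fun v => ∃ u ∈ gball G C x k, G.Adj u v)

theorem gball_sub {V : Type*} (G : SimpleGraph V) (C : Finset V) (x : V) (hx : x ∈ C) (k : ℕ) :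
    gball G C x k ⊆ C := by
  induction k with
  | zero => simpa [gball] using hx
  | succ k ih =>
    classical
    exact Finset.union_subset ih (Finset.filter_subset _ _)

theorem gball_conn {V : Type*} (G : SimpleGraph V) (C : Finset V) (x : V) (hx : x ∈ C) (k : ℕ) :
    ∀ v ∈ gball G C x k, ∃ S : Finset V, S ⊆ C ∧ x ∈ S ∧ v ∈ S ∧ S.card ≤ k + 1 ∧
      (G.induce (S : Set V)).Connected := by
  classical
  induction k with
  | zero =>
    intro v hv
    simp only [gball, Finset.mem_singleton] at hv
    subst hv
    refine ⟨{v}, by simpa using hx, by simp, by simp, by simp, ?_⟩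
    rw [Finset.coe_singleton]
    exact conn_single G v
  | succ k ih =>
    intro v hv
    simp only [gball, Finset.mem_union, Finset.mem_filter] at hv
    rcases hv with hv | ⟨hvC, u, hu, huv⟩
    · obtain ⟨S, h1, h2, h3, h4, h5⟩ := ih v hv
      exact ⟨S, h1, h2, h3, by omega, h5⟩
    · obtain ⟨S, h1, h2, h3, h4, h5⟩ := ih u hu
      refine ⟨S ∪ {v}, ?_, by simp [h2], by simp, ?_, ?_⟩
      · exact Finset.union_subset h1 (by simpa using hvC)
      · have := Finset.card_union_le S {v}
        simp only [Finset.card_singleton] at this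
        omega
      · have h6 : (G.induce ({u, v} : Set V)).Connected := G.induce_pair_connected_of_adj huv
        have h7 := conn_union G h5 h6 ⟨u, Finset.mem_coe.2 h3, Or.inl rfl⟩
        have : ((S ∪ {v} : Finset V) : Set V) = (S : Set V) ∪ {u, v} := by
          ext y
          simp only [Finset.coe_union, Finset.coe_singleton, Set.mem_union, Set.mem_insert_iff,
            Finset.mem_coe, Set.mem_singleton_iff]
          constructor
          · tauto
          · rintro (h | rfl | h)
            · exact Or.inl h
            · exact Or.inl h3
            · exact Or.inr h
        rw [this]; exact h7

open Classical in
theorem gball_grow {V : Type*} [Fintype V] (G : SimpleGraph V) (d : ℕ) (hd : 1 ≤ d) (β : ℝ)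
    (hβ : 0 < β) (hdeg : ∀ (s t : Finset V), ecount G s t ≤ d * t.card)
    (C : Finset V)
    (hC : ∀ U ⊆ C, U.Nonempty → 2 * U.card ≤ C.card → β * U.card < ecount G U (C \ U))
    (x : V) (hx : x ∈ C) (k : ℕ) :
    C.card < 2 * (gball G C x k).card ∨ (1 + β / d) ^ k ≤ ((gball G C x k).card : ℝ) := by
  classical
  induction k with
  | zero => right; simp [gball]
  | succ k ih =>
    have hsub : gball G C x k ⊆ gball G C x (k+1) := by
      rw [gball]; exact Finset.subset_union_left
    have hcle := Finset.card_le_card hsub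
    rcases Nat.lt_or_ge C.card (2 * (gball G C x k).card) with h | h
    · left; omega
    right
    rcases ih with ih | ih
    · omega
    set U := gball G C x k with hU
    have hdp : (0:ℝ) < d := by exact_mod_cast hd
    have hUne : U.Nonempty := by
      rw [← Finset.card_pos]
      have : (0:ℝ) < U.card := lt_of_lt_of_le (by positivity) ih
      exact_mod_cast this
    have h1 := hC U (gball_sub G C x hx k) hUne h
    set N := gball G C x (k+1) \ U with hN
    have h2 : ecount G U (C \ U) ≤ ecount G U N := by
      unfold ecount
      refine Finset.card_le_card ?_
      intro p hp
      simp only [Finset.mem_filter, Finset.mem_product, Finset.mem_sdiff] at hp ⊢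
      refine ⟨⟨hp.1.1, ?_⟩, hp.2⟩
      rw [hN, Finset.mem_sdiff, gball, Finset.mem_union, Finset.mem_filter]
      exact ⟨Or.inr ⟨hp.1.2.1, p.1, hp.1.1, hp.2⟩, hp.1.2.2⟩
    have h3 := hdeg U N
    have h4 : N.card + U.card = (gball G C x (k+1)).card := Finset.card_sdiff_add_card_eq_card hsub
    have h5 : β * U.card < d * N.card := lt_of_lt_of_le h1 (by exact_mod_cast h2.trans h3)
    have h6 : β / d * U.card ≤ N.card := by
      rw [div_mul_eq_mul_div, div_le_iff₀ hdp]; linarith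
    rw [← h4, pow_succ]
    push_cast
    have : (1 + β/d)^k * (1 + β/d) ≤ U.card * (1+β/d) := by gcongr
    nlinarith

open Classical in
/-- small diameter -/
theorem diam_lemma {V : Type*} [Fintype V] (G : SimpleGraph V) (d : ℕ) (hd : 1 ≤ d) (β : ℝ)
    (hβ : 0 < β) (hdeg : ∀ (s t : Finset V), ecount G s t ≤ d * t.card)
    (C : Finset V)
    (hC : ∀ U ⊆ C, U.Nonempty → 2 * U.card ≤ C.card → β * U.card < ecount G U (C \ U))
    (K : ℕ) (hK : (C.card : ℝ) < 2 * (1 + β / d) ^ K) (x y : V) (hx : x ∈ C) (hy : y ∈ C) :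
    ∃ S : Finset V, S ⊆ C ∧ x ∈ S ∧ y ∈ S ∧ S.card ≤ 2 * K + 2 ∧
      (G.induce (S : Set V)).Connected := by
  have big : ∀ z ∈ C, C.card < 2 * (gball G C z K).card := by
    intro z hz
    rcases gball_grow G d hd β hβ hdeg C hC z hz K with h | h
    · exact h
    · have : (C.card : ℝ) < 2 * (gball G C z K).card := by linarith
      exact_mod_cast this
  have h1 := big x hx
  have h2 := big y hy
  have h3 : (gball G C x K ∩ gball G C y K).Nonempty := by
    rw [← Finset.card_pos]
    have h4 := Finset.card_union_add_card_inter (gball G C x K) (gball G C y K)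
    have h5 := Finset.card_le_card
      (Finset.union_subset (gball_sub G C x hx K) (gball_sub G C y hy K))
    omega
  obtain ⟨z, hz⟩ := h3
  rw [Finset.mem_inter] at hz
  obtain ⟨S, a1, a2, a3, a4, a5⟩ := gball_conn G C x hx K z hz.1
  obtain ⟨T, b1, b2, b3, b4, b5⟩ := gball_conn G C y hy K z hz.2
  refine ⟨S ∪ T, Finset.union_subset a1 b1, Finset.mem_union_left _ a2,
    Finset.mem_union_right _ b2, ?_, ?_⟩
  · have := Finset.card_union_le S T; omega
  · rw [Finset.coe_union]
    exact conn_union G a5 b5 ⟨z, a3, b3⟩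

/-- gluing connected sets at a common vertex -/
theorem star_lemma {V ι : Type*} [DecidableEq V] (G : SimpleGraph V) (C : Finset V) (D : ℕ)
    (x : V) (hx : x ∈ C) (T : Finset ι) (y : ι → V)
    (h : ∀ i ∈ T, ∃ S : Finset V, S ⊆ C ∧ x ∈ S ∧ y i ∈ S ∧ S.card ≤ D ∧
      (G.induce (S : Set V)).Connected) :
    ∃ S : Finset V, S ⊆ C ∧ x ∈ S ∧ (∀ i ∈ T, y i ∈ S) ∧ S.card ≤ T.card * D + 1 ∧
      (G.induce (S : Set V)).Connected := by
  classical
  induction T using Finset.induction_on with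
  | empty =>
    refine ⟨{x}, by simpa using hx, by simp, by simp, by simp, ?_⟩
    rw [Finset.coe_singleton]
    exact conn_single G x
  | insert i T hi ih =>
    obtain ⟨S, a1, a2, a3, a4, a5⟩ := ih (fun j hj => h j (Finset.mem_insert_of_mem hj))
    obtain ⟨S', b1, b2, b3, b4, b5⟩ := h i (Finset.mem_insert_self _ _)
    refine ⟨S ∪ S', Finset.union_subset a1 b1, Finset.mem_union_left _ a2, ?_, ?_, ?_⟩
    · intro j hj
      rcases Finset.mem_insert.1 hj with rfl | hj
      · exact Finset.mem_union_right _ b3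
      · exact Finset.mem_union_left _ (a3 j hj)
    · have := Finset.card_union_le S S'
      rw [Finset.card_insert_of_notMem hi]
      nlinarith
    · rw [Finset.coe_union]
      exact conn_union G a5 b5 ⟨x, a2, b2⟩

open Classical in
/-- union of the branch sets -/
noncomputable def brUnion {V W : Type*} [Fintype W] (φ : W → Finset V) : Finset V :=
  Finset.univ.biUnion φ

open Classical in
/-- remaining part -/
noncomputable def rest {V W : Type*} [Fintype V] [Fintype W] (A : Finset V) (φ : W → Finset V) :
    Finset V := (A ∪ brUnion φ)ᶜ

/-- valid partial embedding, with discarded set `A` -/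
structure PState {V W : Type*} [Fintype V] [Fintype W] (G : SimpleGraph V) (H : SimpleGraph W)
    (β : ℝ) (bd : W → ℕ) (A : Finset V) (φ : W → Finset V) : Prop where
  size : ∀ w, (φ w).card ≤ bd w
  conn : ∀ w, (φ w).Nonempty → (G.induce (φ w : Set V)).Connected
  disj : ∀ u v, u ≠ v → Disjoint (φ u) (φ v)
  disjA : ∀ u, Disjoint A (φ u)
  adj : ∀ u v, H.Adj u v → (φ u).Nonempty → (φ v).Nonempty → ∃ a ∈ φ u, ∃ b ∈ φ v, G.Adj a b
  cut : (ecount G A (rest A φ) : ℝ) ≤ β * A.card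
  small : 3 * A.card ≤ 2 * Fintype.card V

open Classical in
theorem core {V W : Type*} [Fintype V] [Fintype W] (G : SimpleGraph V) (H : SimpleGraph W)
    (α : ℝ) (d K : ℕ) (hα : 0 < α) (hα1 : α < 1) (hd : 1 ≤ d) (hn : 1 ≤ Fintype.card V)
    (hexp : ∀ A : Finset V, 3 * A.card ≤ 2 * Fintype.card V →
      α / 2 * A.card ≤ ecount G A Aᶜ)
    (hdeg : ∀ v, (Finset.univ.filter (G.Adj v)).card ≤ d)
    (hK : (Fintype.card V : ℝ) < 2 * (1 + α / 4 / d) ^ K)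
    (hB : 100 * (d : ℝ) * (∑ w : W, (H.degree w * (2 * K + 2) + 1) : ℕ) ≤ α * Fintype.card V) :
    IsMinor H G := by
  have hec := ecount_le G d hdeg
  set bd : W → ℕ := fun w => H.degree w * (2 * K + 2) + 1 with hbd
  have hdp : (1:ℝ) ≤ d := by exact_mod_cast hd
  -- the sum of branch sets is small
  have hBs : ∀ A φ, PState G H (α/4) bd A φ →
      100 * (d:ℝ) * (brUnion φ).card ≤ α * Fintype.card V := by
    intro A φ h
    refine le_trans ?_ hB
    have : (brUnion φ).card ≤ ∑ w, bd w :=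
      Finset.card_biUnion_le.trans (Finset.sum_le_sum fun w _ => h.size w)
    have : ((brUnion φ).card : ℝ) ≤ (∑ w, bd w : ℕ) := by exact_mod_cast this
    gcongr
  have hBs' : ∀ A φ, PState G H (α/4) bd A φ → 100 * (brUnion φ).card ≤ Fintype.card V := by
    intro A φ h
    have h1 := hBs A φ h
    have h2 : (100:ℝ) * (brUnion φ).card ≤ Fintype.card V := by
      have : (0:ℝ) ≤ (brUnion φ).card := by positivity
      have : (0:ℝ) ≤ Fintype.card V := by positivity
      nlinarith
    exact_mod_cast h2
  have hAs : ∀ A φ, PState G H (α/4) bd A φ → 25 * A.card ≤ Fintype.card V := by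
    intro A φ h
    have h1 := hexp A h.small
    have h2 : Aᶜ ⊆ rest A φ ∪ brUnion φ := by
      intro v hv
      simp only [rest, Finset.mem_union, Finset.mem_compl] at hv ⊢
      tauto
    have h3 : ecount G A Aᶜ ≤ ecount G A (rest A φ) + d * (brUnion φ).card :=
      (ecount_mono G subset_rfl h2).trans ((ecount_union_right G _ _ _).trans
        (Nat.add_le_add_left (hec _ _) _))
    have h3' : (ecount G A Aᶜ : ℝ) ≤ ecount G A (rest A φ) + d * (brUnion φ).card := by
      exact_mod_cast h3
    have h4 := h.cut
    have h5 := hBs A φ h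
    have h6 : α * (25 * A.card) ≤ α * Fintype.card V := by nlinarith
    have h7 := le_of_mul_le_mul_left h6 hα
    exact_mod_cast h7
  -- the starting state
  have h0 : PState G H (α/4) bd ∅ (fun _ => ∅) := by
    constructor <;> simp [ecount]
  -- a maximal state
  let μ : Finset V × (W → Finset V) → ℕ := fun s =>
    s.1.card * (Fintype.card W + 1) + (Finset.univ.filter fun w => (s.2 w).Nonempty).card
  obtain ⟨⟨A, φ⟩, hst, hmax⟩ := Set.exists_max_image
    {s : Finset V × (W → Finset V) | PState G H (α/4) bd s.1 s.2} μ (Set.toFinite _) ⟨(∅, fun _ => ∅), h0⟩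
  have hst : PState G H (α/4) bd A φ := hst
  have hmax : ∀ A' φ', PState G H (α/4) bd A' φ' → μ (A', φ') ≤ μ (A, φ) :=
    fun A' φ' h => hmax (A', φ') h
  have hA := hAs A φ hst
  have hBc := hBs' A φ hst
  set C := rest A φ with hCdef
  have hmemC : ∀ v, v ∈ C ↔ v ∉ A ∧ ∀ w, v ∉ φ w := by
    intro v; simp [hCdef, rest, brUnion]
  have hnumle : ∀ ψ : W → Finset V,
      (Finset.univ.filter fun w => (ψ w).Nonempty).card ≤ Fintype.card W :=
    fun ψ => Finset.card_le_univ _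
  -- (1) expansion of `C`
  have hCexp : ∀ U ⊆ C, U.Nonempty → 2 * U.card ≤ C.card →
      α / 4 * U.card < ecount G U (C \ U) := by
    intro U hUC hUne hU2
    by_contra hcon
    push Not at hcon
    have hdisj : Disjoint A U := by
      rw [Finset.disjoint_left]
      intro v hv hvU
      exact ((hmemC v).1 (hUC hvU)).1 hv
    have hcard := Finset.card_union_of_disjoint hdisj
    have hrest : rest (A ∪ U) φ = C \ U := by
      ext v; simp [hCdef, rest]; tauto
    have hnew : PState G H (α/4) bd (A ∪ U) φ := by
      refine ⟨hst.size, hst.conn, hst.disj, ?_, hst.adj, ?_, ?_⟩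
      · intro u
        rw [Finset.disjoint_union_left]
        refine ⟨hst.disjA u, ?_⟩
        rw [Finset.disjoint_left]
        intro v hvU
        exact ((hmemC v).1 (hUC hvU)).2 u
      · rw [hrest, hcard]
        have e1 := ecount_union_left G A U (C \ U)
        have e2 := ecount_mono G (subset_refl A) (Finset.sdiff_subset : C \ U ⊆ C)
        have e3 := hst.cut
        have e4 : (ecount G (A ∪ U) (C \ U) : ℝ) ≤ ecount G A C + ecount G U (C \ U) := by
          exact_mod_cast e1.trans (Nat.add_le_add_right e2 _)
        push_cast
        linarith
      · have := Finset.card_le_univ C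
        rw [hcard]; omega
    have := hmax _ _ hnew
    have hUp := Finset.card_pos.2 hUne
    simp only [μ, hcard] at this
    nlinarith
  -- (2) every branch set sees `C`
  have hsee : ∀ w, (φ w).Nonempty → ∃ a ∈ φ w, ∃ b ∈ C, G.Adj a b := by
    intro w hw
    by_contra hcon
    push Not at hcon
    have hcard := Finset.card_union_of_disjoint (hst.disjA w)
    set ψ : W → Finset V := Function.update φ w ∅ with hψ
    have hψw : ψ w = ∅ := by simp [hψ]
    have hψn : ∀ u, u ≠ w → ψ u = φ u := fun u hu => by simp [hψ, hu]
    have hψsub : ∀ u, ψ u ⊆ φ u := by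
      intro u
      by_cases h : u = w
      · subst h; simp [hψw]
      · rw [hψn u h]
    have hψne : ∀ u, (ψ u).Nonempty → u ≠ w := by
      rintro u hu rfl
      simp [hψw] at hu
    have hrest : rest (A ∪ φ w) ψ ⊆ C := by
      intro v hv
      rw [hmemC]
      simp only [rest, brUnion, Finset.mem_compl, Finset.mem_union, Finset.mem_biUnion,
        Finset.mem_univ, true_and, not_or, not_exists] at hv
      refine ⟨hv.1.1, fun u => ?_⟩
      by_cases h : u = w
      · rw [h]; exact hv.1.2
      · rw [← hψn u h]; exact hv.2 u
    have hnew : PState G H (α/4) bd (A ∪ φ w) ψ := by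
      refine ⟨fun u => (Finset.card_le_card (hψsub u)).trans (hst.size u), ?_, ?_, ?_, ?_, ?_, ?_⟩
      · intro u hu
        have := hψne u hu
        rw [hψn u this] at hu ⊢
        exact hst.conn u hu
      · intro u v huv
        exact Finset.disjoint_of_subset_left (hψsub u)
          (Finset.disjoint_of_subset_right (hψsub v) (hst.disj u v huv))
      · intro u
        by_cases h : u = w
        · rw [h, hψw]; simp
        · rw [hψn u h, Finset.disjoint_union_left]
          exact ⟨hst.disjA u, hst.disj w u (Ne.symm h)⟩
      · intro u v huv hu hv
        have h1 := hψne u hu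
        have h2 := hψne v hv
        rw [hψn u h1] at hu ⊢
        rw [hψn v h2] at hv ⊢
        exact hst.adj u v huv hu hv
      · have e1 := ecount_union_left G A (φ w) (rest (A ∪ φ w) ψ)
        have e2 := ecount_mono G (subset_refl A) hrest
        have e3 : ecount G (φ w) (rest (A ∪ φ w) ψ) = 0 := by
          unfold ecount
          rw [Finset.card_eq_zero, Finset.filter_eq_empty_iff]
          intro p hp
          rw [Finset.mem_product] at hp
          exact hcon p.1 hp.1 p.2 (hrest hp.2)
        have e4 : (ecount G (A ∪ φ w) (rest (A ∪ φ w) ψ) : ℝ) ≤ ecount G A C := by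
          have : ecount G (A ∪ φ w) (rest (A ∪ φ w) ψ) ≤ ecount G A C := by omega
          exact_mod_cast this
        have e5 := hst.cut
        rw [hcard]
        push_cast
        have : (0:ℝ) ≤ (φ w).card := by positivity
        nlinarith
      · have : (φ w).card ≤ (brUnion φ).card :=
          Finset.card_le_card (Finset.subset_biUnion_of_mem φ (Finset.mem_univ w))
        rw [hcard]; omega
    have h1 := hmax _ _ hnew
    have hUp := Finset.card_pos.2 hw
    simp only [μ, hcard] at h1
    have h2 := hnumle φ
    have h3 : (Finset.univ.filter fun u => (φ u).Nonempty) ⊆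
        insert w (Finset.univ.filter fun u => (ψ u).Nonempty) := by
      intro u hu
      simp only [Finset.mem_filter, Finset.mem_univ, true_and, Finset.mem_insert] at hu ⊢
      by_cases h : u = w
      · exact Or.inl h
      · right; rw [hψn u h]; exact hu
    have h4 := (Finset.card_le_card h3).trans (Finset.card_insert_le _ _)
    have h5 : 1 ≤ Fintype.card W := Fintype.card_pos_iff.2 ⟨w⟩
    nlinarith
  -- (3) everything is embedded
  have hall : ∀ w, (φ w).Nonempty := by
    intro w
    by_contra hw
    rw [Finset.not_nonempty_iff_eq_empty] at hw
    have hCne : C.Nonempty := by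
      rw [← Finset.card_pos, hCdef, rest, Finset.card_compl]
      have := Finset.card_union_le A (brUnion φ)
      omega
    obtain ⟨x, hx⟩ := hCne
    set T := Finset.univ.filter (fun u => H.Adj w u ∧ (φ u).Nonempty) with hT
    have hTex : ∀ u, ∃ y, u ∈ T → y ∈ C ∧ ∃ a ∈ φ u, G.Adj a y := by
      intro u
      by_cases hu : u ∈ T
      · have hu' := hu
        rw [hT, Finset.mem_filter] at hu'
        obtain ⟨a, ha, b, hb, hab⟩ := hsee u hu'.2.2
        exact ⟨b, fun _ => ⟨hb, a, ha, hab⟩⟩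
      · exact ⟨x, fun h => absurd h hu⟩
    choose y hy using hTex
    have hKC : (C.card : ℝ) < 2 * (1 + α / 4 / d) ^ K := by
      refine lt_of_le_of_lt ?_ hK
      exact_mod_cast Finset.card_le_univ C
    obtain ⟨S, s1, s2, s3, s4, s5⟩ := star_lemma G C (2 * K + 2) x hx T y (fun u hu =>
      diam_lemma G d hd (α/4) (by positivity) hec C hCexp K hKC x (y u) hx (hy u hu).1)
    have hTd : T.card ≤ H.degree w := by
      rw [← SimpleGraph.card_neighborFinset_eq_degree]
      refine Finset.card_le_card ?_
      intro u hu
      rw [hT, Finset.mem_filter] at hu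
      rw [SimpleGraph.mem_neighborFinset]
      exact hu.2.1
    set ψ : W → Finset V := Function.update φ w S with hψ
    have hψw : ψ w = S := by simp [hψ]
    have hψn : ∀ u, u ≠ w → ψ u = φ u := fun u hu => by simp [hψ, hu]
    have hSd : ∀ u, Disjoint S (φ u) := by
      intro u
      rw [Finset.disjoint_left]
      intro v hv
      exact ((hmemC v).1 (s1 hv)).2 u
    have hrest : rest A ψ ⊆ C := by
      intro v hv
      rw [hmemC]
      simp only [rest, brUnion, Finset.mem_compl, Finset.mem_union, Finset.mem_biUnion,
        Finset.mem_univ, true_and, not_or, not_exists] at hv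
      refine ⟨hv.1, fun u => ?_⟩
      by_cases h : u = w
      · rw [h, hw]; simp
      · rw [← hψn u h]; exact hv.2 u
    have hadjw : ∀ v, v ≠ w → H.Adj w v → (ψ v).Nonempty → ∃ a ∈ ψ v, ∃ b ∈ S, G.Adj a b := by
      intro v hvw hwv hv
      rw [hψn v hvw] at hv ⊢
      have hvT : v ∈ T := by rw [hT, Finset.mem_filter]; exact ⟨Finset.mem_univ _, hwv, hv⟩
      obtain ⟨_, a, ha, hab⟩ := hy v hvT
      exact ⟨a, ha, y v, s3 v hvT, hab⟩
    have hnew : PState G H (α/4) bd A ψ := by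
      refine ⟨?_, ?_, ?_, ?_, ?_, ?_, hst.small⟩
      · intro u
        by_cases h : u = w
        · rw [h, hψw]
          refine s4.trans ?_
          simp only [hbd]
          gcongr
        · rw [hψn u h]; exact hst.size u
      · intro u hu
        by_cases h : u = w
        · rw [h, hψw]; exact s5
        · rw [hψn u h] at hu ⊢; exact hst.conn u hu
      · intro u v huv
        by_cases h : u = w
        · have hv : v ≠ w := fun h' => huv (h.trans h'.symm)
          rw [h, hψw, hψn v hv]; exact hSd v
        · by_cases h' : v = w
          · rw [h', hψw, hψn u h]; exact (hSd u).symm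
          · rw [hψn u h, hψn v h']; exact hst.disj u v huv
      · intro u
        by_cases h : u = w
        · rw [h, hψw, Finset.disjoint_right]
          intro v hv
          exact ((hmemC v).1 (s1 hv)).1
        · rw [hψn u h]; exact hst.disjA u
      · intro u v huv hu hv
        by_cases h : u = w
        · subst h
          obtain ⟨a, ha, b, hb, hab⟩ := hadjw v huv.ne' huv hv
          rw [hψw]
          exact ⟨b, hb, a, ha, hab.symm⟩
        · by_cases h' : v = w
          · subst h'
            rw [hψw]
            exact hadjw u h huv.symm hu
          · rw [hψn u h] at hu ⊢
            rw [hψn v h'] at hv ⊢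
            exact hst.adj u v huv hu hv
      · refine le_trans ?_ hst.cut
        exact_mod_cast ecount_mono G (subset_refl A) hrest
    have h1 := hmax _ _ hnew
    simp only [μ] at h1
    have h3 : (Finset.univ.filter fun u => (φ u).Nonempty) ⊂
        (Finset.univ.filter fun u => (ψ u).Nonempty) := by
      rw [Finset.ssubset_iff_of_subset]
      · exact ⟨w, by simp only [Finset.mem_filter, Finset.mem_univ, true_and, hψw]; exact ⟨x, s2⟩,
          by simp [hw]⟩
      · intro u hu
        simp only [Finset.mem_filter, Finset.mem_univ, true_and] at hu ⊢
        have h : u ≠ w := by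
          rintro rfl
          simp [hw] at hu
        rw [hψn u h]; exact hu
    have h4 := Finset.card_lt_card h3
    omega
  refine ⟨fun w => (φ w : Set V), fun u => hst.conn u (hall u), ?_, ?_⟩
  · intro u v huv
    exact Finset.disjoint_coe.2 (hst.disj u v huv)
  · intro u v huv
    obtain ⟨a, ha, b, hb, hab⟩ := hst.adj u v huv (hall u) (hall v)
    exact ⟨a, ha, b, hb, hab⟩

/-- choice of the radius -/
theorem exists_radius (n : ℕ) (hn : 2 ≤ n) (ε : ℝ) (h0 : 0 < ε) (h1 : ε ≤ 1) :
    ∃ K : ℕ, (n : ℝ) < 2 * (1 + ε) ^ K ∧ (K : ℝ) ≤ 2 * Real.logb 2 n / ε := by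
  have hnR : (2:ℝ) ≤ n := by exact_mod_cast hn
  have hL : 1 ≤ Real.logb 2 n := by
    rw [Real.le_logb_iff_rpow_le (by norm_num) (by linarith)]; simpa using hnR
  refine ⟨⌈Real.logb 2 n / ε⌉₊, ?_, ?_⟩
  · have h2 : (2:ℝ) ≤ (1 + ε) ^ (1 / ε) := by
      have := one_add_mul_self_le_rpow_one_add (s := ε) (by linarith) (p := 1/ε)
        (by rw [le_div_iff₀ h0]; linarith)
      rw [one_div_mul_cancel h0.ne'] at this
      linarith
    have h3 : (n:ℝ) ≤ (1 + ε) ^ (⌈Real.logb 2 n / ε⌉₊) := by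
      calc (n:ℝ) = 2 ^ Real.logb 2 n := by
            rw [Real.rpow_logb (by norm_num) (by norm_num) (by linarith)]
        _ ≤ ((1 + ε) ^ (1 / ε)) ^ Real.logb 2 n :=
            Real.rpow_le_rpow (by norm_num) h2 (by linarith)
        _ = (1 + ε) ^ (Real.logb 2 n / ε) := by
            rw [← Real.rpow_mul (by linarith)]; congr 1; ring
        _ ≤ (1 + ε) ^ ((⌈Real.logb 2 n / ε⌉₊ : ℕ) : ℝ) :=
            Real.rpow_le_rpow_of_exponent_le (by linarith) (Nat.le_ceil _)
        _ = _ := Real.rpow_natCast _ _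
    linarith
  · have h2 := Nat.ceil_lt_add_one (a := Real.logb 2 n / ε) (by positivity)
    have h3 : 1 ≤ Real.logb 2 n / ε := by rw [le_div_iff₀ h0]; linarith
    have h4 : 2 * Real.logb 2 n / ε = Real.logb 2 n / ε + Real.logb 2 n / ε := by ring
    linarith

end Helpers

/-- **Large minors in expanders.** There is a universal constant `c* > 0` such that for
every real `0 < α < 1`, every integer `d ≥ 1`, and every `n`-vertex `α`-expander `G`
(`n ≥ 2`) whose maximum vertex degree is at most `d`, every graph `H` of size at most
`(n / (c* · log₂ n)) · (α/d)^{c*}` is a minor of `G`. -/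
theorem large_minors_in_expanders :
    ∃ c : ℝ, 0 < c ∧
      ∀ (V : Type) [Fintype V] (G : SimpleGraph V) (α : ℝ) (d : ℕ),
        0 < α → α < 1 → 1 ≤ d →
        2 ≤ Nat.card V →
        IsExpander G α → DegLE G d →
        ∀ (W : Type) [Fintype W] (H : SimpleGraph W),
          (gsize H : ℝ) ≤
            (Nat.card V : ℝ) / (c * Real.logb 2 (Nat.card V)) * (α / d) ^ c →
          IsMinor H G := by
  classical
  refine ⟨4800, by norm_num, ?_⟩
  intro V _ G α d hα hα1 hd hn hexp hdeg W _ H hH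
  rw [Nat.card_eq_fintype_card] at hn hH
  have hdp : (1:ℝ) ≤ d := by exact_mod_cast hd
  have hd0 : (0:ℝ) < d := by linarith
  set n := Fintype.card V with hndef
  have hnR : (2:ℝ) ≤ n := by exact_mod_cast hn
  have hL : 1 ≤ Real.logb 2 n := by
    rw [Real.le_logb_iff_rpow_le (by norm_num) (by linarith)]; simpa using hnR
  have hε0 : 0 < α / 4 / d := by positivity
  have hε1 : α / 4 / d ≤ 1 := by rw [div_le_one hd0]; linarith
  obtain ⟨K, hK, hK2⟩ := exists_radius n hn (α / 4 / d) hε0 hε1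
  refine core G H α d K hα hα1 hd (by omega) ?_ ?_ hK ?_
  · intro A hA
    rcases A.eq_empty_or_nonempty with rfl | hne
    · simp
    have hlt : A.card < n := by omega
    have hcne : (Aᶜ).Nonempty := by
      rw [← Finset.card_pos, Finset.card_compl]; omega
    have h1 := hexp (A : Set V) (by exact_mod_cast hne) (by rw [← Finset.coe_compl]; exact_mod_cast hcne)
    have hcut : cutCard G (A : Set V) (A : Set V)ᶜ = ecount G A Aᶜ := by
      unfold cutCard ecount
      rw [← Finset.coe_compl, Nat.card_eq_fintype_card, Fintype.card_subtype]
      congr 1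
      ext p
      simp [and_assoc]
    rw [hcut] at h1
    refine le_trans ?_ h1
    rw [← Finset.coe_compl]
    simp only [Nat.card_eq_fintype_card, Finset.coe_sort_coe, Fintype.card_coe]
    have h2 : A.card + Aᶜ.card = n := Finset.card_add_card_compl A
    have h3 : (A.card : ℝ) / 2 ≤ min (A.card : ℝ) (Aᶜ.card : ℝ) := by
      have : (A.card : ℝ) ≤ 2 * Aᶜ.card := by
        have : A.card ≤ 2 * Aᶜ.card := by omega
        exact_mod_cast this
      refine le_min ?_ ?_
      · have : (0:ℝ) ≤ A.card := by positivity
        linarith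
      · linarith
    calc α / 2 * A.card = α * (A.card / 2) := by ring
      _ ≤ _ := by gcongr
  · intro v
    have := hdeg v
    rw [Nat.card_eq_fintype_card] at this
    rw [← Fintype.card_subtype]
    exact this
  · have hsum : ∑ w : W, (H.degree w * (2 * K + 2) + 1)
        = 2 * H.edgeFinset.card * (2 * K + 2) + Fintype.card W := by
      rw [Finset.sum_add_distrib, ← Finset.sum_mul, H.sum_degrees_eq_twice_card_edges]
      simp
    have hle : ∑ w : W, (H.degree w * (2 * K + 2) + 1) ≤ gsize H * (2 * (2 * K + 2)) := by
      rw [hsum]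
      unfold gsize
      rw [Nat.card_eq_fintype_card, Nat.card_eq_fintype_card, ← SimpleGraph.edgeFinset_card]
      nlinarith
    have hle' : ((∑ w : W, (H.degree w * (2 * K + 2) + 1) : ℕ) : ℝ)
        ≤ gsize H * (2 * (2 * K + 2)) := by exact_mod_cast hle
    set L := Real.logb 2 n with hLdef
    have hx0 : 0 < α / d := by positivity
    have hx1 : α / d ≤ 1 := by rw [div_le_one hd0]; linarith
    have hpow : (α / d) ^ (4800:ℝ) ≤ (α / d) ^ 2 := by
      rw [← Real.rpow_natCast]
      exact Real.rpow_le_rpow_of_exponent_ge hx0 hx1 (by norm_num)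
    have hg : (gsize H : ℝ) ≤ n / (4800 * L) * (α / d) ^ 2 :=
      hH.trans (mul_le_mul_of_nonneg_left hpow (by positivity))
    have hK3 : (2 * (2 * (K:ℝ) + 2)) ≤ 48 * L * (d / α) := by
      have e1 : 2 * L / (α / 4 / d) = 8 * L * (d / α) := by field_simp; ring
      rw [e1] at hK2
      have e2 : 1 ≤ d / α := by rw [le_div_iff₀ hα]; linarith
      have e3 : 1 ≤ L * (d / α) := by nlinarith
      nlinarith
    calc 100 * (d:ℝ) * ((∑ w : W, (H.degree w * (2 * K + 2) + 1) : ℕ) : ℝ)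
        ≤ 100 * (d:ℝ) * (gsize H * (2 * (2 * K + 2))) := by gcongr
      _ ≤ 100 * (d:ℝ) * (n / (4800 * L) * (α / d) ^ 2 * (48 * L * (d / α))) := by gcongr
      _ = α * n := by
        have : L ≠ 0 := by linarith
        field_simp
        norm_num
end

section
/- There is a universal constant c̃* > 0 such that the following holds. For every real 0 < α < 1, every integer d ≥ 1, and every n-vertex α-expander G (with n ≥ 2) whose maximum vertex degree is at most d, every graph H whose size is at most (n / (c̃* · (log₂ n)²)) · (α³/d⁵) is a minor of G. -/
open Classical in
/-- Number of edges between two finite sets of vertices. -/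
noncomputable def eC {V : Type} (G : SimpleGraph V) (A B : Finset V) : ℕ :=
  ∑ a ∈ A, ∑ b ∈ B, if G.Adj a b then 1 else 0

open Classical in
theorem eC_le_right {V : Type} [Fintype V] (G : SimpleGraph V) (d : ℕ) (hd : DegLE G d)
    (A B : Finset V) : eC G A B ≤ d * B.card := by
  unfold eC
  rw [Finset.sum_comm, mul_comm, ← smul_eq_mul]
  apply Finset.sum_le_card_nsmul
  intro b _
  rw [← Finset.card_filter]
  refine le_trans ?_ (hd b)
  rw [Nat.card_eq_fintype_card, ← Set.toFinset_card]
  apply Finset.card_le_card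
  intro a ha
  simpa using (Finset.mem_filter.1 ha).2.symm

theorem eC_union_right {V : Type} [DecidableEq V] (G : SimpleGraph V)
    (A B C : Finset V) (h : Disjoint B C) : eC G A (B ∪ C) = eC G A B + eC G A C := by
  unfold eC
  rw [← Finset.sum_add_distrib]
  exact Finset.sum_congr rfl fun a _ => Finset.sum_union h

theorem eC_union_left {V : Type} [DecidableEq V] (G : SimpleGraph V)
    (A B C : Finset V) (h : Disjoint A B) : eC G (A ∪ B) C = eC G A C + eC G B C := by
  unfold eC
  exact Finset.sum_union h

theorem eC_mono {V : Type} (G : SimpleGraph V)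
    {A B C : Finset V} (h : B ⊆ C) : eC G A B ≤ eC G A C := by
  unfold eC
  exact Finset.sum_le_sum fun a _ => Finset.sum_le_sum_of_subset h

theorem eC_zero {V : Type} (G : SimpleGraph V)
    {A B : Finset V} (h : ∀ a ∈ A, ∀ b ∈ B, ¬ G.Adj a b) : eC G A B = 0 := by
  unfold eC
  exact Finset.sum_eq_zero fun a ha => Finset.sum_eq_zero fun b hb => if_neg (h a ha b hb)

open Classical in
theorem cutCard_eq {V : Type} [Fintype V] (G : SimpleGraph V) (A B : Finset V) :
    cutCard G (A : Set V) (B : Set V) = eC G A B := by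
  unfold cutCard eC
  rw [Nat.card_eq_fintype_card, Fintype.card_subtype, ← Finset.sum_product',
    ← Finset.card_filter]
  congr 1
  ext p
  simp [and_assoc]

open Classical in
theorem exp_eC {V : Type} [Fintype V] (G : SimpleGraph V) (α : ℝ) (h : IsExpander G α)
    (A : Finset V) : α * (min (A.card : ℝ) ((Fintype.card V : ℝ) - A.card)) ≤ eC G A Aᶜ := by
  have hc : ((Aᶜ.card : ℕ) : ℝ) = (Fintype.card V : ℝ) - A.card := by
    rw [Finset.card_compl, Nat.cast_sub (Finset.card_le_univ A)]
  rcases A.eq_empty_or_nonempty with rfl | hA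
  · simp [eC]
  rcases (Aᶜ).eq_empty_or_nonempty with h0 | hB
  · rw [← hc, h0]; simp [eC]
  have := h (A : Set V) (by simpa using hA) (by rw [← Finset.coe_compl]; exact Finset.coe_nonempty.2 hB)
  rw [← Finset.coe_compl, cutCard_eq] at this
  rw [← hc]
  have e1 : Nat.card (A : Set V) = A.card := by simp
  have e2 : Nat.card ((Aᶜ : Finset V) : Set V) = Aᶜ.card := by
    rw [Nat.card_eq_fintype_card]; exact Fintype.card_coe Aᶜ
  rw [e1, e2] at this
  exact this

open Classical in
/-- vertices reachable from `x` by a walk of length at most `k` inside `U`. -/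
noncomputable def bl {V : Type} [Fintype V] (G : SimpleGraph V) (U : Finset V) (x : V) (k : ℕ) :
    Finset V :=
  Finset.univ.filter fun y => ∃ p : G.Walk x y, p.length ≤ k ∧ ∀ z ∈ p.support, z ∈ U

open Classical in
theorem bl_grow {V : Type} [Fintype V] (G : SimpleGraph V) (d : ℕ) (hd : DegLE G d) (hd1 : 1 ≤ d)
    (α : ℝ) (hα : 0 < α) (U : Finset V)
    (hU : ∀ D ⊆ U, D.Nonempty → 2 * D.card ≤ U.card → α / 2 * D.card < eC G D (U \ D))
    (x : V) (hx : x ∈ U) (k : ℕ) :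
    U.card < 2 * (bl G U x k).card ∨ (1 + α / (2 * d)) ^ k ≤ ((bl G U x k).card : ℝ) := by
  have hsub : ∀ k, bl G U x k ⊆ U := by
    intro k y hy
    simp only [bl, Finset.mem_filter, Finset.mem_univ, true_and] at hy
    obtain ⟨p, _, hp⟩ := hy
    exact hp y p.end_mem_support
  have hmem : ∀ k, x ∈ bl G U x k := by
    intro k
    simp only [bl, Finset.mem_filter, Finset.mem_univ, true_and]
    exact ⟨SimpleGraph.Walk.nil, by simp, by simpa using hx⟩
  have hmono : ∀ k, bl G U x k ⊆ bl G U x (k+1) := by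
    intro k y hy
    simp only [bl, Finset.mem_filter, Finset.mem_univ, true_and] at hy ⊢
    obtain ⟨p, h1, hp⟩ := hy
    exact ⟨p, by omega, hp⟩
  have hstep : ∀ k y z, y ∈ bl G U x k → G.Adj y z → z ∈ U → z ∈ bl G U x (k+1) := by
    intro k y z hy hyz hz
    simp only [bl, Finset.mem_filter, Finset.mem_univ, true_and] at hy ⊢
    obtain ⟨p, h1, hp⟩ := hy
    refine ⟨p.concat hyz, by simpa using h1, ?_⟩
    intro w hw
    rw [SimpleGraph.Walk.support_concat] at hw
    simp at hw
    rcases hw with hw | rfl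
    · exact hp _ hw
    · exact hz
  induction k with
  | zero =>
    right
    have : 0 < (bl G U x 0).card := Finset.card_pos.2 ⟨x, hmem 0⟩
    simpa using this
  | succ k ih =>
    have hc := Finset.card_le_card (hmono k)
    rcases ih with ih | ih
    · left; omega
    by_cases hb : U.card < 2 * (bl G U x k).card
    · left; omega
    right
    have h1 := hU (bl G U x k) (hsub k) ⟨x, hmem k⟩ (by omega)
    have h2 : eC G (bl G U x k) (U \ bl G U x k) ≤
        eC G (bl G U x k) (bl G U x (k+1) \ bl G U x k) := by
      have : U \ bl G U x k = (bl G U x (k+1) \ bl G U x k) ∪ (U \ bl G U x (k+1)) := by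
        ext z
        have a1 := @hmono k z
        have a2 := @hsub (k+1) z
        simp only [Finset.mem_sdiff, Finset.mem_union]
        tauto
      rw [this, eC_union_right, eC_zero G (B := U \ bl G U x (k+1))]
      · simp
      · intro a ha b hb hab
        rw [Finset.mem_sdiff] at hb
        exact hb.2 (hstep k a b ha hab hb.1)
      · rw [Finset.disjoint_left]
        intro z h1 h2
        rw [Finset.mem_sdiff] at h1 h2
        exact h2.2 h1.1
    have h3 := eC_le_right G d hd (bl G U x k) (bl G U x (k+1) \ bl G U x k)
    rw [Finset.card_sdiff_of_subset (hmono k)] at h3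
    have h4 : (eC G (bl G U x k) (U \ bl G U x k) : ℝ) ≤
        d * (((bl G U x (k+1)).card : ℝ) - (bl G U x k).card) := by
      rw [← Nat.cast_sub hc]
      exact_mod_cast h2.trans h3
    have hd0 : (0:ℝ) < d := by exact_mod_cast hd1
    have h5 : α / (2 * d) * (bl G U x k).card ≤
        ((bl G U x (k+1)).card : ℝ) - (bl G U x k).card := by
      have : α / (2 * d) * (bl G U x k).card = (α / 2 * (bl G U x k).card) / d := by
        field_simp
      rw [this, div_le_iff₀ hd0]
      linarith
    have hβ : 0 < α / (2 * d) := by positivity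
    rw [pow_succ]
    nlinarith

open Classical in
theorem short_walk {V : Type} [Fintype V] (G : SimpleGraph V) (d : ℕ) (hd : DegLE G d)
    (hd1 : 1 ≤ d)
    (α : ℝ) (hα : 0 < α) (r : ℕ) (hr : (Fintype.card V : ℝ) ≤ (1 + α / (2 * d)) ^ r) (U : Finset V)
    (hU : ∀ D ⊆ U, D.Nonempty → 2 * D.card ≤ U.card → α / 2 * D.card < eC G D (U \ D))
    (x : V) (hx : x ∈ U) (y : V) (hy : y ∈ U) :
    ∃ p : G.Walk x y, p.length ≤ 2 * r ∧ ∀ z ∈ p.support, z ∈ U := by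
  have key : ∀ x ∈ U, U.card < 2 * (bl G U x r).card := by
    intro x hx
    rcases bl_grow G d hd hd1 α hα U hU x hx r with h | h
    · exact h
    · have h1 : Fintype.card V ≤ (bl G U x r).card := by exact_mod_cast hr.trans h
      have h2 := Finset.card_le_univ U
      have h3 : 0 < U.card := Finset.card_pos.2 ⟨x, hx⟩
      omega
  have hsub : ∀ x, bl G U x r ⊆ U := by
    intro x y hy
    simp only [bl, Finset.mem_filter, Finset.mem_univ, true_and] at hy
    obtain ⟨p, _, hp⟩ := hy
    exact hp y p.end_mem_support
  have hne : ¬ Disjoint (bl G U x r) (bl G U y r) := by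
    intro hdis
    have h1 := Finset.card_union_of_disjoint hdis
    have h2 := Finset.card_le_card (Finset.union_subset (hsub x) (hsub y))
    have h3 := key x hx
    have h4 := key y hy
    omega
  rw [Finset.not_disjoint_iff] at hne
  obtain ⟨z, hz1, hz2⟩ := hne
  simp only [bl, Finset.mem_filter, Finset.mem_univ, true_and] at hz1 hz2
  obtain ⟨p, hp, hp'⟩ := hz1
  obtain ⟨q, hq, hq'⟩ := hz2
  refine ⟨p.append q.reverse, by simp; omega, ?_⟩
  intro w hw
  rw [SimpleGraph.Walk.mem_support_append_iff] at hw
  rcases hw with hw | hw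
  · exact hp' w hw
  · exact hq' w (by simpa using hw)

open Classical in
/-- A star of walks gives a small connected set. -/
theorem star_set {V W : Type} [Fintype V] (G : SimpleGraph V) (U : Finset V) (L : ℕ)
    (hw : ∀ x ∈ U, ∀ y ∈ U, ∃ p : G.Walk x y, p.length + 1 ≤ L ∧ ∀ z ∈ p.support, z ∈ U)
    (x : V) (hx : x ∈ U) (T : Finset W) (f : W → V) (hf : ∀ u ∈ T, f u ∈ U) :
    ∃ P : Finset V, P ⊆ U ∧ x ∈ P ∧ (∀ u ∈ T, f u ∈ P) ∧
      (G.induce (P : Set V)).Connected ∧ P.card ≤ (T.card + 1) * L := by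
  induction T using Finset.induction_on with
  | empty =>
    obtain ⟨p, hp, hp'⟩ := hw x hx x hx
    refine ⟨{x}, by simpa using hx, by simp, by simp, ?_, by simp; omega⟩
    have h1 := (SimpleGraph.Walk.nil : G.Walk x x).connected_induce_support
    have h3 : (({x} : Finset V) : Set V) =
        {v | v ∈ (SimpleGraph.Walk.nil : G.Walk x x).support} := by ext; simp
    rw [h3]; exact h1
  | insert u T hu ih =>
    obtain ⟨P, hPU, hxP, hfP, hcon, hcard⟩ := ih fun v hv => hf v (Finset.mem_insert_of_mem hv)
    obtain ⟨p, hp, hp'⟩ := hw x hx (f u) (hf u (Finset.mem_insert_self _ _))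
    refine ⟨P ∪ p.support.toFinset, ?_, Finset.mem_union_left _ hxP, ?_, ?_, ?_⟩
    · apply Finset.union_subset hPU
      intro z hz
      exact hp' z (by simpa using hz)
    · intro v hv
      rw [Finset.mem_insert] at hv
      rcases hv with rfl | hv
      · exact Finset.mem_union_right _ (by simp)
      · exact Finset.mem_union_left _ (hfP v hv)
    · have h1 := p.connected_induce_support
      have h2 := SimpleGraph.induce_union_connected hcon.preconnected h1.preconnected
        ⟨x, hxP, p.start_mem_support⟩
      have h3 : ((P ∪ p.support.toFinset : Finset V) : Set V) =
          (P : Set V) ∪ {v | v ∈ p.support} := by ext; simp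
      rw [h3]; exact h2
    · rw [Finset.card_insert_of_notMem hu]
      have h1 := Finset.card_union_le P p.support.toFinset
      have h2 := p.support.toFinset_card_le
      rw [SimpleGraph.Walk.length_support] at h2
      nlinarith

open Classical in
/-- Valid partial embeddings. -/
structure PState_s1 {V W : Type} [Fintype V] [Fintype W] (G : SimpleGraph V) (H : SimpleGraph W)
    (α : ℝ) (L : ℕ) (D : Finset V) (S : Finset W) (φ : W → Finset V) : Prop where
  conn : ∀ u ∈ S, (G.induce (φ u : Set V)).Connected
  disj : ∀ u ∈ S, ∀ v ∈ S, u ≠ v → Disjoint (φ u) (φ v)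
  adj : ∀ u ∈ S, ∀ v ∈ S, H.Adj u v → ∃ a ∈ φ u, ∃ b ∈ φ v, G.Adj a b
  disjD : ∀ u ∈ S, Disjoint D (φ u)
  size : ∀ u ∈ S, (φ u).card ≤ (H.degree u + 1) * L
  bdry : (eC G D (D ∪ S.biUnion φ)ᶜ : ℝ) ≤ α / 2 * D.card
  small : 4 * D.card ≤ Fintype.card V

open Classical in
theorem small_of_bdry {V : Type} [Fintype V] (G : SimpleGraph V) (d : ℕ) (hd : DegLE G d)
    (α : ℝ) (hα : 0 < α) (hG : IsExpander G α) (D R : Finset V) (B : ℕ) (hDR : Disjoint D R)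
    (hR : R.card ≤ B) (hB : (16 * d * B : ℝ) < α * Fintype.card V)
    (hb : (eC G D (D ∪ R)ᶜ : ℝ) ≤ α / 2 * D.card) (hD : 8 * D.card ≤ 5 * Fintype.card V) :
    4 * D.card ≤ Fintype.card V := by
  have h1 := exp_eC G α hG D
  have h2 : Dᶜ = (D ∪ R)ᶜ ∪ R := by
    ext z
    have := @Finset.disjoint_left _ D R
    have h3 := (this.1 hDR) (a := z)
    simp only [Finset.mem_compl, Finset.mem_union]
    tauto
  rw [h2, eC_union_right] at h1
  swap
  · rw [Finset.disjoint_left]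
    intro z hz hz'
    simp only [Finset.mem_compl, Finset.mem_union] at hz
    tauto
  have h3 : (eC G D R : ℝ) ≤ d * B := by
    have := (eC_le_right G d hd D R).trans (Nat.mul_le_mul_left d hR)
    exact_mod_cast this
  push_cast at h1
  have hD' : (8 * D.card : ℝ) ≤ 5 * Fintype.card V := by exact_mod_cast hD
  suffices (4 * D.card : ℝ) ≤ Fintype.card V by exact_mod_cast this
  set n : ℝ := (Fintype.card V : ℝ)
  set D' : ℝ := (D.card : ℝ)
  rcases min_cases D' (n - D') with ⟨h, _⟩ | ⟨h, h'⟩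
  · rw [h] at h1
    have : α * (8 * D') ≤ α * n := by nlinarith
    have := le_of_mul_le_mul_left this hα
    have : 0 ≤ D' := Nat.cast_nonneg _
    linarith
  · rw [h] at h1
    exfalso
    nlinarith

open Classical in
theorem core_s1 {V W : Type} [Fintype V] [Fintype W] (G : SimpleGraph V) (H : SimpleGraph W)
    (d : ℕ) (hd : DegLE G d) (hd1 : 1 ≤ d) (hn : 0 < Fintype.card V)
    (α : ℝ) (hα : 0 < α) (hα1 : α < 1) (hG : IsExpander G α) (L : ℕ)
    (hL : ∀ U : Finset V,
      (∀ D ⊆ U, D.Nonempty → 2 * D.card ≤ U.card → α / 2 * D.card < eC G D (U \ D)) →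
      ∀ x ∈ U, ∀ y ∈ U, ∃ p : G.Walk x y, p.length + 1 ≤ L ∧ ∀ z ∈ p.support, z ∈ U)
    (B : ℕ) (hBL : ∑ u : W, (H.degree u + 1) * L ≤ B)
    (hB : (16 * d * B : ℝ) < α * Fintype.card V) : IsMinor H G := by
  have hB16 : 16 * B < Fintype.card V := by
    have : (16 * B : ℝ) < Fintype.card V := by
      have hd' : (1:ℝ) ≤ d := by exact_mod_cast hd1
      have hn' : (0:ℝ) < Fintype.card V := by exact_mod_cast hn
      have hB0 : (0:ℝ) ≤ B := Nat.cast_nonneg _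
      nlinarith
    exact_mod_cast this
  -- size of the used part
  have hR : ∀ D S φ, PState_s1 G H α L D S φ → (S.biUnion φ).card ≤ B := by
    intro D S φ h
    refine Finset.card_biUnion_le.trans ?_
    refine (Finset.sum_le_sum h.size).trans ?_
    exact (Finset.sum_le_sum_of_subset (Finset.subset_univ S)).trans hBL
  -- maximal state
  let Q : ℕ → Prop := fun m => ∃ D S φ, PState_s1 G H α L D S φ ∧
    m = D.card * (Fintype.card W + 1) + S.card
  have hQ0 : Q 0 := by
    refine ⟨∅, ∅, fun _ => ∅, ?_, by simp⟩
    constructor <;> simp [eC]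
  have hQb : ∀ m, Q m → m ≤ Fintype.card V * (Fintype.card W + 1) + Fintype.card W := by
    rintro m ⟨D, S, φ, -, rfl⟩
    have h1 := Finset.card_le_univ D
    have h2 := Finset.card_le_univ S
    gcongr
  have hmax : ∃ m, Q m ∧ ∀ m', Q m' → m' ≤ m := by
    refine ⟨Nat.findGreatest Q (Fintype.card V * (Fintype.card W + 1) + Fintype.card W), ?_, ?_⟩
    · exact Nat.findGreatest_spec (Nat.zero_le _) hQ0
    · intro m' hm'
      exact Nat.le_findGreatest (hQb m' hm') hm'
  obtain ⟨m, ⟨D, S, φ, hst, rfl⟩, hmx⟩ := hmax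
  have hmx' : ∀ D' S' φ', PState_s1 G H α L D' S' φ' →
      D'.card * (Fintype.card W + 1) + S'.card ≤ D.card * (Fintype.card W + 1) + S.card :=
    fun D' S' φ' h => hmx _ ⟨D', S', φ', h, rfl⟩
  by_cases hS : S = Finset.univ
  · subst hS
    refine ⟨fun u => (φ u : Set V), fun u => hst.conn u (Finset.mem_univ _), ?_, ?_⟩
    · intro u v huv
      exact Finset.disjoint_coe.2 (hst.disj u (Finset.mem_univ _) v (Finset.mem_univ _) huv)
    · intro u v huv
      exact hst.adj u (Finset.mem_univ _) v (Finset.mem_univ _) huv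
  exfalso
  obtain ⟨w, hw⟩ : ∃ w, w ∉ S := by
    by_contra h
    push Not at h
    exact hS (Finset.eq_univ_iff_forall.2 h)
  have hWpos : 0 < Fintype.card W := Fintype.card_pos_iff.2 ⟨w⟩
  have hRc := hR _ _ _ hst
  have hsmall := hst.small
  set R := S.biUnion φ with hRdef
  set U := (D ∪ R)ᶜ with hUdef
  have hDR : Disjoint D R := by
    rw [hRdef, Finset.disjoint_biUnion_right]
    exact hst.disjD
  have hUcard : U.card + D.card + R.card = Fintype.card V := by
    rw [hUdef, Finset.card_compl, Finset.card_union_of_disjoint hDR]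
    have := Finset.card_le_univ (D ∪ R)
    rw [Finset.card_union_of_disjoint hDR] at this
    omega
  -- step 1: no sparse cut in U
  have hexpU : ∀ D' ⊆ U, D'.Nonempty → 2 * D'.card ≤ U.card →
      α / 2 * D'.card < eC G D' (U \ D') := by
    intro D' hD'U hne hcard
    by_contra hlt
    push Not at hlt
    have hDD' : Disjoint D D' := by
      rw [Finset.disjoint_left]
      intro z hz hz'
      have := hD'U hz'
      simp [hUdef, hz] at this
    have hD'R : Disjoint D' R := by
      rw [Finset.disjoint_left]
      intro z hz hz'
      have := hD'U hz
      simp [hUdef, hz'] at this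
    have hUeq : ((D ∪ D') ∪ R)ᶜ = U \ D' := by
      ext z
      simp only [hUdef, Finset.mem_compl, Finset.mem_union, Finset.mem_sdiff]
      tauto
    have hcu := Finset.card_union_of_disjoint hDD'
    have hb : (eC G (D ∪ D') ((D ∪ D') ∪ R)ᶜ : ℝ) ≤ α / 2 * (D ∪ D').card := by
      rw [hUeq, eC_union_left _ _ _ _ hDD', hcu]
      have h1 : (eC G D (U \ D') : ℝ) ≤ eC G D U := by
        exact_mod_cast eC_mono G Finset.sdiff_subset
      have h2 := hst.bdry
      push_cast
      linarith
    have hpos := Finset.card_pos.2 hne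
    have hsm := small_of_bdry G d hd α hα hG (D ∪ D') R B
      (Finset.disjoint_union_left.2 ⟨hDR, hD'R⟩) hRc hB hb (by omega)
    have := hmx' (D ∪ D') S φ ⟨hst.conn, hst.disj, hst.adj, ?_, hst.size, hb, hsm⟩
    · rw [hcu] at this
      nlinarith
    · intro u hu
      refine Finset.disjoint_union_left.2 ⟨hst.disjD u hu, ?_⟩
      exact hD'R.mono_right (Finset.subset_biUnion_of_mem φ hu)
  -- step 2: every branch set has a neighbour in U
  have hnb : ∀ u ∈ S, ∃ y ∈ U, ∃ a ∈ φ u, G.Adj a y := by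
    intro u hu
    by_contra hno
    push Not at hno
    have hRe : R = (S.erase u).biUnion φ ∪ φ u := by
      conv_lhs => rw [hRdef, ← Finset.insert_erase hu]
      rw [Finset.biUnion_insert, Finset.union_comm]
    have hd2 : Disjoint (φ u) ((S.erase u).biUnion φ) := by
      rw [Finset.disjoint_biUnion_right]
      intro v hv
      rw [Finset.mem_erase] at hv
      exact hst.disj u hu v hv.2 hv.1.symm
    have hcu := Finset.card_union_of_disjoint (hst.disjD u hu)
    have hUeq : ((D ∪ φ u) ∪ (S.erase u).biUnion φ)ᶜ = U := by
      rw [hUdef, hRe, Finset.union_assoc, Finset.union_comm (φ u)]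
    have hb : (eC G (D ∪ φ u) ((D ∪ φ u) ∪ (S.erase u).biUnion φ)ᶜ : ℝ) ≤
        α / 2 * (D ∪ φ u).card := by
      rw [hUeq, eC_union_left _ _ _ _ (hst.disjD u hu), hcu,
        eC_zero G (A := φ u) (B := U) (fun a ha b hb => hno b hb a ha)]
      have h2 := hst.bdry
      push_cast
      have : 0 ≤ α / 2 * ((φ u).card : ℝ) := by positivity
      linarith
    have hsub : (S.erase u).biUnion φ ⊆ R := by rw [hRe]; exact Finset.subset_union_left
    have hsub2 : φ u ⊆ R := by rw [hRe]; exact Finset.subset_union_right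
    have hc2 := Finset.card_le_card hsub2
    have hdd : Disjoint (D ∪ φ u) ((S.erase u).biUnion φ) :=
      Finset.disjoint_union_left.2 ⟨hDR.mono_right hsub, hd2⟩
    have hsm := small_of_bdry G d hd α hα hG (D ∪ φ u) _ B
      hdd ((Finset.card_le_card hsub).trans hRc) hB hb (by omega)
    have hne : (φ u).Nonempty := by
      obtain ⟨x⟩ := (hst.conn u hu).nonempty
      exact ⟨x.1, x.2⟩
    have hpos := Finset.card_pos.2 hne
    have := hmx' (D ∪ φ u) (S.erase u) φ
      ⟨fun v hv => hst.conn v (Finset.mem_of_mem_erase hv),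
       fun v hv v' hv' => hst.disj v (Finset.mem_of_mem_erase hv) v' (Finset.mem_of_mem_erase hv'),
       fun v hv v' hv' => hst.adj v (Finset.mem_of_mem_erase hv) v' (Finset.mem_of_mem_erase hv'),
       fun v hv => hdd.mono_right (Finset.subset_biUnion_of_mem φ hv),
       fun v hv => hst.size v (Finset.mem_of_mem_erase hv), hb, hsm⟩
    rw [hcu, Finset.card_erase_of_mem hu] at this
    have hSp := Finset.card_pos.2 ⟨u, hu⟩
    have h5 : S.card - 1 + 1 = S.card := by omega
    nlinarith
  -- step 3: embed w
  have hUne : U.Nonempty := by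
    rw [← Finset.card_pos]; omega
  obtain ⟨x, hx⟩ := hUne
  have : Nonempty V := ⟨x⟩
  choose! f hfU g hg hadj using hnb
  set T := S.filter fun u => H.Adj w u with hT
  obtain ⟨P, hPU, hxP, hfP, hPc, hPcard⟩ := star_set G U L (hL U hexpU) x hx T f
    (fun u hu => hfU u (Finset.mem_filter.1 hu).1)
  have hTd : T.card ≤ H.degree w := by
    rw [← SimpleGraph.card_neighborFinset_eq_degree]
    apply Finset.card_le_card
    intro u hu
    simpa using (Finset.mem_filter.1 hu).2
  have hPR : ∀ u ∈ S, Disjoint P (φ u) := by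
    intro u hu
    rw [Finset.disjoint_left]
    intro z hz hz'
    have h1 := hPU hz
    have h2 : z ∈ R := Finset.mem_biUnion.2 ⟨u, hu, hz'⟩
    simp [hUdef, h2] at h1
  have hPD : Disjoint D P := by
    rw [Finset.disjoint_left]
    intro z hz hz'
    have h1 := hPU hz'
    simp [hUdef, hz] at h1
  let ψ := Function.update φ w P
  have hψw : ψ w = P := Function.update_self _ _ _
  have hψ : ∀ u ∈ S, ψ u = φ u := by
    intro u hu
    have hne : u ≠ w := by rintro rfl; exact hw hu
    exact Function.update_of_ne hne _ _
  have hst' : PState_s1 G H α L D (insert w S) ψ := by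
    constructor
    · intro u hu
      rcases Finset.mem_insert.1 hu with rfl | hu
      · rw [hψw]; exact hPc
      · rw [hψ u hu]; exact hst.conn u hu
    · intro u hu v hv huv
      rw [Finset.mem_insert] at hu hv
      rcases hu with rfl | hu <;> rcases hv with rfl | hv
      · exact absurd rfl huv
      · rw [hψw, hψ v hv]; exact hPR v hv
      · rw [hψw, hψ u hu]; exact (hPR u hu).symm
      · rw [hψ u hu, hψ v hv]; exact hst.disj u hu v hv huv
    · intro u hu v hv huv
      rw [Finset.mem_insert] at hu hv
      rcases hu with rfl | hu <;> rcases hv with rfl | hv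
      · exact absurd huv (H.loopless.irrefl _)
      · rw [hψw, hψ v hv]
        exact ⟨f v, hfP v (Finset.mem_filter.2 ⟨hv, huv⟩), g v, hg v hv, (hadj v hv).symm⟩
      · rw [hψw, hψ u hu]
        exact ⟨g u, hg u hu, f u, hfP u (Finset.mem_filter.2 ⟨hu, huv.symm⟩), hadj u hu⟩
      · rw [hψ u hu, hψ v hv]; exact hst.adj u hu v hv huv
    · intro u hu
      rcases Finset.mem_insert.1 hu with rfl | hu
      · rw [hψw]; exact hPD
      · rw [hψ u hu]; exact hst.disjD u hu
    · intro u hu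
      rcases Finset.mem_insert.1 hu with rfl | hu
      · rw [hψw]; exact hPcard.trans (Nat.mul_le_mul_right L (by omega))
      · rw [hψ u hu]; exact hst.size u hu
    · refine le_trans ?_ hst.bdry
      have : R ⊆ (insert w S).biUnion ψ := by
        intro z hz
        obtain ⟨u, hu, hz⟩ := Finset.mem_biUnion.1 hz
        exact Finset.mem_biUnion.2 ⟨u, Finset.mem_insert_of_mem hu, by rw [hψ u hu]; exact hz⟩
      exact_mod_cast eC_mono G (Finset.compl_subset_compl.2 (Finset.union_subset_union_right this))
    · exact hsmall
  have := hmx' _ _ _ hst'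
  rw [Finset.card_insert_of_notMem hw] at this
  omega

theorem exists_radius_s1 (n d : ℕ) (hn : 2 ≤ n) (hd1 : 1 ≤ d) (α : ℝ) (hα : 0 < α) (hα1 : α < 1) :
    ∃ r : ℕ, (n : ℝ) ≤ (1 + α / (2 * d)) ^ r ∧ (r : ℝ) ≤ 8 * d * Real.logb 2 n / α := by
  have hd' : (1:ℝ) ≤ d := by exact_mod_cast hd1
  have hn' : (2:ℝ) ≤ n := by exact_mod_cast hn
  have hlog : 1 ≤ Real.logb 2 n := by
    rw [Real.le_logb_iff_rpow_le (by norm_num) (by linarith)]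
    simpa using hn'
  set β := α / (2 * d) with hβ
  have hβ0 : 0 < β := by positivity
  have hβ1 : β ≤ 1 := by
    rw [hβ, div_le_one (by positivity)]; linarith
  set m := ⌈1 / β⌉₊
  set k := ⌈Real.logb 2 n⌉₊
  have hm1 : 1 / β ≤ m := Nat.le_ceil _
  have hm2 : (m : ℝ) ≤ 2 / β := by
    have h := (Nat.ceil_lt_add_one (show 0 ≤ 1 / β by positivity)).le
    have : 1 ≤ 1 / β := by rw [le_div_iff₀ hβ0]; linarith
    have h2 : 2 / β = 1 / β + 1 / β := by ring
    linarith
  have hk1 : Real.logb 2 n ≤ k := Nat.le_ceil _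
  have hk2 : (k : ℝ) ≤ 2 * Real.logb 2 n := by
    have h := (Nat.ceil_lt_add_one (show 0 ≤ Real.logb 2 n by linarith)).le
    linarith
  refine ⟨m * k, ?_, ?_⟩
  · have h1 : (2:ℝ) ≤ (1 + β) ^ m := by
      have := one_add_mul_le_pow (show (-2:ℝ) ≤ β by linarith) m
      have h2 : 1 ≤ m * β := by rwa [div_le_iff₀ hβ0] at hm1
      linarith
    rw [pow_mul]
    refine le_trans ?_ (pow_le_pow_left₀ (by norm_num) h1 k)
    rw [Real.logb_le_iff_le_rpow (by norm_num) (by linarith)] at hk1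
    exact_mod_cast hk1
  · push_cast
    calc (m * k : ℝ) ≤ (2 / β) * (2 * Real.logb 2 n) := by gcongr
      _ = 8 * d * Real.logb 2 n / α := by
        rw [hβ]; field_simp; ring

/-- There is a universal constant `c̃* > 0` such that for every real `0 < α < 1`, every
integer `d ≥ 1`, and every `n`-vertex `α`-expander `G` (`n ≥ 2`) whose maximum vertex
degree is at most `d`, every graph `H` whose size is at most
`(n / (c̃* · (log₂ n)²)) · (α³/d⁵)` is a minor of `G`. -/
theorem large_minors_in_expanders_simple :
    ∃ c : ℝ, 0 < c ∧
      ∀ (V : Type) [Fintype V] (G : SimpleGraph V) (α : ℝ) (d : ℕ),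
        0 < α → α < 1 → 1 ≤ d →
        2 ≤ Nat.card V →
        IsExpander G α → DegLE G d →
        ∀ (W : Type) [Fintype W] (H : SimpleGraph W),
          (gsize H : ℝ) ≤
            (Nat.card V : ℝ) / (c * (Real.logb 2 (Nat.card V)) ^ 2) * (α ^ 3 / d ^ 5) →
          IsMinor H G := by
  classical
  refine ⟨1000, by norm_num, ?_⟩
  intro V _ G α d hα hα1 hd1 hn hG hd W _ H hsize
  rw [Nat.card_eq_fintype_card] at hn hsize
  obtain ⟨r, hr1, hr2⟩ := exists_radius_s1 (Fintype.card V) d hn hd1 α hα hα1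
  have hd' : (1:ℝ) ≤ d := by exact_mod_cast hd1
  have hn' : (2:ℝ) ≤ Fintype.card V := by exact_mod_cast hn
  have hlog : 1 ≤ Real.logb 2 (Fintype.card V) := by
    rw [Real.le_logb_iff_rpow_le (by norm_num) (by linarith)]
    simpa using hn'
  refine core_s1 G H d hd hd1 (by omega) α hα hα1 hG (2 * r + 1) ?_
    (2 * gsize H * (2 * r + 1)) ?_ ?_
  · intro U hU x hx y hy
    obtain ⟨p, hp, hp'⟩ := short_walk G d hd hd1 α hα r hr1 U hU x hx y hy
    exact ⟨p, by omega, hp'⟩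
  · rw [← Finset.sum_mul]
    apply Nat.mul_le_mul_right
    rw [Finset.sum_add_distrib, SimpleGraph.sum_degrees_eq_twice_card_edges]
    unfold gsize
    have h1 : Nat.card H.edgeSet = H.edgeFinset.card := by
      rw [Nat.card_eq_fintype_card, SimpleGraph.edgeFinset_card]
    rw [h1, Nat.card_eq_fintype_card]
    simp
    omega
  · push_cast
    set n : ℝ := (Fintype.card V : ℝ)
    set l := Real.logb 2 n
    set N : ℝ := (gsize H : ℝ)
    have hN0 : 0 ≤ N := Nat.cast_nonneg _
    have hL : (2 * r + 1 : ℝ) ≤ 17 * d * l / α := by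
      have h1 : 1 ≤ d * l / α := by
        rw [le_div_iff₀ hα]; nlinarith
      have h2 : 17 * d * l / α = 16 * d * l / α + d * l / α := by ring
      have h3 : 16 * d * l / α = 2 * (8 * d * l / α) := by ring
      linarith
    have hN : N ≤ n * α ^ 2 / (1000 * d ^ 2 * l) := by
      refine hsize.trans ?_
      have e : n / (1000 * l ^ 2) * (α ^ 3 / d ^ 5) =
          n * α ^ 2 / (1000 * d ^ 2 * l) * (α / (l * d ^ 3)) := by
        field_simp
      rw [e]
      apply mul_le_of_le_one_right (by positivity)
      rw [div_le_one (by positivity)]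
      have : (1:ℝ) ≤ d ^ 3 := one_le_pow₀ hd'
      nlinarith
    calc 16 * d * (2 * N * (2 * r + 1)) ≤
          16 * d * (2 * (n * α ^ 2 / (1000 * d ^ 2 * l)) * (17 * d * l / α)) := by gcongr
      _ = (544 / 1000) * (α * n) := by field_simp; ring
      _ < α * n := by
        have : 0 < α * n := by positivity
        linarith
end

section
/- For every ε > 0 there exists a constant c_ε > 0 (depending only on ε) such that the probability that the random graph G ~ G(n, (1+ε)/n) contains every graph of size at most c_ε · n / log₂ n as a minor tends to 1 as n → ∞. -/
open Classical in
/-- The probability, under the Erdős–Rényi random graph model `G(n,p)` (each of the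
`C(n,2)` possible edges present independently with probability `p`), of the set of
graphs on `Fin n` satisfying the predicate `P`. -/
noncomputable def erProb (n : ℕ) (p : ℝ) (P : SimpleGraph (Fin n) → Prop) : ℝ :=
  ∑ G ∈ Finset.univ.filter P,
    p ^ (Nat.card G.edgeSet) * (1 - p) ^ (n.choose 2 - Nat.card G.edgeSet)

/-- Expectation of `F` of a random subset of `E`. -/
noncomputable def Ex {ι : Type*} (p : ℝ) (E : Finset ι) (F : Finset ι → ℝ) : ℝ :=
  ∑ A ∈ E.powerset, p ^ A.card * (1 - p) ^ (E.card - A.card) * F A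

lemma Ex_empty {ι : Type*} (p : ℝ) (F : Finset ι → ℝ) : Ex p ∅ F = F ∅ := by
  simp [Ex]

lemma Ex_insert {ι : Type*} [DecidableEq ι] (p : ℝ) (E : Finset ι) (e : ι) (he : e ∉ E)
    (F : Finset ι → ℝ) :
    Ex p (insert e E) F = p * Ex p E (fun A => F (insert e A)) + (1 - p) * Ex p E F := by
  unfold Ex
  rw [Finset.sum_powerset_insert he, add_comm, Finset.mul_sum, Finset.mul_sum]
  congr 1
  · refine Finset.sum_congr rfl fun A hA => ?_
    have hAE := Finset.mem_powerset.1 hA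
    have : e ∉ A := fun h => he (hAE h)
    rw [Finset.card_insert_of_notMem this, Finset.card_insert_of_notMem he,
      Nat.add_sub_add_right]
    ring
  · refine Finset.sum_congr rfl fun A hA => ?_
    have hAE := Finset.card_le_card (Finset.mem_powerset.1 hA)
    rw [Finset.card_insert_of_notMem he, Nat.sub_add_comm hAE]
    ring

lemma Ex_mono {ι : Type*} {p : ℝ} (h0 : 0 ≤ p) (h1 : p ≤ 1) (E : Finset ι)
    {F F' : Finset ι → ℝ} (h : ∀ A, A ⊆ E → F A ≤ F' A) : Ex p E F ≤ Ex p E F' := by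
  unfold Ex
  refine Finset.sum_le_sum fun A hA => ?_
  have : 0 ≤ 1 - p := by linarith
  exact mul_le_mul_of_nonneg_left (h A (Finset.mem_powerset.1 hA)) (by positivity)

lemma Ex_const {ι : Type*} (p : ℝ) (E : Finset ι) (c : ℝ) :
    Ex p E (fun _ => c) = c := by
  classical
  induction E using Finset.induction_on with
  | empty => simp [Ex_empty]
  | insert e E he ih => rw [Ex_insert _ _ _ he, ih]; ring

lemma Ex_add {ι : Type*} (p : ℝ) (E : Finset ι) (F F' : Finset ι → ℝ) :
    Ex p E (fun A => F A + F' A) = Ex p E F + Ex p E F' := by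
  simp [Ex, mul_add, Finset.sum_add_distrib]

lemma Ex_sum {ι κ : Type*} (p : ℝ) (E : Finset ι) (s : Finset κ) (F : κ → Finset ι → ℝ) :
    Ex p E (fun A => ∑ k ∈ s, F k A) = ∑ k ∈ s, Ex p E (F k) := by
  simp only [Ex, Finset.mul_sum]
  rw [Finset.sum_comm]

lemma Ex_lin {ι : Type*} (p : ℝ) (E : Finset ι) (a b : ℝ) (F F' : Finset ι → ℝ) :
    Ex p E (fun A => a * F A + b * F' A) = a * Ex p E F + b * Ex p E F' := by
  simp only [Ex, Finset.mul_sum, ← Finset.sum_add_distrib]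
  exact Finset.sum_congr rfl fun A _ => by ring

/-- Sprinkling. -/
lemma Ex_union {ι : Type*} [DecidableEq ι] (p p1 p2 : ℝ) (hp : 1 - p = (1 - p1) * (1 - p2))
    (E : Finset ι) (F : Finset ι → ℝ) :
    Ex p E F = Ex p1 E (fun A => Ex p2 E (fun B => F (A ∪ B))) := by
  induction E using Finset.induction_on generalizing F with
  | empty => simp [Ex_empty]
  | insert e E he ih =>
    have hp' : p = p1 + p2 - p1 * p2 := by linarith
    rw [Ex_insert _ _ _ he, Ex_insert _ _ _ he]
    simp only [Ex_insert _ _ _ he, Ex_lin]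
    have h1 : ∀ A B : Finset ι, insert e A ∪ insert e B = insert e (A ∪ B) := by
      intro A B; ext; simp
    have h2 : ∀ A B : Finset ι, insert e A ∪ B = insert e (A ∪ B) := by
      intro A B; ext; simp
    have h3 : ∀ A B : Finset ι, A ∪ insert e B = insert e (A ∪ B) := by
      intro A B; ext; simp
    simp only [h1, h2, h3]
    rw [ih, ih]
    rw [hp']; ring

lemma Ex_avoid {ι : Type*} [DecidableEq ι] (p : ℝ) (E Q : Finset ι) (hQ : Q ⊆ E) :
    Ex p E (fun A => if Disjoint Q A then 1 else 0) = (1 - p) ^ Q.card := by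
  induction E using Finset.induction_on generalizing Q with
  | empty => 
    have : Q = ∅ := Finset.subset_empty.1 hQ
    simp [Ex_empty, this]
  | insert e E he ih =>
    rw [Ex_insert _ _ _ he]
    by_cases heQ : e ∈ Q
    · have h1 : Q.erase e ⊆ E := by
        intro x hx
        have := hQ (Finset.mem_of_mem_erase hx)
        rcases Finset.mem_insert.1 this with h | h
        · exact absurd h (Finset.ne_of_mem_erase hx)
        · exact h
      have h2 : Ex p E (fun A => if Disjoint Q A then (1:ℝ) else 0) =
          Ex p E (fun A => if Disjoint (Q.erase e) A then (1:ℝ) else 0) := by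
        unfold Ex
        refine Finset.sum_congr rfl fun A hA => ?_
        have hAE : e ∉ A := fun h => he (Finset.mem_powerset.1 hA h)
        have : Disjoint Q A ↔ Disjoint (Q.erase e) A := by
          rw [← Finset.insert_erase heQ, Finset.disjoint_insert_left]
          simp [hAE]
        simp [this]
      have h3 : ∀ A : Finset ι, ¬ Disjoint Q (insert e A) := fun A h =>
        Finset.disjoint_left.1 h heQ (Finset.mem_insert_self _ _)
      rw [h2, ih _ h1]
      simp only [h3, if_false, Ex_const]
      rw [← Finset.card_erase_add_one heQ]
      ring
    · have h1 : Q ⊆ E := fun x hx => by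
        rcases Finset.mem_insert.1 (hQ hx) with h | h
        · exact absurd (h ▸ hx) heQ
        · exact h
      have h3 : ∀ A : Finset ι, Disjoint Q (insert e A) ↔ Disjoint Q A := fun A => by
        rw [Finset.disjoint_insert_right]; simp [heQ]
      simp only [h3]
      rw [ih _ h1]; ring

open Classical in
lemma erProb_eq_Ex (n : ℕ) (p : ℝ) (P : SimpleGraph (Fin n) → Prop) :
    erProb n p P = Ex p (⊤ : SimpleGraph (Fin n)).edgeFinset
      (fun A => if P (SimpleGraph.fromEdgeSet (A : Set (Sym2 (Fin n)))) then 1 else 0) := by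
  unfold erProb Ex
  rw [Finset.sum_filter]
  refine Finset.sum_bij' (fun G _ => G.edgeFinset) (fun A _ => SimpleGraph.fromEdgeSet (A : Set (Sym2 (Fin n)))) ?_ ?_ ?_ ?_ ?_
  · intro G _
    simp only [Finset.mem_powerset]
    exact SimpleGraph.edgeFinset_mono le_top
  · intro A _; simp
  · intro G _; simp
  · intro A hA
    have hA' := Finset.mem_powerset.1 hA
    ext e
    simp only [SimpleGraph.mem_edgeFinset, SimpleGraph.edgeSet_fromEdgeSet, Set.mem_sdiff, Finset.mem_coe]
    constructor
    · exact fun h => h.1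
    · intro h
      have := hA' h
      simp only [SimpleGraph.mem_edgeFinset] at this
      refine ⟨h, fun hd => SimpleGraph.not_isDiag_of_mem_edgeSet _ this hd⟩
  · intro G _
    have h1 : (⊤ : SimpleGraph (Fin n)).edgeFinset.card = n.choose 2 := by
      rw [SimpleGraph.card_edgeFinset_top_eq_card_choose_two, Fintype.card_fin]
    have h2 : Nat.card G.edgeSet = G.edgeFinset.card := by
      rw [Nat.card_eq_fintype_card, SimpleGraph.edgeFinset_card]
    rw [h1, h2]
    simp
/-- `A` contains a path on `L` vertices. -/
def HasPath {V : Type*} (L : ℕ) (A : Finset (Sym2 V)) : Prop :=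
  ∃ l : List V, l.Nodup ∧ l.IsChain (fun x y => s(x, y) ∈ A) ∧ L ≤ l.length

open Classical in
/-- Depth first search, analysed with a supermartingale. -/
lemma dfs_aux {V : Type*} [Fintype V] {p a ρ B : ℝ} (h0 : 0 ≤ p) (h1 : p ≤ 1)
    (ha0 : 0 ≤ a) (ha1 : a ≤ 1) (hρ : 1 ≤ ρ) (hB : 0 < B) (hstep : p * a + (1 - p) * ρ ≤ 1)
    (s0 L : ℕ) (hn : s0 + L < Fintype.card V)
    (hend : B ≤ a ^ (s0 + L) * ρ ^ (s0 * (Fintype.card V - s0 - L))) :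
    ∀ (k : ℕ) (E A Z : Finset (Sym2 V)) (S T : Finset V) (U : List V),
      E.card + 2 * T.card + U.length ≤ k →
      U.Nodup → Disjoint S T → (∀ u ∈ U, u ∉ S) → (∀ u ∈ U, u ∉ T) →
      S.card + U.length + T.card = Fintype.card V →
      S.card ≤ s0 → U.IsChain (fun x y => s(x, y) ∈ A) →
      A.card ≤ S.card + U.length →
      (∀ x ∈ S, ∀ y ∈ T, s(x, y) ∈ Z) →
      (∀ x ∈ U, ∀ y ∈ T, s(x, y) ∈ E ∨ s(x, y) ∈ Z) →
      (∀ x ∈ T, ∀ y ∈ T, x ≠ y → s(x, y) ∈ E) →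
      Disjoint E A → Disjoint E Z →
      Ex p E (fun C => if HasPath L (A ∪ C) then 0 else 1) ≤ a ^ A.card * ρ ^ Z.card / B := by
  intro k
  induction k with
  | zero =>
    intro E A Z S T U hk _ _ _ _ hcard hS
    omega
  | succ k ih =>
    intro E A Z S T U hk hnd hST hUS hUT hcard hS hch hA hSTZ hUTZ hTT hEA hEZ
    have hpos : 0 ≤ a ^ A.card * ρ ^ Z.card / B := by positivity
    by_cases hL : L ≤ U.length
    · have : ∀ C, HasPath L (A ∪ C) := fun C =>
        ⟨U, hnd, hch.imp fun x y h => Finset.mem_union_left _ h, hL⟩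
      simp only [this, if_true, Ex_const]
      exact hpos
    push Not at hL
    by_cases hs : S.card = s0
    · have hZ : s0 * (Fintype.card V - s0 - L) ≤ Z.card := by
        have h1 : (S ×ˢ T).card ≤ Z.card := by
          refine Finset.card_le_card_of_injOn (fun x => s(x.1, x.2)) ?_ ?_
          · rintro ⟨x, y⟩ hxy
            simp only [Finset.coe_product, Set.mem_prod, Finset.mem_coe] at hxy
            exact hSTZ x hxy.1 y hxy.2
          · rintro ⟨x, y⟩ hxy ⟨x', y'⟩ hxy' h
            simp only [Finset.coe_product, Set.mem_prod, Finset.mem_coe] at hxy hxy'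
            simp only [Sym2.eq_iff] at h
            rcases h with h | h
            · simp [h.1, h.2]
            · exact absurd hxy.1 (Finset.disjoint_right.1 hST (h.1 ▸ hxy'.2))
        rw [Finset.card_product, hs] at h1
        refine le_trans (Nat.mul_le_mul_left _ ?_) h1
        omega
      have h2 : B ≤ a ^ A.card * ρ ^ Z.card := by
        refine hend.trans ?_
        refine mul_le_mul (pow_le_pow_of_le_one ha0 ha1 (by omega))
          (pow_le_pow_right₀ hρ hZ) (by positivity) (by positivity)
      calc _ ≤ Ex p E (fun _ => 1) := Ex_mono h0 h1 _ fun C _ => by split_ifs <;> norm_num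
        _ = 1 := Ex_const _ _ _
        _ ≤ _ := by rw [le_div_iff₀ hB]; linarith
    have hs' : S.card < s0 := lt_of_le_of_ne hS hs
    cases U with
    | nil =>
      have hT : T.Nonempty := by
        rw [← Finset.card_pos]; simp at hcard; omega
      obtain ⟨t, ht⟩ := hT
      have hc := Finset.card_erase_add_one ht
      refine ih E A Z S (T.erase t) [t] ?_ (by simp) ?_ ?_ (by simp) ?_ hS (by simp) ?_ ?_ ?_ ?_ hEA hEZ
      · simp at hk ⊢; omega
      · exact hST.mono_right (Finset.erase_subset _ _)
      · intro u hu; simp at hu; subst hu; exact Finset.disjoint_right.1 hST ht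
      · simp at hcard ⊢; omega
      · simp at hA ⊢; omega
      · intro x hx y hy; exact hSTZ x hx y (Finset.mem_of_mem_erase hy)
      · intro x hx y hy; simp at hx; subst hx
        exact Or.inl (hTT _ ht y (Finset.mem_of_mem_erase hy) (Finset.ne_of_mem_erase hy).symm)
      · intro x hx y hy
        exact hTT x (Finset.mem_of_mem_erase hx) y (Finset.mem_of_mem_erase hy)
    | cons u us =>
      have huT : u ∉ T := hUT u (by simp)
      by_cases hq : ∃ t ∈ T, s(u, t) ∈ E
      · obtain ⟨t, ht, he⟩ := hq
        have hc := Finset.card_erase_add_one ht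
        have hEc := Finset.card_erase_add_one he
        have heA : s(u, t) ∉ A := Finset.disjoint_left.1 hEA he
        have heZ : s(u, t) ∉ Z := Finset.disjoint_left.1 hEZ he
        have hTT' : ∀ x ∈ T, ∀ y ∈ T, x ≠ y → s(x, y) ∈ E.erase s(u, t) := by
          intro x hx y hy hxy
          refine Finset.mem_erase.2 ⟨?_, hTT x hx y hy hxy⟩
          intro h
          rcases Sym2.eq_iff.1 h with h | h
          · exact huT (h.1 ▸ hx)
          · exact huT (h.2 ▸ hy)
        have hyes : Ex p (E.erase s(u, t)) (fun C => if HasPath L (insert s(u, t) A ∪ C) then 0 else 1)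
            ≤ a ^ (insert s(u, t) A).card * ρ ^ Z.card / B := by
          refine ih _ _ Z S (T.erase t) (t :: u :: us) ?_ ?_ ?_ ?_ ?_ ?_ hS ?_ ?_ ?_ ?_ ?_ ?_ ?_
          · simp at hk ⊢; omega
          · rw [List.nodup_cons]; exact ⟨fun h => hUT t h ht, hnd⟩
          · exact hST.mono_right (Finset.erase_subset _ _)
          · intro x hx
            rcases List.mem_cons.1 hx with h | h
            · subst h; exact Finset.disjoint_right.1 hST ht
            · exact hUS x h
          · intro x hx
            rcases List.mem_cons.1 hx with h | h
            · subst h; simp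
            · exact fun h' => hUT x h (Finset.mem_of_mem_erase h')
          · simp at hcard ⊢; omega
          · rw [List.isChain_cons_cons]
            refine ⟨by rw [Sym2.eq_swap]; exact Finset.mem_insert_self _ _, 
              hch.imp fun x y h => Finset.mem_insert_of_mem h⟩
          · rw [Finset.card_insert_of_notMem heA]; simp at hA ⊢; omega
          · intro x hx y hy; exact hSTZ x hx y (Finset.mem_of_mem_erase hy)
          · intro x hx y hy
            have hyT := Finset.mem_of_mem_erase hy
            have hyt := Finset.ne_of_mem_erase hy
            rcases List.mem_cons.1 hx with h | h
            · subst h; exact Or.inl (hTT' _ ht y hyT hyt.symm)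
            · rcases hUTZ x h y hyT with h' | h'
              · refine Or.inl (Finset.mem_erase.2 ⟨?_, h'⟩)
                intro h''
                rcases Sym2.eq_iff.1 h'' with h3 | h3
                · exact hyt h3.2
                · exact huT (h3.2 ▸ hyT)
              · exact Or.inr h'
          · intro x hx y hy
            exact hTT' x (Finset.mem_of_mem_erase hx) y (Finset.mem_of_mem_erase hy)
          · rw [Finset.disjoint_insert_right]
            exact ⟨by simp, hEA.mono_left (Finset.erase_subset _ _)⟩
          · exact hEZ.mono_left (Finset.erase_subset _ _)
        have hno : Ex p (E.erase s(u, t)) (fun C => if HasPath L (A ∪ C) then 0 else 1)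
            ≤ a ^ A.card * ρ ^ (insert s(u, t) Z).card / B := by
          refine ih _ A _ S T (u :: us) ?_ hnd hST hUS hUT hcard hS hch hA ?_ ?_ hTT' ?_ ?_
          · omega
          · intro x hx y hy; exact Finset.mem_insert_of_mem (hSTZ x hx y hy)
          · intro x hx y hy
            by_cases h' : s(x, y) = s(u, t)
            · exact Or.inr (by rw [h']; exact Finset.mem_insert_self _ _)
            · rcases hUTZ x hx y hy with h | h
              · exact Or.inl (Finset.mem_erase.2 ⟨h', h⟩)
              · exact Or.inr (Finset.mem_insert_of_mem h)
          · exact hEA.mono_left (Finset.erase_subset _ _)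
          · rw [Finset.disjoint_insert_right]
            exact ⟨by simp, hEZ.mono_left (Finset.erase_subset _ _)⟩
        have hEi : E = insert s(u, t) (E.erase s(u, t)) := (Finset.insert_erase he).symm
        rw [hEi, Ex_insert _ _ _ (by simp)]
        have heq : ∀ C, A ∪ insert s(u, t) C = insert s(u, t) A ∪ C := by
          intro C; ext; simp
        simp only [heq]
        rw [Finset.card_insert_of_notMem heA] at hyes
        rw [Finset.card_insert_of_notMem heZ] at hno
        have hp' : 0 ≤ 1 - p := by linarith
        calc _ ≤ p * (a ^ (A.card + 1) * ρ ^ Z.card / B) + (1 - p) * (a ^ A.card * ρ ^ (Z.card + 1) / B) :=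
              add_le_add (mul_le_mul_of_nonneg_left hyes h0) (mul_le_mul_of_nonneg_left hno hp')
          _ = (p * a + (1 - p) * ρ) * (a ^ A.card * ρ ^ Z.card / B) := by ring
          _ ≤ 1 * (a ^ A.card * ρ ^ Z.card / B) := mul_le_mul_of_nonneg_right hstep hpos
          _ = _ := one_mul _
      · push Not at hq
        have huS : u ∉ S := hUS u (by simp)
        rw [List.nodup_cons] at hnd
        refine ih E A Z (insert u S) T us ?_ hnd.2 ?_ ?_ ?_ ?_ ?_ ?_ ?_ ?_ ?_ hTT hEA hEZ
        · simp at hk ⊢; omega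
        · rw [Finset.disjoint_insert_left]; exact ⟨huT, hST⟩
        · intro x hx h
          rcases Finset.mem_insert.1 h with h | h
          · exact hnd.1 (h ▸ hx)
          · exact hUS x (List.mem_cons_of_mem _ hx) h
        · exact fun x hx => hUT x (List.mem_cons_of_mem _ hx)
        · rw [Finset.card_insert_of_notMem huS]; simp at hcard ⊢; omega
        · rw [Finset.card_insert_of_notMem huS]; omega
        · exact hch.tail
        · rw [Finset.card_insert_of_notMem huS]; simp at hA; omega
        · intro x hx y hy
          rcases Finset.mem_insert.1 hx with h | h
          · subst h
            exact (hUTZ _ (by simp) y hy).resolve_left (hq y hy)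
          · exact hSTZ x h y hy
        · exact fun x hx => hUTZ x (List.mem_cons_of_mem _ hx)

open Classical in
lemma dfs_bound {n : ℕ} {p a ρ B : ℝ} (h0 : 0 ≤ p) (h1 : p ≤ 1)
    (ha0 : 0 ≤ a) (ha1 : a ≤ 1) (hρ : 1 ≤ ρ) (hB : 0 < B) (hstep : p * a + (1 - p) * ρ ≤ 1)
    (s0 L : ℕ) (hn : s0 + L < n)
    (hend : B ≤ a ^ (s0 + L) * ρ ^ (s0 * (n - s0 - L))) :
    Ex p (⊤ : SimpleGraph (Fin n)).edgeFinset (fun C => if HasPath L C then 0 else 1) ≤ 1 / B := by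
  have := dfs_aux (V := Fin n) h0 h1 ha0 ha1 hρ hB hstep s0 L (by simpa using hn) (by simpa using hend)
    _ (⊤ : SimpleGraph (Fin n)).edgeFinset ∅ ∅ ∅ Finset.univ [] le_rfl (by simp) (by simp) (by simp)
    (by simp) (by simp) (by simp) (by simp) (by simp) (by simp) (by simp) (by simp) (by simp) (by simp)
  simpa using this
/-- Connectedness of the induced subgraph on a finset. -/
def CS {V : Type*} (G : SimpleGraph V) (C : Finset V) : Prop :=
  (G.induce (C : Set V)).Connected

lemma CS_singleton {V : Type*} (G : SimpleGraph V) (v : V) : CS G {v} := by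
  unfold CS
  rw [SimpleGraph.connected_iff]
  refine ⟨?_, ⟨v, by simp⟩⟩
  rintro ⟨x, hx⟩ ⟨y, hy⟩
  simp at hx hy
  subst hx; subst hy
  exact SimpleGraph.Reachable.refl _

lemma CS_union {V : Type*} [DecidableEq V] {G : SimpleGraph V} {C D : Finset V} (hC : CS G C)
    (hD : CS G D) (h : ∃ x ∈ C, x ∈ D) : CS G (C ∪ D) := by
  unfold CS at *
  rw [Finset.coe_union]
  obtain ⟨x, h1, h2⟩ := h
  exact SimpleGraph.induce_union_connected hC.preconnected hD.preconnected ⟨x, h1, h2⟩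

lemma CS_union_adj {V : Type*} [DecidableEq V] {G : SimpleGraph V} {C D : Finset V} (hC : CS G C)
    (hD : CS G D) {x y : V} (hx : x ∈ C) (hy : y ∈ D) (h : G.Adj x y) : CS G (C ∪ D) := by
  unfold CS at *
  rw [Finset.coe_union]
  exact SimpleGraph.connected_induce_union hC.preconnected hD.preconnected hx hy h

open Classical in
/-- Vertices of `R` outside `X` with a neighbour in `X`. -/
noncomputable def nbr {V : Type*} (G : SimpleGraph V) (R X : Finset V) : Finset V :=
  R.filter (fun y => y ∉ X ∧ ∃ x ∈ X, G.Adj x y)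

lemma mem_nbr {V : Type*} {G : SimpleGraph V} {R X : Finset V} {y : V} :
    y ∈ nbr G R X ↔ y ∈ R ∧ y ∉ X ∧ ∃ x ∈ X, G.Adj x y := by
  classical
  simp [nbr]

open Classical in
lemma ball {V : Type*} {G : SimpleGraph V} {R : Finset V} {b : ℕ}
    (hexp : ∀ X ⊆ R, X.Nonempty → X.card ≤ b → X.card < (nbr G R X).card)
    {x : V} (hx : x ∈ R) (j : ℕ) :
    ∃ X ⊆ R, X.Nonempty ∧ (2 ^ j ≤ X.card ∨ b ≤ X.card) ∧
      ∀ y ∈ X, ∃ C ⊆ R, x ∈ C ∧ y ∈ C ∧ C.card ≤ j + 1 ∧ CS G C := by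
  induction j with
  | zero =>
    refine ⟨{x}, by simpa using hx, by simp, Or.inl (by simp), fun y hy => ?_⟩
    simp at hy
    subst hy
    exact ⟨{y}, by simpa using hx, by simp, by simp, by simp, CS_singleton _ _⟩
  | succ j ih =>
    obtain ⟨X, hXR, hXn, hXc, hX⟩ := ih
    refine ⟨X ∪ nbr G R X, ?_, hXn.mono Finset.subset_union_left, ?_, ?_⟩
    · exact Finset.union_subset hXR fun y hy => (mem_nbr.1 hy).1
    · have hd : Disjoint X (nbr G R X) := by
        rw [Finset.disjoint_right]; intro y hy; exact (mem_nbr.1 hy).2.1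
      rw [Finset.card_union_of_disjoint hd]
      by_cases hb : b ≤ X.card
      · right; omega
      · left
        have := hexp X hXR hXn (by omega)
        rw [pow_succ]
        omega
    · intro y hy
      rcases Finset.mem_union.1 hy with hy | hy
      · obtain ⟨C, h1, h2, h3, h4, h5⟩ := hX y hy
        exact ⟨C, h1, h2, h3, by omega, h5⟩
      · obtain ⟨hyR, _, z, hz, hzy⟩ := mem_nbr.1 hy
        obtain ⟨C, h1, h2, h3, h4, h5⟩ := hX z hz
        refine ⟨C ∪ {y}, Finset.union_subset h1 (by simpa using hyR), by simp [h2], by simp, ?_, ?_⟩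
        · refine (Finset.card_union_le _ _).trans ?_
          simp; omega
        · exact CS_union_adj h5 (CS_singleton _ _) h3 (Finset.mem_singleton_self _) hzy

open Classical in
lemma connect {V : Type*} {G : SimpleGraph V} {R : Finset V} {b r : ℕ} (hr : b ≤ 2 ^ r)
    (hJ : ∀ X Y : Finset V, Disjoint X Y → b ≤ X.card → b ≤ Y.card →
      ∃ x ∈ X, ∃ y ∈ Y, G.Adj x y)
    (hexp : ∀ X ⊆ R, X.Nonempty → X.card ≤ b → X.card < (nbr G R X).card)
    {x y : V} (hx : x ∈ R) (hy : y ∈ R) :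
    ∃ C ⊆ R, x ∈ C ∧ y ∈ C ∧ C.card ≤ 2 * r + 2 ∧ CS G C := by
  obtain ⟨X, hXR, hXn, hXc, hX⟩ := ball hexp hx r
  obtain ⟨Y, hYR, hYn, hYc, hY⟩ := ball hexp hy r
  by_cases hd : Disjoint X Y
  · obtain ⟨a, ha, c, hc, hac⟩ := hJ X Y hd (by omega) (by omega)
    obtain ⟨C, h1, h2, h3, h4, h5⟩ := hX a ha
    obtain ⟨D, k1, k2, k3, k4, k5⟩ := hY c hc
    refine ⟨C ∪ D, Finset.union_subset h1 k1, by simp [h2], by simp [k2], ?_,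
      CS_union_adj h5 k5 h3 k3 hac⟩
    have := Finset.card_union_le C D
    omega
  · rw [Finset.not_disjoint_iff] at hd
    obtain ⟨a, ha, hc⟩ := hd
    obtain ⟨C, h1, h2, h3, h4, h5⟩ := hX a ha
    obtain ⟨D, k1, k2, k3, k4, k5⟩ := hY a hc
    refine ⟨C ∪ D, Finset.union_subset h1 k1, by simp [h2], by simp [k2], ?_,
      CS_union h5 k5 ⟨a, h3, k3⟩⟩
    have := Finset.card_union_le C D
    omega

open Classical in
/-- A connected set containing a prescribed set of vertices. -/
lemma connect_many {V : Type*} {G : SimpleGraph V} {R : Finset V} {b r : ℕ} (hr : b ≤ 2 ^ r)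
    (hJ : ∀ X Y : Finset V, Disjoint X Y → b ≤ X.card → b ≤ Y.card →
      ∃ x ∈ X, ∃ y ∈ Y, G.Adj x y)
    (hexp : ∀ X ⊆ R, X.Nonempty → X.card ≤ b → X.card < (nbr G R X).card)
    {x : V} (hx : x ∈ R) {ι : Type*} (s : Finset ι) (f : ι → V) (hf : ∀ i ∈ s, f i ∈ R) :
    ∃ C ⊆ R, x ∈ C ∧ (∀ i ∈ s, f i ∈ C) ∧ C.card ≤ (s.card + 1) * (2 * r + 2) ∧ CS G C := by
  induction s using Finset.induction_on with
  | empty => 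
    exact ⟨{x}, by simpa using hx, by simp, by simp, by simp, CS_singleton _ _⟩
  | insert i s hi ih =>
    obtain ⟨C, h1, h2, h3, h4, h5⟩ := ih fun j hj => hf j (Finset.mem_insert_of_mem hj)
    obtain ⟨D, k1, k2, k3, k4, k5⟩ := connect hr hJ hexp hx (hf i (Finset.mem_insert_self _ _))
    refine ⟨C ∪ D, Finset.union_subset h1 k1, by simp [h2], ?_, ?_, CS_union h5 k5 ⟨x, h2, k2⟩⟩
    · intro j hj
      rcases Finset.mem_insert.1 hj with h | h
      · subst h; exact Finset.mem_union_right _ k3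
      · exact Finset.mem_union_left _ (h3 j h)
    · have := Finset.card_union_le C D
      rw [Finset.card_insert_of_notMem hi]
      linarith

/-- State of the embedding algorithm. -/
structure EState {W V : Type*} [Fintype W] [Fintype V] [DecidableEq V] (H : SimpleGraph W)
    [DecidableRel H.Adj] (G : SimpleGraph V) (b ℓ : ℕ) (B : W → Finset V) (D : Finset V) : Prop where
  conn : ∀ w, (B w).Nonempty → CS G (B w)
  disj : ∀ u v, u ≠ v → Disjoint (B u) (B v)
  disjD : ∀ u, Disjoint (B u) D
  adj : ∀ u v, H.Adj u v → (B u).Nonempty → (B v).Nonempty → ∃ a ∈ B u, ∃ c ∈ B v, G.Adj a c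
  card : ∀ u, (B u).card ≤ (H.degree u + 1) * ℓ
  cardD : D.card ≤ b
  bd : (nbr G (Finset.univ \ Finset.univ.biUnion B) D).card ≤ D.card

open Classical in
lemma embed_step {W V : Type*} [Fintype W] [Fintype V] {H : SimpleGraph W}
    {G : SimpleGraph V} {b r : ℕ} (hb : 0 < b) (hr : b ≤ 2 ^ r) (hV : 6 * b ≤ Fintype.card V)
    (hJ : ∀ X Y : Finset V, Disjoint X Y → b ≤ X.card → b ≤ Y.card →
      ∃ x ∈ X, ∃ y ∈ Y, G.Adj x y)
    (hsize : ∑ w, (H.degree w + 1) * (2 * r + 2) ≤ b)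
    {B : W → Finset V} {D : Finset V} (hst : EState H G b (2 * r + 2) B D)
    (hnot : ∃ w, ¬ (B w).Nonempty) :
    ∃ B' D', EState H G b (2 * r + 2) B' D' ∧
      D.card * (Fintype.card W + 1) + (Finset.univ.filter fun w => (B w).Nonempty).card <
      D'.card * (Fintype.card W + 1) + (Finset.univ.filter fun w => (B' w).Nonempty).card := by
  -- large non-expanding sets do not exist
  have key : ∀ (B' : W → Finset V) (D' : Finset V), (∀ w, (B' w).card ≤ (H.degree w + 1) * (2 * r + 2)) →
      (nbr G (Finset.univ \ Finset.univ.biUnion B') D').card ≤ D'.card → D'.card ≤ 2 * b →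
      D'.card ≤ b := by
    intro B' D' h1 h2 h3
    by_contra hlt
    push Not at hlt
    set N := nbr G (Finset.univ \ Finset.univ.biUnion B') D' with hN
    have hB : (Finset.univ.biUnion B').card ≤ b :=
      (Finset.card_biUnion_le).trans ((Finset.sum_le_sum fun w _ => h1 w).trans hsize)
    set Y := Finset.univ \ (D' ∪ N ∪ Finset.univ.biUnion B') with hY
    have hYc : b ≤ Y.card := by
      have e1 := Finset.card_union_le (D' ∪ N) (Finset.univ.biUnion B')
      have e2 := Finset.card_union_le D' N
      have e3 : Fintype.card V - (D' ∪ N ∪ Finset.univ.biUnion B').card ≤ Y.card := by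
        rw [hY, ← Finset.card_univ]; exact Finset.le_card_sdiff _ _
      omega
    obtain ⟨x, hx, y, hy, hxy⟩ := hJ D' Y (by
      rw [Finset.disjoint_right]; intro y hy; simp [hY] at hy; exact hy.1) hlt.le hYc
    simp only [hY, Finset.mem_sdiff, Finset.mem_univ, true_and, Finset.mem_union, not_or] at hy
    apply hy.1.2
    rw [hN, mem_nbr]
    exact ⟨by simpa using hy.2, hy.1.1, x, hx, hxy⟩
  have hBc : (Finset.univ.biUnion B).card ≤ b :=
    (Finset.card_biUnion_le).trans ((Finset.sum_le_sum fun w _ => hst.card w).trans hsize)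
  set R : Finset V := Finset.univ \ (Finset.univ.biUnion B ∪ D) with hR
  have memR : ∀ y, y ∈ R ↔ (∀ w, y ∉ B w) ∧ y ∉ D := by
    intro y; simp [hR]
  by_cases hexp : ∀ X ⊆ R, X.Nonempty → X.card ≤ b → X.card < (nbr G R X).card
  · obtain ⟨v, hv⟩ := hnot
    have hvB : B v = ∅ := Finset.not_nonempty_iff_eq_empty.1 hv
    by_cases hdead : ∃ w, (B w).Nonempty ∧ ∀ x ∈ B w, ∀ y ∈ R, ¬ G.Adj x y
    · -- discard the branch set of `w`
      obtain ⟨w, hw, hwR⟩ := hdead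
      have hsub : ∀ u, Function.update B w ∅ u ⊆ B u := by
        intro u
        by_cases h : u = w
        · subst h; simp
        · simp [Function.update_of_ne h]
      have hdw : Disjoint D (B w) := (hst.disjD w).symm
      have hbd : (nbr G (Finset.univ \ Finset.univ.biUnion (Function.update B w ∅)) (D ∪ B w)).card
          ≤ (D ∪ B w).card := by
        refine le_trans (Finset.card_le_card ?_) (hst.bd.trans (Finset.card_le_card Finset.subset_union_left))
        intro y hy
        rw [mem_nbr] at hy ⊢
        obtain ⟨h1, h2, x, hx, hxy⟩ := hy
        simp only [Finset.mem_union, not_or] at h2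
        have hyB : ∀ u, y ∉ B u := by
          intro u
          by_cases h : u = w
          · subst h; exact h2.2
          · intro hyu
            simp only [Finset.mem_sdiff, Finset.mem_univ, true_and, Finset.mem_biUnion, not_exists] at h1
            apply h1 u
            simpa [Function.update_of_ne h] using hyu
        refine ⟨by simpa using hyB, h2.1, ?_⟩
        rcases Finset.mem_union.1 hx with hx | hx
        · exact ⟨x, hx, hxy⟩
        · exact absurd hxy (hwR x hx y ((memR y).2 ⟨hyB, h2.1⟩))
      have hcard : ∀ u, (Function.update B w ∅ u).card ≤ (H.degree u + 1) * (2 * r + 2) :=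
        fun u => (Finset.card_le_card (hsub u)).trans (hst.card u)
      have hDle : (D ∪ B w).card ≤ 2 * b := by
        have e1 := Finset.card_union_le D (B w)
        have e2 : (B w).card ≤ (Finset.univ.biUnion B).card :=
          Finset.card_le_card (Finset.subset_biUnion_of_mem B (Finset.mem_univ w))
        have := hst.cardD
        omega
      refine ⟨Function.update B w ∅, D ∪ B w, ⟨?_, ?_, ?_, ?_, hcard, key _ _ hcard hbd hDle, hbd⟩, ?_⟩
      · intro u hu
        by_cases h : u = w
        · subst h; simp at hu
        · rw [Function.update_of_ne h] at hu ⊢; exact hst.conn u hu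
      · intro u u' h
        exact (hst.disj u u' h).mono (hsub u) (hsub u')
      · intro u
        by_cases h : u = w
        · subst h; simp
        · rw [Function.update_of_ne h, Finset.disjoint_union_right]
          exact ⟨hst.disjD u, hst.disj u w h⟩
      · intro u u' huu' hu hu'
        by_cases h : u = w
        · subst h; simp at hu
        by_cases h' : u' = w
        · subst h'; simp at hu'
        rw [Function.update_of_ne h] at hu ⊢
        rw [Function.update_of_ne h'] at hu' ⊢
        exact hst.adj u u' huu' hu hu'
      · rw [Finset.card_union_of_disjoint hdw]
        have e1 : 0 < (B w).card := Finset.card_pos.2 hw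
        have e2 : (Finset.univ.filter fun w => (B w).Nonempty).card ≤ Fintype.card W :=
          Finset.card_le_univ _
        nlinarith
    · -- embed `v`
      push Not at hdead
      have hRne : R.Nonempty := by
        rw [← Finset.card_pos]
        have e1 := Finset.card_union_le (Finset.univ.biUnion B) D
        have e3 : Fintype.card V - (Finset.univ.biUnion B ∪ D).card ≤ R.card := by
          rw [hR, ← Finset.card_univ]; exact Finset.le_card_sdiff _ _
        have := hst.cardD
        omega
      obtain ⟨x0, hx0⟩ := hRne
      have : ∀ w, ∃ y ∈ R, (B w).Nonempty → ∃ x ∈ B w, G.Adj x y := by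
        intro w
        by_cases hw : (B w).Nonempty
        · obtain ⟨x, hx, y, hy, hxy⟩ := hdead w hw
          exact ⟨y, hy, fun _ => ⟨x, hx, hxy⟩⟩
        · exact ⟨x0, hx0, fun h => absurd h hw⟩
      choose f hfR hf using this
      obtain ⟨C, hCR, hxC, hfC, hCc, hCC⟩ := connect_many hr hJ hexp hx0 (H.neighborFinset v) f
        (fun i _ => hfR i)
      rw [SimpleGraph.card_neighborFinset_eq_degree] at hCc
      have hCB : ∀ u, Disjoint C (B u) := by
        intro u; rw [Finset.disjoint_left]; intro y hy; exact ((memR y).1 (hCR hy)).1 u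
      have hCD : Disjoint C D := by
        rw [Finset.disjoint_left]; intro y hy; exact ((memR y).1 (hCR hy)).2
      refine ⟨Function.update B v C, D, ⟨?_, ?_, ?_, ?_, ?_, hst.cardD, ?_⟩, ?_⟩
      · intro u hu
        by_cases h : u = v
        · subst h; simpa using hCC
        · rw [Function.update_of_ne h] at hu ⊢; exact hst.conn u hu
      · intro u u' h
        by_cases h1 : u = v
        · subst h1; rw [Function.update_self, Function.update_of_ne h.symm]; exact hCB _
        · by_cases h2 : u' = v
          · subst h2; rw [Function.update_self, Function.update_of_ne h1]; exact (hCB _).symm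
          · rw [Function.update_of_ne h1, Function.update_of_ne h2]; exact hst.disj u u' h
      · intro u
        by_cases h1 : u = v
        · subst h1; rw [Function.update_self]; exact hCD
        · rw [Function.update_of_ne h1]; exact hst.disjD u
      · intro u u' huu' hu hu'
        by_cases h1 : u = v
        · subst h1
          rw [Function.update_self]
          rw [Function.update_of_ne huu'.ne.symm] at hu' ⊢
          obtain ⟨x, hx, hxy⟩ := hf u' hu'
          exact ⟨f u', hfC u' (by simpa using huu'), x, hx, hxy.symm⟩
        · by_cases h2 : u' = v
          · subst h2
            rw [Function.update_self]
            rw [Function.update_of_ne h1] at hu ⊢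
            obtain ⟨x, hx, hxy⟩ := hf u hu
            exact ⟨x, hx, f u, hfC u (by simpa using huu'.symm), hxy⟩
          · rw [Function.update_of_ne h1] at hu ⊢
            rw [Function.update_of_ne h2] at hu' ⊢
            exact hst.adj u u' huu' hu hu'
      · intro u
        by_cases h1 : u = v
        · subst h1; rw [Function.update_self]; exact hCc
        · rw [Function.update_of_ne h1]; exact hst.card u
      · refine le_trans (Finset.card_le_card ?_) hst.bd
        intro y hy
        rw [mem_nbr] at hy ⊢
        refine ⟨?_, hy.2⟩
        have h1 := hy.1
        simp only [Finset.mem_sdiff, Finset.mem_univ, true_and, Finset.mem_biUnion, not_exists] at h1 ⊢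
        intro u hu
        by_cases h : u = v
        · subst h; rw [hvB] at hu; simp at hu
        · exact h1 u (by rwa [Function.update_of_ne h])
      · refine Nat.add_lt_add_left (Finset.card_lt_card ?_) _
        rw [Finset.ssubset_iff_of_subset]
        · exact ⟨v, by simpa using ⟨x0, hxC⟩, by simp [hvB]⟩
        · intro u hu
          simp only [Finset.mem_filter, Finset.mem_univ, true_and] at hu ⊢
          by_cases h : u = v
          · subst h; exact absurd hu hv
          · rwa [Function.update_of_ne h]
  · -- enlarge `D`
    push Not at hexp
    obtain ⟨X, hXR, hXn, hXb, hX⟩ := hexp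
    have hDX : Disjoint D X := by
      rw [Finset.disjoint_right]; intro y hy; exact ((memR y).1 (hXR hy)).2
    have hbd : (nbr G (Finset.univ \ Finset.univ.biUnion B) (D ∪ X)).card ≤ (D ∪ X).card := by
      rw [Finset.card_union_of_disjoint hDX]
      refine le_trans (le_trans (Finset.card_le_card ?_) (Finset.card_union_le _ _)) (add_le_add hst.bd hX)
      intro y hy
      rw [mem_nbr] at hy
      obtain ⟨h1, h2, x, hx, hxy⟩ := hy
      simp only [Finset.mem_union, not_or] at h2
      rcases Finset.mem_union.1 hx with hx | hx
      · exact Finset.mem_union_left _ (mem_nbr.2 ⟨h1, h2.1, x, hx, hxy⟩)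
      · refine Finset.mem_union_right _ (mem_nbr.2 ⟨?_, h2.2, x, hx, hxy⟩)
        rw [memR]
        exact ⟨by simpa using h1, h2.1⟩
    refine ⟨B, D ∪ X, ⟨hst.conn, hst.disj, ?_, hst.adj, hst.card, key _ _ hst.card hbd ?_, hbd⟩, ?_⟩
    · intro u
      rw [Finset.disjoint_union_right]
      refine ⟨hst.disjD u, ?_⟩
      rw [Finset.disjoint_right]; intro y hy; exact ((memR y).1 (hXR hy)).1 u
    · have := Finset.card_union_le D X
      have := hst.cardD
      omega
    · rw [Finset.card_union_of_disjoint hDX]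
      have := Finset.card_pos.2 hXn
      nlinarith

open Classical in
theorem joined_minor {W V : Type*} [Fintype W] [Fintype V] {H : SimpleGraph W}
    {G : SimpleGraph V} {b r : ℕ} (hb : 0 < b) (hr : b ≤ 2 ^ r) (hV : 6 * b ≤ Fintype.card V)
    (hJ : ∀ X Y : Finset V, Disjoint X Y → b ≤ X.card → b ≤ Y.card →
      ∃ x ∈ X, ∃ y ∈ Y, G.Adj x y)
    (hsize : ∑ w, (H.degree w + 1) * (2 * r + 2) ≤ b) : IsMinor H G := by
  have main : ∃ B D, EState H G b (2 * r + 2) B D ∧ ∀ w, (B w).Nonempty := by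
    by_contra hcon
    push Not at hcon
    have : ∀ k : ℕ, ∃ B D, EState H G b (2 * r + 2) B D ∧
        k ≤ D.card * (Fintype.card W + 1) + (Finset.univ.filter fun w => (B w).Nonempty).card := by
      intro k
      induction k with
      | zero =>
        refine ⟨fun _ => ∅, ∅, ⟨by simp, by simp, by simp, by simp, by simp, by simp, ?_⟩, by simp⟩
        simp [nbr]
      | succ k ih =>
        obtain ⟨B, D, h1, h2⟩ := ih
        obtain ⟨w, hw⟩ := hcon B D h1
        obtain ⟨B', D', h3, h4⟩ := embed_step hb hr hV hJ hsize h1 ⟨w, by simp [hw]⟩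
        exact ⟨B', D', h3, by omega⟩
    obtain ⟨B, D, h1, h2⟩ := this (b * (Fintype.card W + 1) + Fintype.card W + 1)
    have e2 : (Finset.univ.filter fun w => (B w).Nonempty).card ≤ Fintype.card W :=
      Finset.card_le_univ _
    have e3 := Nat.mul_le_mul_right (Fintype.card W + 1) h1.cardD
    omega
  obtain ⟨B, D, h, hne⟩ := main
  refine ⟨fun w => (B w : Set V), fun u => h.conn u (hne u), fun u v huv => ?_, fun u v huv => ?_⟩
  · exact Finset.disjoint_coe.2 (h.disj u v huv)
  · obtain ⟨a, ha, c, hc, hac⟩ := h.adj u v huv (hne u) (hne v)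
    exact ⟨a, ha, c, hc, hac⟩
lemma reach_mono {V : Type*} {G : SimpleGraph V} {s t : Set V} (hst : s ⊆ t) {x y : V}
    (hx : x ∈ s) (hy : y ∈ s) (h : (G.induce s).Reachable ⟨x, hx⟩ ⟨y, hy⟩) :
    (G.induce t).Reachable ⟨x, hst hx⟩ ⟨y, hst hy⟩ :=
  h.map (SimpleGraph.induceHomOfLE _ hst).toHom

lemma IsMinor_trans {W X V : Type*} {H : SimpleGraph W} {Q : SimpleGraph X} {G : SimpleGraph V}
    (h1 : IsMinor H Q) (h2 : IsMinor Q G) : IsMinor H G := by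
  obtain ⟨φ, a1, a2, a3⟩ := h1
  obtain ⟨ψ, b1, b2, b3⟩ := h2
  refine ⟨fun u => ⋃ x ∈ φ u, ψ x, fun u => ?_, fun u v huv => ?_, fun u v huv => ?_⟩
  · have hsub : ∀ x ∈ φ u, ψ x ⊆ ⋃ x ∈ φ u, ψ x := fun x hx => Set.subset_biUnion_of_mem hx
    have key : ∀ x y : φ u, (Q.induce (φ u)).Walk x y → ∀ a (ha : a ∈ ψ x) c (hc : c ∈ ψ y),
        (G.induce (⋃ x ∈ φ u, ψ x)).Reachable ⟨a, hsub x x.2 ha⟩ ⟨c, hsub y y.2 hc⟩ := by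
      intro x y w
      induction w with
      | nil =>
        intro a ha c hc
        exact reach_mono (hsub _ (Subtype.property _)) ha hc ((b1 _).preconnected _ _)
      | @cons x y z hxy w ih =>
        intro a ha c hc
        obtain ⟨d, hd, e, he, hde⟩ := b3 x y hxy
        refine (reach_mono (hsub _ x.2) ha hd ((b1 _).preconnected _ _)).trans ?_
        refine SimpleGraph.Reachable.trans ?_ (ih e he c hc)
        exact SimpleGraph.Adj.reachable (by simpa using hde)
    rw [SimpleGraph.connected_iff]
    constructor
    · rintro ⟨a, ha⟩ ⟨c, hc⟩
      obtain ⟨x, hx, hax⟩ := Set.mem_iUnion₂.1 ha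
      obtain ⟨y, hy, hcy⟩ := Set.mem_iUnion₂.1 hc
      obtain ⟨w⟩ := (a1 u).preconnected ⟨x, hx⟩ ⟨y, hy⟩
      exact key _ _ w a hax c hcy
    · obtain ⟨x⟩ := (a1 u).nonempty
      obtain ⟨a⟩ := (b1 x).nonempty
      exact ⟨⟨a, hsub x x.2 a.2⟩⟩
  · rw [Set.disjoint_left]
    intro a ha hc
    obtain ⟨x, hx, hax⟩ := Set.mem_iUnion₂.1 ha
    obtain ⟨y, hy, hcy⟩ := Set.mem_iUnion₂.1 hc
    have hxy : x ≠ y := fun h => Set.disjoint_left.1 (a2 u v huv) hx (h ▸ hy)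
    exact Set.disjoint_left.1 (b2 x y hxy) hax hcy
  · obtain ⟨x, hx, y, hy, hxy⟩ := a3 u v huv
    obtain ⟨a, ha, c, hc, hac⟩ := b3 x y hxy
    exact ⟨a, Set.mem_biUnion hx ha, c, Set.mem_biUnion hy hc, hac⟩

/-- The `i`-th block of length `K` of the path `g`. -/
def blob {V : Type*} [DecidableEq V] (g : ℕ → V) (K i : ℕ) : Finset V :=
  (Finset.range K).image (fun r => g (i * K + r))

lemma CS_segment {V : Type*} [DecidableEq V] {G : SimpleGraph V} (g : ℕ → V) (s k : ℕ)
    (h : ∀ r, r < k → G.Adj (g (s + r)) (g (s + r + 1))) :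
    CS G ((Finset.range (k + 1)).image (fun r => g (s + r))) := by
  induction k with
  | zero => simpa using CS_singleton G _
  | succ k ih =>
    have h1 := ih fun r hr => h r (by omega)
    have := CS_union_adj h1 (CS_singleton G (g (s + (k + 1)))) (x := g (s + k))
      (Finset.mem_image.2 ⟨k, by simp, rfl⟩) (Finset.mem_singleton_self _) (h k (by omega))
    rw [Finset.range_add_one, Finset.image_insert, Finset.insert_eq, Finset.union_comm]
    exact this

lemma blob_idx {K i r j r' : ℕ} (hr : r < K) (hr' : r' < K) (h : i * K + r = j * K + r') : i = j := by
  have h1 : (i * K + r) / K = i := by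
    rw [mul_comm, Nat.mul_add_div (by omega), Nat.div_eq_of_lt hr]; simp
  have h2 : (j * K + r') / K = j := by
    rw [mul_comm, Nat.mul_add_div (by omega), Nat.div_eq_of_lt hr']; simp
  rw [← h1, ← h2, h]

lemma blob_lt {N K i r : ℕ} (hi : i < N) (hr : r < K) : i * K + r < N * K := by
  have : (i + 1) * K ≤ N * K := Nat.mul_le_mul_right _ hi
  linarith

lemma blob_disj {V : Type*} [DecidableEq V] {g : ℕ → V} {N K : ℕ}
    (hg : Set.InjOn g (Set.Iio (N * K))) {i j : ℕ} (hi : i < N) (hj : j < N) (hij : i ≠ j) :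
    Disjoint (blob g K i) (blob g K j) := by
  rw [Finset.disjoint_left]
  intro x hx hy
  obtain ⟨r, hr, rfl⟩ := Finset.mem_image.1 hx
  obtain ⟨r', hr', h⟩ := Finset.mem_image.1 hy
  simp only [Finset.mem_range] at hr hr'
  have := hg (blob_lt hj hr') (blob_lt hi hr) h
  exact hij (blob_idx hr hr' this.symm)

lemma blob_card {V : Type*} [DecidableEq V] {g : ℕ → V} {N K : ℕ}
    (hg : Set.InjOn g (Set.Iio (N * K))) {i : ℕ} (hi : i < N) : (blob g K i).card = K := by
  unfold blob
  rw [Finset.card_image_of_injOn, Finset.card_range]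
  intro r hr r' hr' h
  simp only [Finset.coe_range, Set.mem_Iio] at hr hr'
  have := hg (blob_lt hi hr) (blob_lt hi hr') h
  omega

lemma HasPath_fun {V : Type*} {A : Finset (Sym2 V)} {L : ℕ} (hL : 0 < L) (h : HasPath L A) :
    ∃ g : ℕ → V, Set.InjOn g (Set.Iio L) ∧ ∀ j, j + 1 < L → s(g j, g (j + 1)) ∈ A := by
  obtain ⟨l, hnd, hch, hl⟩ := h
  have h0 : 0 < l.length := by omega
  refine ⟨fun j => if h : j < l.length then l[j] else l[0], ?_, ?_⟩
  · intro i hi j hj hij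
    simp only [Set.mem_Iio] at hi hj
    have hi' : i < l.length := by omega
    have hj' : j < l.length := by omega
    simp only [hi', hj', dif_pos] at hij
    exact (hnd.getElem_inj_iff).1 hij
  · intro j hj
    have hi' : j < l.length := by omega
    have hj' : j + 1 < l.length := by omega
    simp only [hi', hj', dif_pos]
    exact List.isChain_iff_getElem.1 hch j hj'

/-- The union of the blobs indexed by `X`. -/
def blobs {V : Type*} [DecidableEq V] (g : ℕ → V) (K : ℕ) {N : ℕ} (X : Finset (Fin N)) : Finset V :=
  X.biUnion (fun i => blob g K i)

/-- All pairs between two sets. -/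
def cross {V : Type*} [DecidableEq V] (S T : Finset V) : Finset (Sym2 V) :=
  (S ×ˢ T).image (fun x => s(x.1, x.2))

lemma cross_card {V : Type*} [DecidableEq V] {S T : Finset V} (h : Disjoint S T) :
    (cross S T).card = S.card * T.card := by
  unfold cross
  rw [Finset.card_image_of_injOn, Finset.card_product]
  rintro ⟨x, y⟩ hxy ⟨x', y'⟩ hxy' h'
  simp only [Finset.coe_product, Set.mem_prod, Finset.mem_coe] at hxy hxy'
  simp only [Sym2.eq_iff] at h'
  rcases h' with h' | h'
  · simp [h'.1, h'.2]
  · exact absurd hxy.1 (Finset.disjoint_right.1 h (h'.1 ▸ hxy'.2))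

lemma blobs_disj {V : Type*} [DecidableEq V] {g : ℕ → V} {N K : ℕ}
    (hg : Set.InjOn g (Set.Iio (N * K))) {X Y : Finset (Fin N)} (h : Disjoint X Y) :
    Disjoint (blobs g K X) (blobs g K Y) := by
  unfold blobs
  rw [Finset.disjoint_biUnion_left]
  intro i hi
  rw [Finset.disjoint_biUnion_right]
  intro j hj
  refine blob_disj hg i.2 j.2 fun hij => ?_
  have : i = j := Fin.ext hij
  exact Finset.disjoint_left.1 h hi (this ▸ hj)

lemma blobs_card {V : Type*} [DecidableEq V] {g : ℕ → V} {N K : ℕ}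
    (hg : Set.InjOn g (Set.Iio (N * K))) (X : Finset (Fin N)) :
    (blobs g K X).card = X.card * K := by
  unfold blobs
  rw [Finset.card_biUnion]
  · rw [Finset.sum_congr rfl fun i _ => blob_card hg i.2]; simp
  · intro i _ j _ hij
    exact blob_disj hg i.2 j.2 fun h => hij (Fin.ext h)

/-- `B` misses all pairs between some two disjoint families of `b` blobs. -/
def Bad {V : Type*} [DecidableEq V] (g : ℕ → V) (K N b : ℕ) (B : Finset (Sym2 V)) : Prop :=
  ∃ X Y : Finset (Fin N), Disjoint X Y ∧ X.card = b ∧ Y.card = b ∧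
    Disjoint (cross (blobs g K X) (blobs g K Y)) B

open Classical in
lemma bad_bound {n : ℕ} {p : ℝ} (h0 : 0 ≤ p) (h1 : p ≤ 1) {g : ℕ → Fin n} {K N b : ℕ}
    (hg : Set.InjOn g (Set.Iio (N * K))) :
    Ex p (⊤ : SimpleGraph (Fin n)).edgeFinset (fun B => if Bad g K N b B then 1 else 0) ≤
      4 ^ N * (1 - p) ^ (b * K * (b * K)) := by
  set E := (⊤ : SimpleGraph (Fin n)).edgeFinset with hE
  set I : Finset (Finset (Fin N) × Finset (Fin N)) :=
    Finset.univ.filter (fun q => Disjoint q.1 q.2 ∧ q.1.card = b ∧ q.2.card = b) with hI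
  have hp : 0 ≤ 1 - p := by linarith
  calc _ ≤ Ex p E (fun B => ∑ q ∈ I, if Disjoint (cross (blobs g K q.1) (blobs g K q.2)) B then 1 else 0) := by
        refine Ex_mono h0 h1 _ fun B _ => ?_
        have hnn : ∀ q ∈ I, (0 : ℝ) ≤ if Disjoint (cross (blobs g K q.1) (blobs g K q.2)) B then 1 else 0 := by
          intro q _; split_ifs <;> norm_num
        split_ifs with hb
        · obtain ⟨X, Y, hXY, hX, hY, hd⟩ := hb
          have := Finset.single_le_sum hnn (a := (X, Y)) (by simp [hI, hXY, hX, hY])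
          simpa [hd] using this
        · exact Finset.sum_nonneg hnn
    _ = ∑ q ∈ I, Ex p E (fun B => if Disjoint (cross (blobs g K q.1) (blobs g K q.2)) B then 1 else 0) :=
        Ex_sum _ _ _ _
    _ = ∑ q ∈ I, (1 - p) ^ (b * K * (b * K)) := by
        refine Finset.sum_congr rfl fun q hq => ?_
        simp only [hI, Finset.mem_filter, Finset.mem_univ, true_and] at hq
        have hd := blobs_disj hg hq.1
        rw [Ex_avoid, cross_card hd, blobs_card hg, blobs_card hg, hq.2.1, hq.2.2]
        intro e he
        obtain ⟨⟨x, y⟩, hxy, rfl⟩ := Finset.mem_image.1 he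
        rw [Finset.mem_product] at hxy
        have : x ≠ y := fun h => Finset.disjoint_left.1 hd hxy.1 (h ▸ hxy.2)
        simpa [hE] using this
    _ = I.card * (1 - p) ^ (b * K * (b * K)) := by simp
    _ ≤ _ := by
        refine mul_le_mul_of_nonneg_right ?_ (by positivity)
        have : I.card ≤ 4 ^ N := by
          refine (Finset.card_le_univ _).trans ?_
          rw [Fintype.card_prod, Fintype.card_finset, Fintype.card_fin, ← mul_pow]
          norm_num
        exact_mod_cast this

open Classical in
lemma minor_of_good {n : ℕ} {g : ℕ → Fin n} {K b r m : ℕ} (hK : 0 < K) (hb : 0 < b)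
    (hr : b ≤ 2 ^ r) {A B : Finset (Sym2 (Fin n))}
    (hg : Set.InjOn g (Set.Iio (6 * b * K)))
    (hA : ∀ j, j + 1 < 6 * b * K → s(g j, g (j + 1)) ∈ A) (hB : ¬ Bad g K (6 * b) b B)
    (H : SimpleGraph (Fin m)) (hH : 2 * gsize H * (2 * r + 2) ≤ b) :
    IsMinor H (SimpleGraph.fromEdgeSet ((A ∪ B : Finset (Sym2 (Fin n))) : Set (Sym2 (Fin n)))) := by
  set G := SimpleGraph.fromEdgeSet ((A ∪ B : Finset (Sym2 (Fin n))) : Set (Sym2 (Fin n))) with hG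
  let Q : SimpleGraph (Fin (6 * b)) := SimpleGraph.fromRel
    (fun i j => ∃ x ∈ blob g K i, ∃ y ∈ blob g K j, G.Adj x y)
  have hQG : IsMinor Q G := by
    refine ⟨fun i => (blob g K i : Set (Fin n)), fun i => ?_, fun i j hij => ?_, fun i j hij => ?_⟩
    · obtain ⟨k, rfl⟩ : ∃ k, K = k + 1 := ⟨K - 1, by omega⟩
      refine CS_segment g (i * (k + 1)) k fun r hr => ?_
      have h1 : (i : ℕ) * (k + 1) + (r + 1) < 6 * b * (k + 1) := blob_lt i.2 (by omega)
      rw [hG, SimpleGraph.fromEdgeSet_adj]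
      refine ⟨by
        rw [Finset.coe_union]; exact Or.inl (hA _ (by omega)), fun h => ?_⟩
      have := hg (by simp only [Set.mem_Iio]; omega) (by simp only [Set.mem_Iio]; omega) h
      omega
    · exact Finset.disjoint_coe.2 (blob_disj hg i.2 j.2 fun h => hij (Fin.ext h))
    · rw [SimpleGraph.fromRel_adj] at hij
      rcases hij.2 with ⟨x, hx, y, hy, h⟩ | ⟨x, hx, y, hy, h⟩
      · exact ⟨x, hx, y, hy, h⟩
      · exact ⟨y, hy, x, hx, h.symm⟩
  refine IsMinor_trans (joined_minor hb hr (by simp) ?_ ?_) hQG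
  · intro X Y hXY hX hY
    obtain ⟨X', hX', hXc⟩ := Finset.exists_subset_card_eq hX
    obtain ⟨Y', hY', hYc⟩ := Finset.exists_subset_card_eq hY
    have hXY' := Finset.disjoint_of_subset_left hX' (Finset.disjoint_of_subset_right hY' hXY)
    have hnd : ¬ Disjoint (cross (blobs g K X') (blobs g K Y')) B := fun h =>
      hB ⟨X', Y', hXY', hXc, hYc, h⟩
    rw [Finset.not_disjoint_iff] at hnd
    obtain ⟨e, he, heB⟩ := hnd
    obtain ⟨⟨x, y⟩, hxy, rfl⟩ := Finset.mem_image.1 he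
    rw [Finset.mem_product] at hxy
    have hne : x ≠ y := fun h => Finset.disjoint_left.1 (blobs_disj hg hXY') hxy.1 (h ▸ hxy.2)
    obtain ⟨i, hi, hxi⟩ := Finset.mem_biUnion.1 hxy.1
    obtain ⟨j, hj, hyj⟩ := Finset.mem_biUnion.1 hxy.2
    refine ⟨i, hX' hi, j, hY' hj, ?_⟩
    rw [SimpleGraph.fromRel_adj]
    refine ⟨fun h => Finset.disjoint_left.1 hXY' hi (h ▸ hj), Or.inl ⟨x, hxi, y, hyj, ?_⟩⟩
    rw [hG, SimpleGraph.fromEdgeSet_adj]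
    exact ⟨by rw [Finset.coe_union]; exact Or.inr heB, hne⟩
  · refine le_trans ?_ hH
    rw [← Finset.sum_mul]
    refine Nat.mul_le_mul_right _ ?_
    rw [Finset.sum_add_distrib, SimpleGraph.sum_degrees_eq_twice_card_edges]
    have h2 : Nat.card H.edgeSet = H.edgeFinset.card := by
      rw [Nat.card_eq_fintype_card, SimpleGraph.edgeFinset_card]
    unfold gsize
    rw [h2]
    simp
    omega

open Classical in
lemma final_bound {n : ℕ} {K b r : ℕ} (hK : 0 < K) (hb : 0 < b) (hr : b ≤ 2 ^ r)
    {p p1 p2 : ℝ} (hp : 1 - p = (1 - p1) * (1 - p2)) (h10 : 0 ≤ p1) (h11 : p1 ≤ 1)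
    (h20 : 0 ≤ p2) (h21 : p2 ≤ 1) :
    Ex p (⊤ : SimpleGraph (Fin n)).edgeFinset (fun A =>
      if (∀ (m : ℕ) (H : SimpleGraph (Fin m)), 2 * gsize H * (2 * r + 2) ≤ b →
        IsMinor H (SimpleGraph.fromEdgeSet (A : Set (Sym2 (Fin n))))) then 0 else 1) ≤
    Ex p1 (⊤ : SimpleGraph (Fin n)).edgeFinset (fun C => if HasPath (6 * b * K) C then 0 else 1) +
      4 ^ (6 * b) * (1 - p2) ^ (b * K * (b * K)) := by
  rw [Ex_union p p1 p2 hp, ← Ex_const p1 (⊤ : SimpleGraph (Fin n)).edgeFinset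
    (4 ^ (6 * b) * (1 - p2) ^ (b * K * (b * K))), ← Ex_add]
  refine Ex_mono h10 h11 _ fun A _ => ?_
  have hp2 : 0 ≤ 1 - p2 := by linarith
  by_cases hA : HasPath (6 * b * K) A
  · obtain ⟨g, hg, hgA⟩ := HasPath_fun (by positivity) hA
    rw [if_pos hA, zero_add]
    refine le_trans (Ex_mono h20 h21 _ fun B _ => ?_) (bad_bound h20 h21 hg)
    by_cases hB : Bad g K (6 * b) b B
    · rw [if_pos hB]; split_ifs <;> norm_num
    · rw [if_neg hB, if_pos]
      intro m H hH
      exact minor_of_good hK hb hr hg hgA hB H hH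
  · rw [if_neg hA]
    refine le_trans (Ex_mono h20 h21 _ (F' := fun _ => 1) fun B _ => ?_) ?_
    · split_ifs <;> norm_num
    · rw [Ex_const]
      have : 0 ≤ 4 ^ (6 * b) * (1 - p2) ^ (b * K * (b * K)) := by positivity
      linarith
set_option maxHeartbeats 1000000 in
open Classical in
lemma dfs_asym (ε : ℝ) (hε : 0 < ε) : ∃ δ : ℝ, 0 < δ ∧ δ ≤ 1 ∧ ∃ c : ℝ, 0 < c ∧ ∃ n0 : ℕ, ∀ n : ℕ, n0 ≤ n →
    ∀ L : ℕ, (L : ℝ) ≤ δ * n →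
      Ex ((1 + ε) / n) (⊤ : SimpleGraph (Fin n)).edgeFinset (fun C => if HasPath L C then 0 else 1) ≤
        Real.exp (-(c * n)) := by
  obtain ⟨η, hη0, hη1, hηε⟩ : ∃ η : ℝ, 0 < η ∧ η ≤ 1 / 10 ∧ 10 * η ≤ ε := by
    refine ⟨min ε 1 / 10, by positivity, ?_, ?_⟩
    · have := min_le_right ε 1; linarith
    · have := min_le_left ε 1; linarith
  refine ⟨η ^ 2, by positivity, by nlinarith, η ^ 3, by positivity, ⌈(1 + ε) + 1 / η ^ 2⌉₊ + 1, ?_⟩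
  intro n hn L hL
  have hn' : (1 + ε) + 1 / η ^ 2 < n := by
    have h1 := Nat.le_ceil ((1 + ε) + 1 / η ^ 2)
    have h2 : ((⌈(1 + ε) + 1 / η ^ 2⌉₊ : ℕ) : ℝ) + 1 ≤ n := by exact_mod_cast hn
    linarith
  have hηp : 0 < 1 / η ^ 2 := by positivity
  have hn0 : (0 : ℝ) < n := by linarith
  have hηn : 1 ≤ η ^ 2 * n := by
    have : 1 / η ^ 2 ≤ n := by linarith
    rw [div_le_iff₀ (by positivity)] at this
    linarith
  set p : ℝ := (1 + ε) / n with hp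
  have hpn : p * n = 1 + ε := by rw [hp]; field_simp
  have hp0 : 0 < p := by positivity
  have hp1 : p < 1 := by rw [hp, div_lt_one hn0]; linarith
  set s := ⌈η * n⌉₊ with hs
  have hs1 : η * n ≤ s := Nat.le_ceil _
  have hs2 : (s : ℝ) ≤ η * n + 1 := (Nat.ceil_lt_add_one (by positivity)).le
  have hsL : (s : ℝ) + L ≤ η * n * (1 + 2 * η) := by nlinarith
  have hsLn : (s : ℝ) + L < n := by nlinarith
  have hsLn' : s + L < n := by exact_mod_cast hsLn
  have hden : 0 < 1 - p * (1 - η) := by nlinarith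
  have hmain := dfs_bound (n := n) (p := p) (a := 1 - η) (ρ := (1 - p * (1 - η)) / (1 - p))
    (B := Real.exp (η ^ 3 * n)) hp0.le hp1.le (by linarith) (by linarith)
    (by rw [le_div_iff₀ (by linarith)]; nlinarith) (Real.exp_pos _)
    (by rw [mul_div_cancel₀ _ (by linarith : (1 - p) ≠ 0)]; linarith) s L hsLn' ?_
  · rw [Real.exp_neg, ← one_div]; exact hmain
  have ha : Real.exp (-(η * (1 + 2 * η))) ≤ 1 - η := by
    rw [Real.exp_neg, inv_le_comm₀ (Real.exp_pos _) (by linarith)]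
    refine le_trans ?_ (Real.add_one_le_exp _)
    rw [inv_le_comm₀ (by linarith) (by nlinarith), inv_eq_one_div, div_le_iff₀ (by nlinarith)]
    nlinarith [mul_pos hη0 hη0, mul_pos (mul_pos hη0 hη0) hη0]
  have hρ : Real.exp (p * η) ≤ (1 - p * (1 - η)) / (1 - p) := by
    have h1 := Real.add_one_le_exp (-(p * η))
    have h2 : 0 < 1 - p * η := by nlinarith
    have h3 : Real.exp (p * η) ≤ 1 / (1 - p * η) := by
      rw [← neg_neg (p * η), Real.exp_neg, ← one_div, neg_neg]
      exact one_div_le_one_div_of_le h2 (by linarith)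
    refine h3.trans ?_
    rw [div_le_div_iff₀ h2 (by linarith)]
    nlinarith [mul_pos hp0 hp0, mul_pos (mul_pos hp0 hp0) (mul_pos hη0 (by linarith : 0 < 1 - η))]
  calc Real.exp (η ^ 3 * n) ≤ Real.exp (-(η * (1 + 2 * η))) ^ (s + L) *
        Real.exp (p * η) ^ (s * (n - s - L)) := by
        rw [← Real.exp_nat_mul, ← Real.exp_nat_mul, ← Real.exp_add, Real.exp_le_exp]
        have hc : ((n - s - L : ℕ) : ℝ) = n - (s + L) := by
          rw [Nat.sub_sub, Nat.cast_sub hsLn'.le]; push_cast; ring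
        push_cast [hc]
        have e1 : (n : ℝ) * (1 - η - 2 * η ^ 2) ≤ n - (s + L) := by nlinarith
        have e2 : η * n * (n * (1 - η - 2 * η ^ 2)) ≤ s * (n - (s + L)) :=
          mul_le_mul hs1 e1 (mul_nonneg hn0.le (by nlinarith)) (by positivity)
        have e3 : p * η * (η * n * (n * (1 - η - 2 * η ^ 2))) ≤ s * (n - (s + L)) * (p * η) := by
          rw [mul_comm (p * η)]
          exact mul_le_mul_of_nonneg_right e2 (by positivity)
        have e4 : p * η * (η * n * (n * (1 - η - 2 * η ^ 2))) =
            η ^ 2 * n * ((1 + ε) * (1 - η - 2 * η ^ 2)) := by rw [← hpn]; ring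
        have e5 : (1 + 10 * η) * (1 - η - 2 * η ^ 2) ≤ (1 + ε) * (1 - η - 2 * η ^ 2) :=
          mul_le_mul_of_nonneg_right (by linarith) (by nlinarith)
        have e6 : ((s : ℝ) + L) * (η * (1 + 2 * η)) ≤ η * n * (1 + 2 * η) * (η * (1 + 2 * η)) :=
          mul_le_mul_of_nonneg_right hsL (by positivity)
        have e7 : (1 + 2 * η) * (1 + 2 * η) + η ≤ (1 + 10 * η) * (1 - η - 2 * η ^ 2) := by
          nlinarith [mul_pos hη0 hη0]
        have e8 : η ^ 2 * n * ((1 + 2 * η) * (1 + 2 * η) + η) ≤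
            η ^ 2 * n * ((1 + ε) * (1 - η - 2 * η ^ 2)) :=
          mul_le_mul_of_nonneg_left (e7.trans e5) (by positivity)
        have e9 : η ^ 2 * n * ((1 + 2 * η) * (1 + 2 * η) + η) =
            η * n * (1 + 2 * η) * (η * (1 + 2 * η)) + η ^ 3 * n := by ring
        linarith
    _ ≤ _ := by
        refine mul_le_mul (pow_le_pow_left₀ (Real.exp_pos _).le ha _)
          (pow_le_pow_left₀ (Real.exp_pos _).le hρ _) (by positivity) ?_
        have : 0 ≤ 1 - η := by linarith
        positivity

set_option maxHeartbeats 1000000 in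
/-- For every `ε > 0` there is a constant `c_ε > 0` such that the probability that
`G ~ G(n, (1+ε)/n)` contains every graph of size at most `c_ε·n/log₂ n` as a minor
tends to `1` as `n → ∞`. -/
theorem random_graph_contains_all_small_minors :
    ∀ ε : ℝ, 0 < ε →
      ∃ c : ℝ, 0 < c ∧
        Filter.Tendsto
          (fun n : ℕ =>
            erProb n ((1 + ε) / n)
              (fun G => ∀ (m : ℕ) (H : SimpleGraph (Fin m)),
                (gsize H : ℝ) ≤ c * n / Real.logb 2 n → IsMinor H G))
          Filter.atTop (nhds 1) := by
  classical
  intro ε hε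
  obtain ⟨δ, hδ, hδ1, c1, hc1, n0, hdfs⟩ := dfs_asym (ε / 2) (by positivity)
  obtain ⟨K, hK⟩ := exists_nat_ge (312 / (ε * δ))
  have hKpos : (0 : ℝ) < K := lt_of_lt_of_le (by positivity) hK
  have hK0 : 0 < K := by exact_mod_cast hKpos
  have hK' : 312 ≤ ε * δ * K := by
    rw [div_le_iff₀ (by positivity)] at hK; linarith
  set κ : ℝ := δ / (6 * K) with hκ
  have hκ0 : 0 < κ := by positivity
  have hκK : κ * (6 * K) = δ := by rw [hκ]; field_simp
  refine ⟨κ / 24, by positivity, ?_⟩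
  -- the key estimate
  have key : ∀ᶠ n : ℕ in Filter.atTop,
      1 - (Real.exp (-(c1 * n)) + Real.exp (-(κ / 2 * n))) ≤
      erProb n ((1 + ε) / n)
              (fun G => ∀ (m : ℕ) (H : SimpleGraph (Fin m)),
                (gsize H : ℝ) ≤ κ / 24 * n / Real.logb 2 n → IsMinor H G) ∧
      erProb n ((1 + ε) / n)
              (fun G => ∀ (m : ℕ) (H : SimpleGraph (Fin m)),
                (gsize H : ℝ) ≤ κ / 24 * n / Real.logb 2 n → IsMinor H G) ≤ 1 := by
    filter_upwards [Filter.eventually_ge_atTop n0, Filter.eventually_ge_atTop 2,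
      Filter.eventually_ge_atTop (⌈2 + ε + 2 / κ⌉₊)] with n hn1 hn2 hn3
    have hn3' : 2 + ε + 2 / κ ≤ n := Nat.ceil_le.1 hn3
    have h2κ : 0 < 2 / κ := by positivity
    have hnpos : (0 : ℝ) < n := by linarith
    have hκn : 2 ≤ κ * n := by
      have : 2 / κ ≤ n := by linarith
      rw [div_le_iff₀ hκ0] at this; linarith
    set p : ℝ := (1 + ε) / n with hp
    set p1 : ℝ := (1 + ε / 2) / n with hp1
    have hp0 : 0 ≤ p := by positivity
    have hpl : p < 1 := by rw [hp, div_lt_one hnpos]; linarith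
    have hp10 : 0 < p1 := by positivity
    have hp1p : p - p1 = ε / 2 / n := by rw [hp, hp1]; field_simp; ring
    have hq : 0 < ε / 2 / n := by positivity
    have hp1l : p1 < 1 := by linarith
    set p2 : ℝ := (p - p1) / (1 - p1) with hp2
    have h1p1 : 0 < 1 - p1 := by linarith
    have hmul : 1 - p = (1 - p1) * (1 - p2) := by rw [hp2]; field_simp; ring
    have hp2l : p2 ≤ 1 := by rw [hp2, div_le_one h1p1]; linarith
    have hp2g : ε / 2 / n ≤ p2 := by
      rw [hp2, ← hp1p, le_div_iff₀ h1p1]; nlinarith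
    have hp20 : 0 ≤ p2 := by linarith
    set b := ⌊κ * n⌋₊ with hb
    have hb1 : (b : ℝ) ≤ κ * n := Nat.floor_le (by positivity)
    have hb2 : κ * n / 2 ≤ b := by
      have := Nat.lt_floor_add_one (κ * n); rw [← hb] at this; linarith
    have hbpos : 0 < b := by
      have : (0 : ℝ) < b := by linarith
      exact_mod_cast this
    have hL : ((6 * b * K : ℕ) : ℝ) ≤ δ * n := by
      push_cast; rw [← hκK]; nlinarith
    set r := Nat.log 2 n + 1 with hr
    have hr1 : b ≤ 2 ^ r := by
      have h1 : n < 2 ^ r := Nat.lt_pow_succ_log_self (by norm_num) n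
      have h2 : b ≤ n := by
        have hK1 : (1 : ℝ) ≤ K := by exact_mod_cast hK0
        have hκ1 : κ ≤ 1 := by nlinarith
        have : (b : ℝ) ≤ n := by nlinarith
        exact_mod_cast this
      omega
    have hfb := final_bound (n := n) hK0 hbpos hr1 hmul hp10.le hp1l.le hp20 hp2l
    have hbad : 4 ^ (6 * b) * (1 - p2) ^ (b * K * (b * K)) ≤ Real.exp (-(κ / 2 * n)) := by
      have h4 : (4 : ℝ) ≤ Real.exp 2 := by
        have h1 := Real.add_one_le_exp 1
        have : Real.exp 2 = Real.exp 1 * Real.exp 1 := by rw [← Real.exp_add]; norm_num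
        nlinarith
      have h5 : 1 - p2 ≤ Real.exp (-p2) := by
        have := Real.add_one_le_exp (-p2); linarith
      calc _ ≤ Real.exp 2 ^ (6 * b) * Real.exp (-p2) ^ (b * K * (b * K)) :=
            mul_le_mul (pow_le_pow_left₀ (by norm_num) h4 _)
              (pow_le_pow_left₀ (by linarith) h5 _) (pow_nonneg (by linarith) _) (by positivity)
        _ ≤ _ := by
          rw [← Real.exp_nat_mul, ← Real.exp_nat_mul, ← Real.exp_add, Real.exp_le_exp]
          push_cast
          have e1 : ε / 2 / n * (κ * n / 2) * K ^ 2 ≤ p2 * b * K ^ 2 := by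
            refine mul_le_mul_of_nonneg_right ?_ (by positivity)
            exact mul_le_mul hp2g hb2 (by positivity) hp20
          have e2 : ε / 2 / n * (κ * n / 2) * K ^ 2 = ε * δ * K / 24 := by
            rw [← hκK]; field_simp; ring
          have e3 : 13 ≤ p2 * b * K ^ 2 := by linarith
          have e4 := mul_le_mul_of_nonneg_left e3 (Nat.cast_nonneg (α := ℝ) b)
          nlinarith
    have hpath := hdfs n hn1 (6 * b * K) hL
    have hgood : ∀ (m : ℕ) (H : SimpleGraph (Fin m)), (gsize H : ℝ) ≤ κ / 24 * n / Real.logb 2 n →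
        2 * gsize H * (2 * r + 2) ≤ b := by
      intro m H hH
      have hlog1 : 1 ≤ Real.logb 2 n := by
        rw [Real.le_logb_iff_rpow_le (by norm_num) hnpos]
        simpa using (show (2 : ℝ) ≤ n by exact_mod_cast hn2)
      have hlog2 : (Nat.log 2 n : ℝ) ≤ Real.logb 2 n := by
        exact_mod_cast Real.natLog_le_logb n 2
      rw [le_div_iff₀ (by linarith)] at hH
      have : ((2 * gsize H * (2 * r + 2) : ℕ) : ℝ) ≤ b := by
        push_cast [hr]
        have e1 : (2 * ((Nat.log 2 n : ℝ) + 1) + 2) ≤ 6 * Real.logb 2 n := by linarith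
        have e2 := mul_le_mul_of_nonneg_left e1 (show (0:ℝ) ≤ 2 * gsize H by positivity)
        linarith
      exact_mod_cast this
    rw [erProb_eq_Ex]
    constructor
    · have hsum : Ex p (⊤ : SimpleGraph (Fin n)).edgeFinset (fun A =>
          if (∀ (m : ℕ) (H : SimpleGraph (Fin m)), (gsize H : ℝ) ≤ κ / 24 * n / Real.logb 2 n →
            IsMinor H (SimpleGraph.fromEdgeSet (A : Set (Sym2 (Fin n))))) then 1 else 0) +
          Ex p (⊤ : SimpleGraph (Fin n)).edgeFinset (fun A =>
          if (∀ (m : ℕ) (H : SimpleGraph (Fin m)), 2 * gsize H * (2 * r + 2) ≤ b →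
            IsMinor H (SimpleGraph.fromEdgeSet (A : Set (Sym2 (Fin n))))) then 0 else 1) ≥ 1 := by
        rw [← Ex_add, ge_iff_le, ← Ex_const p (⊤ : SimpleGraph (Fin n)).edgeFinset 1]
        refine Ex_mono hp0 hpl.le _ fun A _ => ?_
        rw [Ex_const]
        by_cases h : ∀ (m : ℕ) (H : SimpleGraph (Fin m)), 2 * gsize H * (2 * r + 2) ≤ b →
            IsMinor H (SimpleGraph.fromEdgeSet (A : Set (Sym2 (Fin n))))
        · rw [if_pos h, if_pos fun m H hH => h m H (hgood m H hH)]; norm_num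
        · rw [if_neg h]; split_ifs <;> norm_num
      linarith
    · rw [← Ex_const p (⊤ : SimpleGraph (Fin n)).edgeFinset 1]
      refine Ex_mono hp0 hpl.le _ fun A _ => ?_
      rw [Ex_const]
      split_ifs <;> norm_num
  have hexp : ∀ c : ℝ, 0 < c → Filter.Tendsto (fun n : ℕ => Real.exp (-(c * n))) Filter.atTop (nhds 0) := by
    intro c hc
    refine Real.tendsto_exp_neg_atTop_nhds_zero.comp ?_
    exact Filter.Tendsto.const_mul_atTop hc tendsto_natCast_atTop_atTop
  have hlow : Filter.Tendsto (fun n : ℕ => 1 - (Real.exp (-(c1 * n)) + Real.exp (-(κ / 2 * n))))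
      Filter.atTop (nhds 1) := by
    have := ((hexp c1 hc1).add (hexp (κ / 2) (by positivity))).const_sub 1
    simpa using this
  exact tendsto_of_tendsto_of_tendsto_of_le_of_le' hlow tendsto_const_nhds
    (key.mono fun n h => h.1) (key.mono fun n h => h.2)
end

section
/- There is a universal constant c > 0 such that the following holds. Let G = (V,E) be a graph with |V| = n (n ≥ 2) and maximum vertex degree at most d, let 0 < α < 1, and let M be a (possibly partial) matching over the vertices of G, i.e., a set of pairs of distinct vertices such that each vertex appears in at most one pair. Then either (i) there exists a collection {Q(u,v) : (u,v) ∈ M} of paths in G such that for each (u,v) ∈ M the path Q(u,v) connects u to v, every path has length at most c·d·log₂ n/α, and every vertex of G lies on at most c·d·log₂ n/α of these paths, or (ii) there exists a cut (S,S') in G of sparsity less than α. -/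
namespace RouteAux
open Finset

set_option linter.unusedSectionVars false

/-- `v` is reachable from `A` by a walk with at most `h` edges and of weight at most `r`
(the weight of the first vertex is not counted). -/
def Reach {V : Type} (G : SimpleGraph V) (w : V → ℝ) (A : Finset V) (v : V) (h : ℕ) (r : ℝ) :
    Prop :=
  ∃ a ∈ A, ∃ p : G.Walk a v, p.length ≤ h ∧ (p.support.tail.map w).sum ≤ r

section
variable {V : Type} {G : SimpleGraph V} {w : V → ℝ} {A : Finset V}

lemma Reach.refl {v : V} (hv : v ∈ A) : Reach G w A v 0 0 :=
  ⟨v, hv, SimpleGraph.Walk.nil, by simp, by simp⟩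

lemma Reach.mono {v : V} {h h' : ℕ} {r r' : ℝ} (H : Reach G w A v h r) (hh : h ≤ h')
    (hr : r ≤ r') : Reach G w A v h' r' := by
  obtain ⟨a, ha, p, h1, h2⟩ := H
  exact ⟨a, ha, p, h1.trans hh, h2.trans hr⟩

lemma tail_append_sum {a b c : V} (p : G.Walk a b) (q : G.Walk b c) :
    ((p.append q).support.tail.map w).sum =
      (p.support.tail.map w).sum + (q.support.tail.map w).sum := by
  rw [SimpleGraph.Walk.support_append, List.tail_append_of_ne_nil (by simp)]
  simp

lemma Reach.step {u v : V} {h : ℕ} {r : ℝ} (H : Reach G w A u h r) (huv : G.Adj u v) :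
    Reach G w A v (h + 1) (r + w v) := by
  obtain ⟨a, ha, p, h1, h2⟩ := H
  refine ⟨a, ha, p.append (SimpleGraph.Walk.cons huv SimpleGraph.Walk.nil), ?_, ?_⟩
  · simp; omega
  · rw [tail_append_sum]
    simpa only [SimpleGraph.Walk.support_cons, SimpleGraph.Walk.support_nil, List.tail_cons,
      List.map_cons, List.map_nil, List.sum_cons, List.sum_nil, add_zero, add_le_add_iff_right] using h2

lemma Reach.trans {B : Finset V} {v : V} {h h' : ℕ} {r r' : ℝ}
    (hB : ∀ b ∈ B, Reach G w A b h r) (H : Reach G w B v h' r') :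
    Reach G w A v (h + h') (r + r') := by
  obtain ⟨b, hb, q, h1, h2⟩ := H
  obtain ⟨a, ha, p, h3, h4⟩ := hB b hb
  refine ⟨a, ha, p.append q, ?_, ?_⟩
  · simp; omega
  · rw [tail_append_sum]; linarith

end

/-- A median of a nonnegative function on a finite set. -/
lemma exists_median {V : Type} (s : Finset V) (f : V → ℝ) (hf : ∀ v, 0 ≤ f v) :
    ∃ t : ℝ, 0 ≤ t ∧ #s ≤ 2 * #{v ∈ s | f v ≤ t} ∧ #s ≤ 2 * #{v ∈ s | t ≤ f v} := by
  classical
  rcases s.eq_empty_or_nonempty with rfl | hs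
  · exact ⟨0, le_rfl, by simp, by simp⟩
  let g : Finset V := {v ∈ s | #s ≤ 2 * #{u ∈ s | f u ≤ f v}}
  have hg : g.Nonempty := by
    obtain ⟨m, hm, hmax⟩ := s.exists_max_image f hs
    refine ⟨m, ?_⟩
    simp only [g, mem_filter]
    refine ⟨hm, ?_⟩
    rw [filter_true_of_mem hmax]; omega
  obtain ⟨m, hm, hmin⟩ := g.exists_min_image f hg
  have hm' := (mem_filter.1 hm)
  refine ⟨f m, hf m, hm'.2, ?_⟩
  have hsplit : #{v ∈ s | f v < f m} + #{v ∈ s | f m ≤ f v} = #s := by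
    have := card_filter_add_card_filter_not (s := s) (fun v => f v < f m)
    simpa using this
  suffices 2 * #{v ∈ s | f v < f m} ≤ #s by omega
  rcases (filter (fun v => f v < f m) s).eq_empty_or_nonempty with h0 | h0
  · rw [h0]; simp
  obtain ⟨k, hk, hkmax⟩ := exists_max_image _ f h0
  have hk' := mem_filter.1 hk
  have heq : (filter (fun v => f v < f m) s) = {v ∈ s | f v ≤ f k} := by
    ext v; simp only [mem_filter]
    refine and_congr_right fun hv => ⟨fun h => hkmax v (mem_filter.2 ⟨hv, h⟩), fun h => ?_⟩
    exact h.trans_lt hk'.2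
  rw [heq]
  by_contra hcon
  have : k ∈ g := by
    simp only [g, mem_filter]; exact ⟨hk'.1, by omega⟩
  have := hmin k this
  linarith [hk'.2]

section
variable {V : Type} [Fintype V] [DecidableEq V]

open Classical in
/-- Outer vertex boundary. -/
noncomputable def bd (G : SimpleGraph V) (R : Finset V) : Finset V :=
  {v | v ∉ R ∧ ∃ u ∈ R, G.Adj u v}

lemma mem_bd {G : SimpleGraph V} {R : Finset V} {v : V} :
    v ∈ bd G R ↔ v ∉ R ∧ ∃ u ∈ R, G.Adj u v := by
  simp [bd]

/-- State of the synchronized Dijkstra process. -/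
structure GState (G : SimpleGraph V) (w : V → ℝ) (A : Finset V) (i : ℕ) (T : ℝ)
    (ρ τ : V → ℝ) (R : Finset V) : Prop where
  sub : A ⊆ R
  T0 : 0 ≤ T
  rho0 : ∀ v, 0 ≤ ρ v
  tau0 : ∀ v, 0 ≤ τ v
  inR : ∀ v ∈ R, τ v ≤ T ∧ Reach G w A v i (τ v)
  tauT : ∀ v, v ∉ R → τ v = T
  out : ∀ v, v ∉ R → ρ v = w v ∨ Reach G w A v i (T + ρ v)

variable {G : SimpleGraph V} {w : V → ℝ} {A : Finset V}

lemma GState.start (hw : ∀ v, 0 ≤ w v) : GState G w A 0 0 w (fun _ => 0) A where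
  sub := Subset.refl _
  T0 := le_rfl
  rho0 := hw
  tau0 := fun _ => le_rfl
  inR := fun v hv => ⟨le_rfl, Reach.refl hv⟩
  tauT := fun _ _ => rfl
  out := fun _ _ => Or.inl rfl

lemma GState.succ {i : ℕ} {T : ℝ} {ρ τ : V → ℝ} {R : Finset V} (S : GState G w A i T ρ τ R) :
    GState G w A (i + 1) T ρ τ R :=
  { S with
    inR := fun v hv => ⟨(S.inR v hv).1, (S.inR v hv).2.mono (Nat.le_succ _) le_rfl⟩
    out := fun v hv => (S.out v hv).imp id fun h => h.mono (Nat.le_succ _) le_rfl }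

lemma GState.step {i : ℕ} {T : ℝ} {ρ τ : V → ℝ} {R : Finset V} (S : GState G w A i T ρ τ R) :
    ∃ (t : ℝ) (ρ' τ' : V → ℝ) (R' : Finset V), 0 ≤ t ∧ GState G w A (i + 1) (T + t) ρ' τ' R' ∧
      2 * #R + #(bd G R) ≤ 2 * #R' ∧
      ∑ v, ρ' v + t * (#(bd G R) / 2) ≤ ∑ v, ρ v ∧
      ∑ v, τ' v = ∑ v, τ v + t * #Rᶜ := by
  obtain ⟨t, ht, hlo, hhi⟩ := exists_median (bd G R) ρ S.rho0
  have hfr : ∀ v ∈ bd G R, Reach G w A v (i + 1) (T + ρ v) := by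
    intro v hv
    obtain ⟨hvR, u, hu, huv⟩ := mem_bd.1 hv
    rcases S.out v hvR with h | h
    · rw [h]
      have := S.inR u hu
      exact (this.2.step huv).mono le_rfl (by linarith [this.1])
    · exact h.mono (Nat.le_succ _) le_rfl
  refine ⟨t, fun v => if v ∈ bd G R then max (ρ v - t) 0 else ρ v,
    fun v => if v ∈ R then τ v else T + t, R ∪ {v ∈ bd G R | ρ v ≤ t}, ht, ?_, ?_, ?_, ?_⟩
  · constructor
    · exact S.sub.trans subset_union_left
    · linarith [S.T0]
    · intro v
      split_ifs
      · exact le_max_right _ _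
      · exact S.rho0 v
    · intro v
      split_ifs
      · exact S.tau0 v
      · linarith [S.T0]
    · intro v hv
      by_cases hvR : v ∈ R
      · rw [if_pos hvR]
        have := S.inR v hvR
        exact ⟨by linarith [this.1], this.2.mono (Nat.le_succ _) le_rfl⟩
      · rw [if_neg hvR]
        refine ⟨le_rfl, ?_⟩
        rcases mem_union.1 hv with h | h
        · exact absurd h hvR
        · have := mem_filter.1 h
          exact (hfr v this.1).mono le_rfl (by linarith [this.2])
    · intro v hv
      rw [if_neg]
      intro h; exact hv (mem_union_left _ h)
    · intro v hv
      have hvR : v ∉ R := fun h => hv (mem_union_left _ h)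
      by_cases hb : v ∈ bd G R
      · rw [if_pos hb]
        right
        refine (hfr v hb).mono le_rfl ?_
        linarith [le_max_left (ρ v - t) 0]
      · rw [if_neg hb]
        exact (S.out v hvR).imp id fun h => h.mono (Nat.le_succ _) (by linarith)
  · rw [card_union_of_disjoint]
    · omega
    · rw [disjoint_left]
      intro v hv h
      exact (mem_bd.1 (mem_filter.1 h).1).1 hv
  · have h1 : ∀ v, (if v ∈ bd G R then max (ρ v - t) 0 else ρ v) +
        (if v ∈ (bd G R).filter (fun v => t ≤ ρ v) then t else 0) ≤ ρ v := by
      intro v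
      by_cases hb : v ∈ bd G R
      · by_cases h : t ≤ ρ v
        · simp [hb, h]
        · simp only [hb, h, mem_filter, if_true, and_false, if_false]
          have := S.rho0 v
          rw [max_eq_right (by linarith)]; linarith
      · simp [hb]
    have h2 := sum_le_sum (s := univ) fun v _ => h1 v
    rw [sum_add_distrib, sum_ite_mem, univ_inter, sum_const, nsmul_eq_mul] at h2
    have h3 : (#(bd G R) : ℝ) ≤ 2 * #{v ∈ bd G R | t ≤ ρ v} := by exact_mod_cast hhi
    nlinarith
  · have h1 : ∀ v, (if v ∈ R then τ v else T + t) = τ v + (if v ∈ Rᶜ then t else 0) := by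
      intro v
      by_cases h : v ∈ R
      · simp [h]
      · simp [h, S.tauT v h]
    rw [sum_congr rfl fun v _ => h1 v, sum_add_distrib, sum_ite_mem, univ_inter, sum_const,
      nsmul_eq_mul]
    ring

/-- Vertex expansion, in the form that is used. -/
def Exp (G : SimpleGraph V) (α d : ℝ) : Prop :=
  ∀ R : Finset V, α * min (#R : ℝ) (#Rᶜ : ℝ) ≤ d * #(bd G R)

lemma phase1_aux {α d n : ℝ} (hw : ∀ v, 0 ≤ w v) (hn : n = Fintype.card V) (hα : 0 < α)
    (hd : 0 < d) (hE : Exp G α d) (hA : n ≤ 4 * #A) (i : ℕ) :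
    ∃ T ρ τ R, GState G w A i T ρ τ R ∧ T * (α * n / (8 * d)) + ∑ v, ρ v ≤ ∑ v, w v ∧
      (3 * n ≤ 4 * #R ∨ n / 4 + i * (α * n / (8 * d)) ≤ #R) := by
  have hn0 : 0 ≤ n := by rw [hn]; positivity
  have hx0 : 0 ≤ α * n / (8 * d) := by positivity
  set x := α * n / (8 * d) with hx
  induction i with
  | zero =>
    exact ⟨0, w, fun _ => 0, A, GState.start hw, by simp, Or.inr (by push_cast; linarith)⟩
  | succ i ih =>
    obtain ⟨T, ρ, τ, R, S, h1, h2⟩ := ih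
    by_cases h3 : 3 * n ≤ 4 * #R
    · exact ⟨T, ρ, τ, R, S.succ, h1, Or.inl h3⟩
    have h4 := h2.resolve_left h3
    obtain ⟨t, ρ', τ', R', ht, S', hc, hr, -⟩ := S.step
    have hcomp : (#R : ℝ) + #Rᶜ = n := by
      rw [hn]; exact_mod_cast card_add_card_compl R
    have hb : 2 * x ≤ #(bd G R) := by
      have := hE R
      have hmin : n / 4 ≤ min (#R : ℝ) (#Rᶜ : ℝ) := by
        refine le_min ?_ ?_
        · have : 0 ≤ i * x := by positivity
          linarith
        · linarith
      have h5 : α * (n / 4) ≤ d * #(bd G R) :=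
        (mul_le_mul_of_nonneg_left hmin hα.le).trans this
      rw [hx]
      have : 2 * (α * n / (8 * d)) = α * (n / 4) / d := by field_simp; ring
      rw [this, div_le_iff₀ hd]; linarith
    have hc' : 2 * (#R : ℝ) + #(bd G R) ≤ 2 * #R' := by exact_mod_cast hc
    refine ⟨T + t, ρ', τ', R', S', ?_, Or.inr ?_⟩
    · nlinarith
    · push_cast; linarith

lemma phase1 {α d n : ℝ} (hw : ∀ v, 0 ≤ w v) (hn : n = Fintype.card V) (hn0 : 0 < n)
    (hα : 0 < α) (hd : 0 < d) (hE : Exp G α d) (hA : n ≤ 4 * #A) (h0 : ℕ)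
    (hh : 4 * d / α ≤ h0) :
    ∃ B : Finset V, 3 * n ≤ 4 * #B ∧
      ∀ v ∈ B, Reach G w A v h0 (8 * d / α * ((∑ v, w v) / n)) := by
  obtain ⟨T, ρ, τ, R, S, h1, h2⟩ := phase1_aux hw hn hα hd hE hA h0
  refine ⟨R, ?_, ?_⟩
  · rcases h2 with h | h
    · exact h
    · have : 4 * d / α * (α * n / (8 * d)) ≤ h0 * (α * n / (8 * d)) :=
        mul_le_mul_of_nonneg_right hh (by positivity)
      have h3 : 4 * d / α * (α * n / (8 * d)) = n / 2 := by field_simp; ring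
      linarith
  · intro v hv
    have h3 := S.inR v hv
    refine h3.2.mono le_rfl (h3.1.trans ?_)
    have h4 : 0 ≤ ∑ v, ρ v := sum_nonneg fun v _ => S.rho0 v
    have h5 : T * (α * n / (8 * d)) ≤ ∑ v, w v := by linarith
    have h6 : 8 * d / α * ((∑ v, w v) / n) = (∑ v, w v) / (α * n / (8 * d)) := by field_simp
    rw [h6, le_div_iff₀ (by positivity)]
    exact h5

lemma halving {α d n : ℝ} (hw : ∀ v, 0 ≤ w v) (hn : n = Fintype.card V) (hn0 : 0 < n)
    (hα : 0 < α) (hd : 0 < d) (hE : Exp G α d) (h0 : ℕ) (hh : 4 * d / α ≤ h0) (L : ℕ) :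
    ∀ (A B : Finset V) (h : ℕ) (r : ℝ), #A ≤ 2 ^ L → 3 * n ≤ 4 * #B →
      (∀ v ∈ B, Reach G w A v h r) →
      ∃ x ∈ A, ∃ B' : Finset V, 3 * n ≤ 4 * #B' ∧
        ∀ v ∈ B', Reach G w {x} v (h + L * h0) (r + L * (8 * d / α * ((∑ v, w v) / n))) := by
  classical
  induction L with
  | zero =>
    intro A B h r hA hB hR
    have hBne : B.Nonempty := by
      rw [← card_pos]
      have : (0 : ℝ) < #B := by linarith
      exact_mod_cast this
    obtain ⟨v, hv⟩ := hBne
    obtain ⟨a, ha, -⟩ := hR v hv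
    have : A = {a} := by
      refine (eq_of_subset_of_card_le (singleton_subset_iff.2 ha) ?_).symm
      simpa using hA
    subst this
    exact ⟨a, ha, B, hB, fun v hv => (hR v hv).mono (by simp) (by simp)⟩
  | succ L ih =>
    intro A B h r hA hB hR
    obtain ⟨A1, hA1, hc1⟩ := exists_subset_card_eq (s := A) (n := #A / 2) (by omega)
    have hc2 : #(A \ A1) = #A - #A / 2 := by rw [card_sdiff_of_subset hA1, hc1]
    have hp : 2 ^ (L + 1) = 2 * 2 ^ L := by ring
    have key : ∀ A' ⊆ A, #A' ≤ 2 ^ L → 3 * n ≤ 8 * #{v ∈ B | Reach G w A' v h r} →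
        ∃ x ∈ A, ∃ B' : Finset V, 3 * n ≤ 4 * #B' ∧ ∀ v ∈ B', Reach G w {x} v
          (h + (L + 1 : ℕ) * h0) (r + (L + 1 : ℕ) * (8 * d / α * ((∑ v, w v) / n))) := by
      intro A' hA' hcA hBig
      obtain ⟨B', hB', hR'⟩ := phase1 (A := {v ∈ B | Reach G w A' v h r}) hw hn hn0 hα hd hE
        (by linarith) h0 hh
      obtain ⟨x, hx, B'', hB'', hR''⟩ := ih A' B' _ _ hcA hB' fun v hv =>
        Reach.trans (fun b hb => (mem_filter.1 hb).2) (hR' v hv)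
      refine ⟨x, hA' hx, B'', hB'', fun v hv => (hR'' v hv).mono ?_ ?_⟩
      · apply le_of_eq; ring
      · apply le_of_eq; push_cast; ring
    have hcov : #B ≤ #{v ∈ B | Reach G w A1 v h r} + #{v ∈ B | Reach G w (A \ A1) v h r} := by
      refine (card_le_card ?_).trans (card_union_le _ _)
      intro v hv
      obtain ⟨a, ha, hp⟩ := hR v hv
      by_cases h1 : a ∈ A1
      · exact mem_union_left _ (mem_filter.2 ⟨hv, a, h1, hp⟩)
      · exact mem_union_right _ (mem_filter.2 ⟨hv, a, mem_sdiff.2 ⟨ha, h1⟩, hp⟩)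
    have hcov' : (#B : ℝ) ≤ #{v ∈ B | Reach G w A1 v h r} +
        #{v ∈ B | Reach G w (A \ A1) v h r} := by exact_mod_cast hcov
    by_cases hb : 3 * n ≤ 8 * #{v ∈ B | Reach G w A1 v h r}
    · exact key A1 hA1 (by omega) hb
    · exact key (A \ A1) sdiff_subset (by omega) (by linarith)

lemma phase2 {α d n : ℝ} (hw : ∀ v, 0 ≤ w v) (hn : n = Fintype.card V) (hα : 0 < α)
    (hd : 0 < d) (hαd : α ≤ d) (hE : Exp G α d) (hA : n ≤ 2 * #A) (i : ℕ) :
    ∃ T ρ τ R, GState G w A i T ρ τ R ∧ (∑ v, τ v) * (α / (2 * d)) + ∑ v, ρ v ≤ ∑ v, w v ∧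
      (#Rᶜ : ℝ) ≤ (1 - α / (2 * d)) ^ i * n := by
  have hn0 : 0 ≤ n := by rw [hn]; positivity
  have hx0 : 0 ≤ α / (2 * d) := by positivity
  have hx1 : α / (2 * d) ≤ 1 := by rw [div_le_one (by positivity)]; linarith
  set x := α / (2 * d) with hx
  induction i with
  | zero =>
    refine ⟨0, w, fun _ => 0, A, GState.start hw, by simp, ?_⟩
    rw [hn]; simp only [pow_zero, one_mul]; exact_mod_cast card_le_univ _
  | succ i ih =>
    obtain ⟨T, ρ, τ, R, S, h1, h2⟩ := ih
    obtain ⟨t, ρ', τ', R', ht, S', hc, hr, hτ⟩ := S.step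
    have hcomp : (#R : ℝ) + #Rᶜ = n := by
      rw [hn]; exact_mod_cast card_add_card_compl R
    have hcomp' : (#R' : ℝ) + #R'ᶜ = n := by
      rw [hn]; exact_mod_cast card_add_card_compl R'
    have hAR : (#A : ℝ) ≤ #R := by exact_mod_cast card_le_card S.sub
    have hb : x * #Rᶜ ≤ #(bd G R) / 2 := by
      have := hE R
      rw [min_eq_right (by linarith)] at this
      rw [hx, div_mul_eq_mul_div, div_le_div_iff₀ (by positivity) (by norm_num)]
      linarith
    have hc' : 2 * (#R : ℝ) + #(bd G R) ≤ 2 * #R' := by exact_mod_cast hc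
    refine ⟨T + t, ρ', τ', R', S', ?_, ?_⟩
    · rw [hτ]; nlinarith [mul_le_mul_of_nonneg_left hb ht]
    · have : (#R'ᶜ : ℝ) ≤ (1 - x) * #Rᶜ := by linarith
      refine this.trans ?_
      rw [pow_succ']
      have := mul_le_mul_of_nonneg_left h2 (sub_nonneg.2 hx1)
      linarith

end
end RouteAux
namespace RouteAux
open Finset
section
variable {V : Type} [Fintype V] [DecidableEq V] {G : SimpleGraph V} {w : V → ℝ}

lemma key {α d n : ℝ} (hw : ∀ v, 0 < w v) (hn : n = Fintype.card V) (hn2 : 2 ≤ n)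
    (hα : 0 < α) (hd : 0 < d) (hαd : α ≤ d) (hE : Exp G α d) :
    ∃ (x : V) (D : V → ℝ), (∀ v, 0 ≤ D v ∧ ∃ p : G.Walk x v,
        (p.length : ℝ) ≤ 22 * (d * Real.logb 2 n / α) ∧ (p.support.map w).sum ≤ D v) ∧
      ∑ v, D v ≤ 22 * (d * Real.logb 2 n / α) * ∑ v, w v := by
  have hn0 : 0 < n := by linarith
  have hw' : ∀ v, 0 ≤ w v := fun v => (hw v).le
  set W := ∑ v, w v with hW
  have hne : Nonempty V := by
    rw [← Fintype.card_pos_iff]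
    have : (0 : ℝ) < Fintype.card V := by linarith
    exact_mod_cast this
  have hW0 : 0 < W := sum_pos (fun v _ => hw v) univ_nonempty
  set l := Real.logb 2 n with hl
  have hl1 : 1 ≤ l := by
    rw [hl, Real.le_logb_iff_rpow_le (by norm_num) hn0]; simpa using hn2
  have hlog : Real.log n ≤ l := by
    rw [hl, Real.logb, le_div_iff₀ (Real.log_pos (by norm_num))]
    have h1 : Real.log 2 ≤ 1 := by linarith [Real.log_two_lt_d9]
    have h2 : 0 ≤ Real.log n := Real.log_nonneg (by linarith)
    nlinarith
  set y := d / α with hy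
  have hy1 : 1 ≤ y := by rw [hy, le_div_iff₀ hα]; linarith
  have hX : d * l / α = y * l := by rw [hy]; ring
  rw [hX]
  have hyl : 1 ≤ y * l := by nlinarith
  -- parameters
  obtain ⟨L, hL1, hL2⟩ : ∃ L : ℕ, n ≤ 2 ^ L ∧ (L : ℝ) ≤ 2 * l := by
    refine ⟨⌈l⌉₊, ?_, ?_⟩
    · have := Nat.le_ceil l
      rw [hl, Real.logb_le_iff_le_rpow (by norm_num) hn0] at this
      rw [← hl] at this
      exact_mod_cast this
    · linarith [Nat.ceil_lt_add_one (show 0 ≤ l by linarith)]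
  obtain ⟨h0, hh1, hh2⟩ : ∃ h0 : ℕ, 4 * d / α ≤ h0 ∧ (h0 : ℝ) ≤ 5 * y := by
    have h4 : 4 * d / α = 4 * y := by rw [hy]; ring
    refine ⟨⌈4 * d / α⌉₊, Nat.le_ceil _, ?_⟩
    have := Nat.ceil_lt_add_one (show 0 ≤ 4 * d / α by positivity)
    linarith
  obtain ⟨i, hi1, hi2⟩ : ∃ i : ℕ, (1 - α / (2 * d)) ^ i * n < 1 ∧ (i : ℝ) ≤ 4 * (y * l) := by
    have hlog0 : 0 ≤ Real.log n := Real.log_nonneg (by linarith)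
    refine ⟨⌈2 * y * Real.log n⌉₊ + 1, ?_, ?_⟩
    · set i := ⌈2 * y * Real.log n⌉₊ + 1 with hi
      have hix : 2 * y * Real.log n < i := by
        rw [hi]; push_cast
        linarith [Nat.le_ceil (2 * y * Real.log n)]
      have hx1 : α / (2 * d) ≤ 1 := by rw [div_le_one (by positivity)]; linarith
      have h1 : (1 - α / (2 * d)) ^ i ≤ Real.exp (-(α / (2 * d)) * i) := by
        rw [mul_comm (-(α / (2 * d))) (i : ℝ), Real.exp_nat_mul]
        exact pow_le_pow_left₀ (by linarith) (Real.one_sub_le_exp_neg _) _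
      have h2 : Real.log n < α / (2 * d) * i := by
        have hpos : 0 < α / (2 * d) := by positivity
        have := mul_lt_mul_of_pos_left hix hpos
        have h3 : α / (2 * d) * (2 * y * Real.log n) = Real.log n := by
          rw [hy]; field_simp
        linarith
      calc (1 - α / (2 * d)) ^ i * n ≤ Real.exp (-(α / (2 * d)) * i) * n :=
            mul_le_mul_of_nonneg_right h1 hn0.le
        _ < Real.exp (- Real.log n) * n := by
            apply mul_lt_mul_of_pos_right _ hn0
            apply Real.exp_lt_exp.2; linarith
        _ = 1 := by rw [Real.exp_neg, Real.exp_log hn0]; field_simp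
    · push_cast
      have := Nat.ceil_lt_add_one (show 0 ≤ 2 * y * Real.log n by positivity)
      nlinarith
  -- light vertices
  let A : Finset V := {v | w v ≤ 4 * W / n}
  have hA : 3 * n ≤ 4 * #A := by
    have h1 : (#Aᶜ : ℝ) * (4 * W / n) ≤ W := by
      rw [← nsmul_eq_mul]
      refine (card_nsmul_le_sum Aᶜ w (4 * W / n) ?_).trans
        (sum_le_sum_of_subset_of_nonneg (subset_univ _) fun v _ _ => hw' v)
      intro v hv
      have : ¬ w v ≤ 4 * W / n := by simpa [A] using hv
      linarith
    have h2 : (#Aᶜ : ℝ) * 4 ≤ n := by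
      have : (#Aᶜ : ℝ) * (4 * W / n) = (#Aᶜ : ℝ) * 4 * W / n := by ring
      rw [this, div_le_iff₀ hn0] at h1
      nlinarith
    have hcomp : (#A : ℝ) + #Aᶜ = n := by
      rw [hn]; exact_mod_cast card_add_card_compl A
    linarith
  obtain ⟨x, hxA, B, hB, hBR⟩ := halving hw' hn hn0 hα hd hE h0 hh1 L A A 0 0
    (by
      have : (#A : ℝ) ≤ 2 ^ L := by
        refine le_trans ?_ hL1
        rw [hn]; exact_mod_cast card_le_univ A
      exact_mod_cast this) hA (fun v hv => Reach.refl hv)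
  obtain ⟨T, ρ, τ, R, S, hτ, hRc⟩ := phase2 (A := B) hw' hn hα hd hαd hE (by linarith) i
  have hRu : ∀ v, v ∈ R := by
    have h1 : (#Rᶜ : ℝ) < 1 := hRc.trans_lt hi1
    have h2 : #Rᶜ = 0 := by
      have : #Rᶜ < 1 := by exact_mod_cast h1
      omega
    intro v
    by_contra hv
    have : v ∈ Rᶜ := by simpa using hv
    rw [card_eq_zero.1 h2] at this
    simp at this
  rw [← hW] at hBR hτ
  have hr0 : 0 ≤ (L : ℝ) * (8 * d / α * (W / n)) := by positivity
  refine ⟨x, fun v => w x + (0 + L * (8 * d / α * (W / n)) + τ v), fun v => ⟨?_, ?_⟩, ?_⟩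
  · have := S.tau0 v
    have := hw' x
    linarith
  · obtain ⟨a, ha, p, hp1, hp2⟩ := Reach.trans hBR (S.inR v (hRu v)).2
    rw [mem_singleton] at ha
    subst ha
    refine ⟨p, ?_, ?_⟩
    · have h1 : (p.length : ℝ) ≤ 0 + L * h0 + i := by exact_mod_cast hp1
      have h2 : (L : ℝ) * h0 ≤ (2 * l) * (5 * y) :=
        mul_le_mul hL2 hh2 (by positivity) (by linarith)
      nlinarith
    · rw [← SimpleGraph.Walk.cons_tail_support, List.map_cons, List.sum_cons]
      linarith
  · have hρ0 : 0 ≤ ∑ v, ρ v := sum_nonneg fun v _ => S.rho0 v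
    have hτ' : ∑ v, τ v ≤ 2 * y * W := by
      have h1 : (∑ v, τ v) * (α / (2 * d)) ≤ W := by linarith
      rw [← le_div_iff₀ (by positivity)] at h1
      refine h1.trans (le_of_eq ?_)
      rw [hy]; field_simp
    rw [sum_add_distrib, sum_add_distrib, sum_const, sum_const, card_univ, nsmul_eq_mul,
      nsmul_eq_mul, ← hn]
    have hx : n * w x ≤ 4 * W := by
      have : w x ≤ 4 * W / n := by simpa [A] using hxA
      rw [le_div_iff₀ hn0] at this; linarith
    have h1 : n * (0 + L * (8 * d / α * (W / n))) = L * (8 * y) * W := by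
      rw [hy]; field_simp; ring
    rw [h1]
    have h2 : (L : ℝ) * (8 * y) * W ≤ (2 * l) * (8 * y) * W := by
      gcongr
    have h3 : W ≤ y * l * W := le_mul_of_one_le_left hW0.le hyl
    have h4 : y * W ≤ y * l * W := by
      exact mul_le_mul_of_nonneg_right (le_mul_of_one_le_right (by linarith) hl1) hW0.le
    have h5 : 2 * l * (8 * y) * W = 16 * (y * l * W) := by ring
    linarith

lemma exp_of_cut {d : ℕ} {α : ℝ} (hd : DegLE G d)
    (h : ∀ S : Set V, S.Nonempty → Sᶜ.Nonempty →
      α * (min (Nat.card ↥S) (Nat.card ↥(Sᶜ)) : ℝ) ≤ (cutCard G S Sᶜ : ℝ)) :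
    Exp G α d := by
  classical
  intro R
  rcases R.eq_empty_or_nonempty with rfl | hR
  · simp; positivity
  rcases Rᶜ.eq_empty_or_nonempty with hR' | hR'
  · rw [hR']; simp; positivity
  have h1 := h (R : Set V) hR (by rw [← coe_compl]; exact hR')
  have hc1 : Nat.card ↥(R : Set V) = #R := by simp
  have hc2 : Nat.card ↥((R : Set V)ᶜ) = #Rᶜ := by
    rw [← coe_compl, Nat.card_coe_set_eq, Set.ncard_coe_finset]
  rw [hc1, hc2] at h1
  refine h1.trans ?_
  have h2 : cutCard G (R : Set V) (R : Set V)ᶜ ≤ d * #(bd G R) := by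
    unfold cutCard
    rw [Nat.card_eq_fintype_card, Fintype.card_subtype]
    refine card_le_mul_card_image_of_maps_to (f := Prod.snd) ?_ d ?_
    · intro p hp
      have hp := (mem_filter.1 hp).2
      exact mem_bd.2 ⟨by simpa using hp.2.1, p.1, by simpa using hp.1, hp.2.2⟩
    · intro b _
      refine le_trans ?_ (hd b)
      rw [Nat.card_eq_fintype_card, Fintype.card_subtype]
      refine card_le_card_of_injOn Prod.fst ?_ ?_
      · intro p hp
        have hp := mem_filter.1 hp
        have hp1 := (mem_filter.1 hp.1).2
        simp only [coe_filter, mem_univ, true_and, Set.mem_ofPred_eq]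
        rw [← hp.2]; exact hp1.2.2.symm
      · intro p hp q hq hpq
        have hp := mem_filter.1 hp
        have hq := mem_filter.1 hq
        exact Prod.ext hpq (hp.2.trans hq.2.symm)
  exact_mod_cast h2

lemma load_split {ι : Type} [Fintype ι] [DecidableEq ι] (Q : ι → Finset V) (i : ι)
    (P : Finset V) (v : V) :
    #{j | v ∈ Function.update Q i P j} =
      #{j ∈ univ.erase i | v ∈ Q j} + if v ∈ P then 1 else 0 := by
  rw [← insert_erase (mem_univ i), filter_insert]
  have h : filter (fun j => v ∈ Function.update Q i P j) (univ.erase i) =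
      filter (fun j => v ∈ Q j) (univ.erase i) := by
    refine filter_congr fun j hj => ?_
    rw [Function.update_of_ne (ne_of_mem_erase hj)]
  rw [Function.update_self, h, erase_insert (by simp)]
  split_ifs with hv
  · rw [card_insert_of_notMem (by simp)]
  · simp

lemma local_opt {ι : Type} [Fintype ι] [DecidableEq ι] (F : ι → Set (Finset V))
    (hF : ∀ i, (F i).Nonempty) :
    ∃ Q : ι → Finset V, (∀ i, Q i ∈ F i) ∧ ∀ i, ∀ P ∈ F i,
      ∑ v ∈ Q i, 2 ^ #{j | v ∈ Q j} ≤ 2 * ∑ v ∈ P, 2 ^ #{j | v ∈ Q j} := by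
  let Φ : (ι → Finset V) → ℕ := fun Q => ∑ v, 2 ^ #{j | v ∈ Q j}
  have hne : {Q : ι → Finset V | ∀ i, Q i ∈ F i}.Nonempty := by
    choose f hf using hF
    exact ⟨f, hf⟩
  obtain ⟨Q, hQ, hmin⟩ := (InvImage.wf Φ (Nat.lt_wfRel.wf)).has_min _ hne
  refine ⟨Q, hQ, fun i P hP => ?_⟩
  have hmem : Function.update Q i P ∈ {Q : ι → Finset V | ∀ i, Q i ∈ F i} := by
    intro j
    by_cases hj : j = i
    · subst hj; simpa using hP
    · rw [Function.update_of_ne hj]; exact hQ j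
  have h1 : Φ Q ≤ Φ (Function.update Q i P) := not_lt.1 (hmin _ hmem)
  let c : V → ℕ := fun v => #{j ∈ univ.erase i | v ∈ Q j}
  have hΦ : ∀ P', Φ (Function.update Q i P') = ∑ v, 2 ^ c v + ∑ v ∈ P', 2 ^ c v := by
    intro P'
    simp only [Φ, load_split]
    rw [← univ_inter P', ← sum_ite_mem, ← sum_add_distrib]
    refine sum_congr rfl fun v _ => ?_
    by_cases h : v ∈ P'
    · simp [h, c, pow_succ]; ring
    · simp [h, c]
  have hload : ∀ v, #{j | v ∈ Q j} = c v + if v ∈ Q i then 1 else 0 := by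
    intro v
    have := load_split Q i (Q i) v
    rwa [Function.update_eq_self] at this
  have h2 : Φ Q = ∑ v, 2 ^ c v + ∑ v ∈ Q i, 2 ^ c v := by
    have := hΦ (Q i)
    rwa [Function.update_eq_self] at this
  rw [h2, hΦ] at h1
  have h3 : ∑ v ∈ Q i, 2 ^ #{j | v ∈ Q j} = 2 * ∑ v ∈ Q i, 2 ^ c v := by
    rw [mul_sum]
    refine sum_congr rfl fun v hv => ?_
    rw [hload, if_pos hv, pow_succ]; ring
  have h4 : ∑ v ∈ P, 2 ^ c v ≤ ∑ v ∈ P, 2 ^ #{j | v ∈ Q j} := by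
    refine sum_le_sum fun v _ => Nat.pow_le_pow_right (by norm_num) ?_
    rw [hload]; omega
  omega

lemma load_bound (ld : V → ℕ) (Λ n : ℝ) (hn : n = Fintype.card V) (hn1 : 1 ≤ n) (hΛ : 0 ≤ Λ)
    (h : ∑ v, (ld v : ℝ) * 2 ^ ld v ≤ Λ * ∑ v, (2 : ℝ) ^ ld v) (v : V) :
    (ld v : ℝ) ≤ 2 * Λ + Real.logb 2 n := by
  by_contra hcon
  push Not at hcon
  have hl0 : 0 ≤ Real.logb 2 n := Real.logb_nonneg (by norm_num) hn1
  have h1 : ∑ u, ((ld u : ℝ) - Λ) * 2 ^ ld u ≤ 0 := by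
    rw [mul_sum] at h
    simp only [sub_mul, sum_sub_distrib]; linarith
  have hb : 0 < (2 : ℝ) ^ Λ := Real.rpow_pos_of_pos (by norm_num) _
  have h2 : ∀ u, -(Λ * 2 ^ Λ) ≤ ((ld u : ℝ) - Λ) * 2 ^ ld u := by
    intro u
    have hp : (0 : ℝ) < 2 ^ ld u := by positivity
    rcases le_total Λ (ld u) with h | h
    · have : 0 ≤ ((ld u : ℝ) - Λ) * 2 ^ ld u := mul_nonneg (by linarith) hp.le
      have : 0 ≤ Λ * 2 ^ Λ := by positivity
      linarith
    · have h3 : (2 : ℝ) ^ ld u ≤ 2 ^ Λ := by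
        rw [← Real.rpow_natCast]
        exact Real.rpow_le_rpow_of_exponent_le (by norm_num) h
      have h4 : Λ * 2 ^ ld u ≤ Λ * 2 ^ Λ := mul_le_mul_of_nonneg_left h3 hΛ
      have : 0 ≤ (ld u : ℝ) * 2 ^ ld u := by positivity
      linarith
  rw [← add_sum_erase _ _ (mem_univ v)] at h1
  have h3 : -(n * (Λ * 2 ^ Λ)) ≤ ∑ u ∈ univ.erase v, ((ld u : ℝ) - Λ) * 2 ^ ld u := by
    refine le_trans ?_ (card_nsmul_le_sum _ _ _ fun u _ => h2 u)
    rw [nsmul_eq_mul]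
    have : (#(univ.erase v) : ℝ) ≤ n := by
      rw [hn]; exact_mod_cast card_le_univ _
    have h5 : 0 ≤ Λ * 2 ^ Λ := by positivity
    nlinarith
  have h4 : n * 2 ^ Λ ≤ (2 : ℝ) ^ ld v := by
    have : n * (2 : ℝ) ^ Λ = 2 ^ (Real.logb 2 n + Λ) := by
      rw [Real.rpow_add (by norm_num), Real.rpow_logb (by norm_num) (by norm_num) (by linarith)]
    rw [this, ← Real.rpow_natCast]
    exact Real.rpow_le_rpow_of_exponent_le (by norm_num) (by linarith)
  have h6 : 0 < n * (2 : ℝ) ^ Λ := by positivity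
  have h7 : ((ld v : ℝ) - Λ) * (n * 2 ^ Λ) ≤ ((ld v : ℝ) - Λ) * 2 ^ ld v :=
    mul_le_mul_of_nonneg_left h4 (by linarith)
  have h8 : Λ * (n * 2 ^ Λ) < ((ld v : ℝ) - Λ) * (n * 2 ^ Λ) :=
    mul_lt_mul_of_pos_right (by linarith) h6
  linarith

lemma sum_toFinset_le (hw : ∀ v, 0 ≤ w v) (l : List V) :
    ∑ v ∈ l.toFinset, w v ≤ (l.map w).sum := by
  induction l with
  | nil => simp
  | cons a l ih =>
    rw [List.toFinset_cons, List.map_cons, List.sum_cons]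
    by_cases h : a ∈ l.toFinset
    · rw [insert_eq_of_mem h]; linarith [hw a]
    · rw [sum_insert h]; linarith

/-- joining two walks from a common vertex by a path -/
lemma join (hw : ∀ v, 0 ≤ w v) {x u v : V} (p : G.Walk x u) (q : G.Walk x v) :
    ∃ r : G.Walk u v, r.IsPath ∧ r.length ≤ p.length + q.length ∧
      ∑ z ∈ r.support.toFinset, w z ≤ (p.support.map w).sum + (q.support.map w).sum := by
  refine ⟨(p.reverse.append q).bypass, SimpleGraph.Walk.bypass_isPath _, ?_, ?_⟩
  · refine (SimpleGraph.Walk.length_bypass_le_length _).trans ?_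
    simp
  · have hsub : (p.reverse.append q).bypass.support.toFinset ⊆
        p.support.toFinset ∪ q.support.toFinset := by
      intro z hz
      have hz := SimpleGraph.Walk.support_bypass_subset_support _ (List.mem_toFinset.1 hz)
      simpa [SimpleGraph.Walk.mem_support_append_iff] using hz
    have h1 := sum_le_sum_of_subset_of_nonneg (f := w) hsub fun z _ _ => hw z
    have h2 := sum_union_inter (s₁ := p.support.toFinset) (s₂ := q.support.toFinset) (f := w)
    have h3 : 0 ≤ ∑ z ∈ p.support.toFinset ∩ q.support.toFinset, w z :=
      sum_nonneg fun z _ => hw z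
    linarith [sum_toFinset_le hw p.support, sum_toFinset_le hw q.support]

lemma matching_sum (M : Set (V × V)) [Fintype M] (h1 : ∀ p ∈ M, p.1 ≠ p.2)
    (h2 : ∀ p ∈ M, ∀ q ∈ M, p ≠ q → p.1 ≠ q.1 ∧ p.1 ≠ q.2 ∧ p.2 ≠ q.1 ∧ p.2 ≠ q.2)
    (D : V → ℝ) (hD : ∀ v, 0 ≤ D v) :
    ∑ p : M, (D p.1.1 + D p.1.2) ≤ ∑ v, D v := by
  let f : M ⊕ M → V := Sum.elim (fun p => p.1.1) (fun p => p.1.2)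
  have hf : Function.Injective f := by
    rintro (p | p) (q | q) h
    · by_contra hne
      exact (h2 p.1 p.2 q.1 q.2 (fun e => hne (by rw [Subtype.ext e]))).1 h
    · exfalso
      by_cases e : p.1 = q.1
      · have : p.1.1 = q.1.2 := h
        rw [e] at this; exact h1 _ q.2 this
      · exact (h2 p.1 p.2 q.1 q.2 e).2.1 h
    · exfalso
      by_cases e : p.1 = q.1
      · have : p.1.2 = q.1.1 := h
        rw [e] at this; exact h1 _ q.2 this.symm
      · exact (h2 p.1 p.2 q.1 q.2 e).2.2.1 h
    · by_contra hne
      exact (h2 p.1 p.2 q.1 q.2 (fun e => hne (by rw [Subtype.ext e]))).2.2.2 h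
  have : ∑ p : M, (D p.1.1 + D p.1.2) = ∑ z : M ⊕ M, D (f z) := by
    rw [Fintype.sum_sum_type, sum_add_distrib]; rfl
  rw [this, ← sum_image (f := D) (g := f) (s := univ) (fun a _ b _ h => hf h)]
  exact sum_le_sum_of_subset_of_nonneg (subset_univ _) fun v _ _ => hD v

end
end RouteAux

/-- Routing a matching with low vertex-congestion on short paths, or finding a sparse
cut: for any partial matching `M` on the vertices of `G`, either every pair of `M` can
be connected by a path of length at most `c·d·log₂ n/α` so that every vertex lies on at
most `c·d·log₂ n/α` of the paths, or `G` has a cut of sparsity less than `α`. -/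
theorem route_matching_low_congestion_or_sparse_cut :
    ∃ c : ℝ, 0 < c ∧
      ∀ (V : Type) [Fintype V] (G : SimpleGraph V) (n d : ℕ) (α : ℝ),
        Nat.card V = n → 2 ≤ n → DegLE G d → 0 < α → α < 1 →
        ∀ M : Set (V × V),
          (∀ p ∈ M, p.1 ≠ p.2) →
          (∀ p ∈ M, ∀ q ∈ M, p ≠ q →
            p.1 ≠ q.1 ∧ p.1 ≠ q.2 ∧ p.2 ≠ q.1 ∧ p.2 ≠ q.2) →
          (∃ Q : (p : M) → G.Walk p.val.1 p.val.2,
              (∀ p, (Q p).IsPath) ∧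
              (∀ p, ((Q p).length : ℝ) ≤ c * d * Real.logb 2 n / α) ∧
              (∀ v : V,
                (Nat.card ↥{p : M | v ∈ (Q p).support} : ℝ) ≤
                  c * d * Real.logb 2 n / α)) ∨
          (∃ S : Set V, S.Nonempty ∧ Sᶜ.Nonempty ∧
              (cutCard G S Sᶜ : ℝ) <
                α * (min (Nat.card ↥S) (Nat.card ↥(Sᶜ)) : ℝ)) := by
  classical
  refine ⟨100, by norm_num, ?_⟩
  intro V _ G n d α hcard hn2 hdeg hα hα1 M hM1 hM2
  rw [or_iff_not_imp_right]
  intro hno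
  push Not at hno
  have hE : RouteAux.Exp G α d := RouteAux.exp_of_cut hdeg hno
  have hn : (n : ℝ) = Fintype.card V := by rw [← hcard, Nat.card_eq_fintype_card]
  have hn2' : (2 : ℝ) ≤ n := by exact_mod_cast hn2
  have hnV : n = Fintype.card V := by exact_mod_cast hn
  have hd : 1 ≤ d := by
    by_contra hd0
    have hd0 : d = 0 := by omega
    have hne : Nonempty V := by
      rw [← Fintype.card_pos_iff]; omega
    obtain ⟨v⟩ := hne
    have h := hE {v}
    have hcomp := Finset.card_add_card_compl ({v} : Finset V)
    rw [Finset.card_singleton] at hcomp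
    rw [Finset.card_singleton, hd0] at h
    have h1 : (1 : ℝ) ≤ (({v} : Finset V)ᶜ.card : ℝ) := by
      have : 1 ≤ ({v} : Finset V)ᶜ.card := by omega
      exact_mod_cast this
    rw [min_eq_left (by simpa using h1)] at h
    simp at h; linarith
  have hd' : (1 : ℝ) ≤ d := by exact_mod_cast hd
  set l := Real.logb 2 n with hl
  have hl1 : 1 ≤ l := by
    rw [hl, Real.le_logb_iff_rpow_le (by norm_num) (by linarith)]; simpa using hn2'
  set X := d * l / α with hX
  have hXl : l ≤ X := by
    rw [hX, le_div_iff₀ hα]; nlinarith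
  have hX0 : 0 ≤ X := by linarith
  have h100 : 100 * d * l / α = 100 * X := by rw [hX]; ring
  rw [h100]
  -- the general key fact for a weight function
  have hkey : ∀ w : V → ℝ, (∀ v, 0 < w v) → ∃ D : V → ℝ, (∀ v, 0 ≤ D v) ∧
      ∑ v, D v ≤ 22 * X * ∑ v, w v ∧ ∀ u v, ∃ r : G.Walk u v, r.IsPath ∧
        (r.length : ℝ) ≤ 44 * X ∧ ∑ z ∈ r.support.toFinset, w z ≤ D u + D v := by
    intro w hw
    obtain ⟨x, D, hD, hsum⟩ := RouteAux.key (G := G) (w := w) hw hn hn2' hα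
      (by linarith : (0 : ℝ) < d) (by linarith) hE
    refine ⟨D, fun v => (hD v).1, hsum, fun u v => ?_⟩
    obtain ⟨-, p, hp1, hp2⟩ := hD u
    obtain ⟨-, q, hq1, hq2⟩ := hD v
    obtain ⟨r, hr, hr1, hr2⟩ := RouteAux.join (fun v => (hw v).le) p q
    refine ⟨r, hr, ?_, by linarith⟩
    have : (r.length : ℝ) ≤ p.length + q.length := by exact_mod_cast hr1
    linarith
  let F : M → Set (Finset V) := fun p => {P | ∃ r : G.Walk p.1.1 p.1.2, r.IsPath ∧
    (r.length : ℝ) ≤ 44 * X ∧ r.support.toFinset = P}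
  have hF : ∀ p, (F p).Nonempty := by
    intro p
    obtain ⟨D, -, -, h⟩ := hkey (fun _ => 1) (fun _ => one_pos)
    obtain ⟨r, h1, h2, -⟩ := h p.1.1 p.1.2
    exact ⟨_, r, h1, h2, rfl⟩
  obtain ⟨Q, hQ, hopt⟩ := RouteAux.local_opt F hF
  choose r hr1 hr2 hr3 using hQ
  refine ⟨r, hr1, fun p => by linarith [hr2 p], ?_⟩
  let ld : V → ℕ := fun v => (Finset.univ.filter fun j : M => v ∈ Q j).card
  have hld : ∀ v, Nat.card ↥{p : M | v ∈ (r p).support} = ld v := by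
    intro v
    rw [Nat.card_eq_fintype_card, Fintype.card_subtype]
    refine congrArg Finset.card (Finset.filter_congr fun p _ => ?_)
    rw [← hr3 p]; simp
  intro v
  rw [hld]
  obtain ⟨D, hD0, hDs, hDr⟩ := hkey (fun v => 2 ^ ld v) (fun v => by positivity)
  have hone : ∀ p : M, ∑ z ∈ Q p, (2 : ℝ) ^ ld z ≤ 2 * (D p.1.1 + D p.1.2) := by
    intro p
    obtain ⟨s, hs1, hs2, hs3⟩ := hDr p.1.1 p.1.2
    have := hopt p s.support.toFinset ⟨s, hs1, hs2, rfl⟩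
    have h' : ∑ z ∈ Q p, (2 : ℝ) ^ ld z ≤ 2 * ∑ z ∈ s.support.toFinset, (2 : ℝ) ^ ld z := by
      exact_mod_cast this
    linarith
  have hsum : ∑ v, (ld v : ℝ) * 2 ^ ld v ≤ 44 * X * ∑ v, (2 : ℝ) ^ ld v := by
    have h1 : ∑ v, (ld v : ℝ) * 2 ^ ld v = ∑ p : M, ∑ z ∈ Q p, (2 : ℝ) ^ ld z := by
      have : ∀ p : M, ∑ z ∈ Q p, (2 : ℝ) ^ ld z =
          ∑ z, if z ∈ Q p then (2 : ℝ) ^ ld z else 0 := by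
        intro p; rw [Finset.sum_ite_mem, Finset.univ_inter]
      simp only [this]
      rw [Finset.sum_comm]
      refine Finset.sum_congr rfl fun z _ => ?_
      rw [← Finset.sum_filter, Finset.sum_const, nsmul_eq_mul]
    rw [h1]
    have h2 := Finset.sum_le_sum (s := Finset.univ) fun p _ => hone p
    rw [← Finset.mul_sum] at h2
    have h3 := RouteAux.matching_sum M hM1 hM2 D hD0
    linarith
  have := RouteAux.load_bound ld (44 * X) n hn (by linarith) (by linarith) hsum v
  linarith
end
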